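/- Let (X,T) be a topological dynamical system with T a homeomorphism satisfying the marker property. Then the mean dimension satisfies mdim(X,T) = min_{d∈D(X)} sup_{μ∈M(X,T)} [ liminf_{ε→0} (1/log(1/ε)) · inf{ h_μ(T,P) : P a finite Borel partition with diam_d P ≤ ε } ] = min_{d∈D(X)} sup_{μ∈M(X,T)} [ limsup_{ε→0} (1/log(1/ε)) · inf{ h_μ(T,P) : P a finite Borel partition with diam_d P ≤ ε } ], where D(X) is the set of metrics on X compatible with the topology and the minima are attained. -/

import Mathlib

open Filter MeasureTheory Set
open scoped ENNReal Topology

noncomputable section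

namespace MMD

variable {X : Type*}

/-- The `n`-th Bowen metric `d_n(x,y) = max_{0 ≤ j ≤ n-1} d(T^j x, T^j y)`. -/
noncomputable def bowenDist [PseudoMetricSpace X] (T : X → X) (n : ℕ) (x y : X) : ℝ :=
  ⨆ j : Fin n, dist (T^[(j : ℕ)] x) (T^[(j : ℕ)] y)

/-- `r_n(T,d,ε,Z)`: minimal cardinality of an `(n,ε)`-spanning set of `Z`. -/
noncomputable def spanNum [PseudoMetricSpace X] (T : X → X) (n : ℕ) (ε : ℝ) (Z : Set X) : ℕ :=
  sInf {k | ∃ E : Finset X, E.card = k ∧ ∀ z ∈ Z, ∃ y ∈ E, bowenDist T n z y < ε}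

/-- `s_n(T,d,ε,Z)`: maximal cardinality of an `(n,ε)`-separated subset of `Z`. -/
noncomputable def sepNum [PseudoMetricSpace X] (T : X → X) (n : ℕ) (ε : ℝ) (Z : Set X) : ℕ :=
  sSup {k | ∃ F : Finset X, ↑F ⊆ Z ∧ F.card = k ∧
    ∀ x ∈ F, ∀ y ∈ F, x ≠ y → ε ≤ bowenDist T n x y}

/-- `limsup_{n→∞} (1/n) log r_n(T,d,ε,X)`. -/
noncomputable def spanGrowth [PseudoMetricSpace X] (T : X → X) (ε : ℝ) : ℝ≥0∞ :=
  Filter.limsup (fun n : ℕ => ENNReal.ofReal (Real.log (spanNum T n ε Set.univ)) / (n : ℝ≥0∞))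
    Filter.atTop

/-- Upper metric mean dimension. -/
noncomputable def mdimMUpper [PseudoMetricSpace X] (T : X → X) : ℝ≥0∞ :=
  Filter.limsup (fun ε : ℝ => spanGrowth T ε / ENNReal.ofReal (Real.log (1 / ε)))
    (nhdsWithin 0 (Set.Ioi 0))

/-- Lower metric mean dimension. -/
noncomputable def mdimMLower [PseudoMetricSpace X] (T : X → X) : ℝ≥0∞ :=
  Filter.liminf (fun ε : ℝ => spanGrowth T ε / ENNReal.ofReal (Real.log (1 / ε)))
    (nhdsWithin 0 (Set.Ioi 0))

/-- A finite (Borel) partition given as a finite set of measurable, pairwise disjoint sets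
covering the space. -/
def IsFinPartition {Y : Type*} [MeasurableSpace Y] (P : Finset (Set Y)) : Prop :=
  (∀ s ∈ P, MeasurableSet s) ∧ (∀ s ∈ P, ∀ t ∈ P, s ≠ t → Disjoint s t) ∧
    ⋃₀ (P : Set (Set Y)) = Set.univ

/-- Mutual information `I(ξ;η)` of two random variables, as the supremum over finite
measurable partitions of the target spaces. -/
noncomputable def mutualInfo {Ω A B : Type*} [MeasurableSpace Ω] [MeasurableSpace A]
    [MeasurableSpace B] (P : Measure Ω) (ξ : Ω → A) (η : Ω → B) : ℝ≥0∞ :=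
  ⨆ (p : Finset (Set A)) (_ : IsFinPartition p) (q : Finset (Set B)) (_ : IsFinPartition q),
    ENNReal.ofReal (∑ s ∈ p, ∑ t ∈ q,
      (P (ξ ⁻¹' s ∩ η ⁻¹' t)).toReal *
        Real.log ((P (ξ ⁻¹' s ∩ η ⁻¹' t)).toReal /
          ((P (ξ ⁻¹' s)).toReal * (P (η ⁻¹' t)).toReal)))

/-- The `L^∞` rate distortion function `R_{μ,L∞}(ε,s)`: the infimum of `I(ξ;η)/n` over all
`n ≥ 1` and all joint distributions `ν` of `(ξ, (η_0,…,η_{n-1}))` such that `ξ` has law `μ`,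
the `η_k` take (almost surely) finitely many values, and
`E(#{0 ≤ k ≤ n-1 : d(T^k ξ, η_k) ≥ ε}) < s n`. -/
noncomputable def RDistLInftyS [PseudoMetricSpace X] [MeasurableSpace X] (T : X → X)
    (μ : Measure X) (ε s : ℝ) : ℝ≥0∞ :=
  ⨅ (n : ℕ) (_ : 0 < n) (ν : Measure (X × (Fin n → X))) (_ : IsProbabilityMeasure ν)
    (_ : ν.map Prod.fst = μ) (_ : ∃ S : Finset X, ν {p | ∀ k, p.2 k ∈ S} = 1)
    (_ : ∫⁻ p, (Nat.card {k : Fin n // ε ≤ dist (T^[(k : ℕ)] p.1) (p.2 k)} : ℝ≥0∞) ∂ν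
        < ENNReal.ofReal (s * n)),
    mutualInfo ν Prod.fst Prod.snd / (n : ℝ≥0∞)

/-- `R_{μ,L∞}(ε) = lim_{s→0} R_{μ,L∞}(ε,s)` (the limit equals the supremum over `s > 0`
by monotonicity). -/
noncomputable def RDistLInfty [PseudoMetricSpace X] [MeasurableSpace X] (T : X → X)
    (μ : Measure X) (ε : ℝ) : ℝ≥0∞ :=
  ⨆ (s : ℝ) (_ : 0 < s), RDistLInftyS T μ ε s

/-- The `L¹` rate distortion function `R_{μ,1}(ε)`. -/
noncomputable def RDistL1 [PseudoMetricSpace X] [MeasurableSpace X] (T : X → X)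
    (μ : Measure X) (ε : ℝ) : ℝ≥0∞ :=
  ⨅ (n : ℕ) (_ : 0 < n) (ν : Measure (X × (Fin n → X))) (_ : IsProbabilityMeasure ν)
    (_ : ν.map Prod.fst = μ) (_ : ∃ S : Finset X, ν {p | ∀ k, p.2 k ∈ S} = 1)
    (_ : ∫⁻ p, ∑ k : Fin n, ENNReal.ofReal (dist (T^[(k : ℕ)] p.1) (p.2 k)) ∂ν
        < ENNReal.ofReal (ε * n)),
    mutualInfo ν Prod.fst Prod.snd / (n : ℝ≥0∞)

/-- `R^δ_μ(T,n,ε)`: minimal number of Bowen `(n,ε)`-balls whose union has `μ`-measure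
greater than `1 - δ`. -/
noncomputable def katokNum [PseudoMetricSpace X] [MeasurableSpace X] (T : X → X)
    (μ : Measure X) (n : ℕ) (ε δ : ℝ) : ℕ :=
  sInf {k | ∃ E : Finset X, E.card = k ∧
    ENNReal.ofReal (1 - δ) < μ (⋃ x ∈ E, {y | bowenDist T n x y < ε})}

/-- `h̄^K_μ(T,ε,δ)`. -/
noncomputable def katokUpperD [PseudoMetricSpace X] [MeasurableSpace X] (T : X → X)
    (μ : Measure X) (ε δ : ℝ) : ℝ≥0∞ :=
  Filter.limsup (fun n : ℕ => ENNReal.ofReal (Real.log (katokNum T μ n ε δ)) / (n : ℝ≥0∞))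
    Filter.atTop

/-- `ḥ^K_μ(T,ε,δ)`. -/
noncomputable def katokLowerD [PseudoMetricSpace X] [MeasurableSpace X] (T : X → X)
    (μ : Measure X) (ε δ : ℝ) : ℝ≥0∞ :=
  Filter.liminf (fun n : ℕ => ENNReal.ofReal (Real.log (katokNum T μ n ε δ)) / (n : ℝ≥0∞))
    Filter.atTop

/-- `h̄^K_μ(T,ε) = lim_{δ→0} h̄^K_μ(T,ε,δ)` (equal to the supremum over `δ ∈ (0,1)` by
monotonicity). -/
noncomputable def katokUpper [PseudoMetricSpace X] [MeasurableSpace X] (T : X → X)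
    (μ : Measure X) (ε : ℝ) : ℝ≥0∞ :=
  ⨆ (δ : ℝ) (_ : δ ∈ Set.Ioo (0 : ℝ) 1), katokUpperD T μ ε δ

/-- `ḥ^K_μ(T,ε) = lim_{δ→0} ḥ^K_μ(T,ε,δ)`. -/
noncomputable def katokLower [PseudoMetricSpace X] [MeasurableSpace X] (T : X → X)
    (μ : Measure X) (ε : ℝ) : ℝ≥0∞ :=
  ⨆ (δ : ℝ) (_ : δ ∈ Set.Ioo (0 : ℝ) 1), katokLowerD T μ ε δ

/-- The empirical measure `(1/n) Σ_{j=0}^{n-1} δ_{T^j x}`. -/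
noncomputable def empMeas [MeasurableSpace X] (T : X → X) (n : ℕ) (x : X) : Measure X :=
  (n : ℝ≥0∞)⁻¹ • ∑ j ∈ Finset.range n, Measure.dirac (T^[j] x)

/-- Pfister–Sullivan entropy `PS_μ(T,d,ε)`: infimum over weak* open neighborhoods `F` of `μ`
of `limsup_n (1/n) log s_n(T,d,ε,X_{n,F})`, where
`X_{n,F} = {x : (1/n) Σ_{j<n} δ_{T^j x} ∈ F}`. -/
noncomputable def PSent [MetricSpace X] [MeasurableSpace X] [OpensMeasurableSpace X]
    (T : X → X) (μ : ProbabilityMeasure X) (ε : ℝ) : ℝ≥0∞ :=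
  ⨅ (F : Set (ProbabilityMeasure X)) (_ : IsOpen F) (_ : μ ∈ F),
    Filter.limsup (fun n : ℕ => ENNReal.ofReal (Real.log (sepNum T n ε
      {x : X | ∃ h : IsProbabilityMeasure (empMeas T n x),
        (⟨empMeas T n x, h⟩ : ProbabilityMeasure X) ∈ F})) / (n : ℝ≥0∞)) Filter.atTop

/-- Partition entropy `H_μ(P) = Σ_{A∈P} -μ(A) log μ(A)`. -/
noncomputable def entP [MeasurableSpace X] (μ : Measure X) (P : Finset (Set X)) : ℝ≥0∞ :=
  ∑ A ∈ P, ENNReal.ofReal (-((μ A).toReal * Real.log ((μ A).toReal)))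

/-- The join `P^n = ∨_{j=0}^{n-1} T^{-j} P`. -/
noncomputable def joinN (T : X → X) (P : Finset (Set X)) (n : ℕ) : Finset (Set X) :=
  letI : DecidableEq (Set X) := Classical.decEq _
  (Fintype.piFinset (fun _ : Fin n => P)).image (fun f => ⋂ j : Fin n, T^[(j : ℕ)] ⁻¹' f j)

/-- `h_μ(T,P) = lim_n H_μ(P^n)/n` (the limit exists and equals the liminf). -/
noncomputable def entRate [MeasurableSpace X] (T : X → X) (μ : Measure X)
    (P : Finset (Set X)) : ℝ≥0∞ :=
  Filter.liminf (fun n : ℕ => entP μ (joinN T P n) / (n : ℝ≥0∞)) Filter.atTop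

/-- `inf { h_μ(T,P) : P a finite Borel partition with diam P ≤ ε }`. -/
noncomputable def infEntRate [PseudoMetricSpace X] [MeasurableSpace X] (T : X → X)
    (μ : Measure X) (ε : ℝ) : ℝ≥0∞ :=
  ⨅ (P : Finset (Set X)) (_ : IsFinPartition P) (_ : ∀ s ∈ P, Metric.diam s ≤ ε),
    entRate T μ P

/-- Kolmogorov–Sinai entropy `h_μ(T)`. -/
noncomputable def ksEntropy [MeasurableSpace X] (T : X → X) (μ : Measure X) : ℝ≥0∞ :=
  ⨆ (P : Finset (Set X)) (_ : IsFinPartition P), entRate T μ P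

/-- A finite open cover. -/
def IsFinOpenCover [TopologicalSpace X] (α : Finset (Set X)) : Prop :=
  (∀ A ∈ α, IsOpen A) ∧ ⋃₀ (α : Set (Set X)) = Set.univ

/-- `ord(β) = max_x #{B ∈ β : x ∈ B} - 1`. -/
noncomputable def ordCover (β : Finset (Set X)) : ℕ :=
  sSup {k | ∃ x : X, Nat.card {B : Set X // B ∈ β ∧ x ∈ B} = k} - 1

/-- `D(α) = min_{β ≻ α} ord(β)`, over finite open covers `β` refining `α`. -/
noncomputable def Dcover [TopologicalSpace X] (α : Finset (Set X)) : ℕ :=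
  sInf {k | ∃ β : Finset (Set X), IsFinOpenCover β ∧ (∀ B ∈ β, ∃ A ∈ α, B ⊆ A) ∧
    ordCover β = k}

/-- Mean (topological) dimension `mdim(X,T) = sup_α lim_n D(α^n)/n`. -/
noncomputable def mdimTop [TopologicalSpace X] (T : X → X) : ℝ≥0∞ :=
  ⨆ (α : Finset (Set X)) (_ : IsFinOpenCover α),
    Filter.liminf (fun n : ℕ => (Dcover (joinN T α n) : ℝ≥0∞) / (n : ℝ≥0∞)) Filter.atTop

/-- The marker property for a homeomorphism. -/
def MarkerProperty [TopologicalSpace X] (T : X ≃ₜ X) : Prop :=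
  ∀ N : ℕ, 0 < N → ∃ U : Set X, IsOpen U ∧
    (∀ n : ℕ, 1 ≤ n → n ≤ N → U ∩ (⇑T)^[n] '' U = ∅) ∧
    ⋃ n : ℤ, ⇑(T.toEquiv ^ n) '' U = Set.univ

/-- Upper dimension `limsup_{ε→0} F(μ,ε)/log(1/ε)` associated with a candidate `F`. -/
noncomputable def dimFUpper [MeasurableSpace X] (F : Measure X → ℝ → ℝ≥0∞)
    (μ : Measure X) : ℝ≥0∞ :=
  Filter.limsup (fun ε : ℝ => F μ ε / ENNReal.ofReal (Real.log (1 / ε)))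
    (nhdsWithin 0 (Set.Ioi 0))

/-- Lower dimension `liminf_{ε→0} F(μ,ε)/log(1/ε)` associated with a candidate `F`. -/
noncomputable def dimFLower [MeasurableSpace X] (F : Measure X → ℝ → ℝ≥0∞)
    (μ : Measure X) : ℝ≥0∞ :=
  Filter.liminf (fun ε : ℝ => F μ ε / ENNReal.ofReal (Real.log (1 / ε)))
    (nhdsWithin 0 (Set.Ioi 0))

/-- A candidate function: for each invariant probability measure `μ`, `F(μ,·)` is
non-decreasing as `ε` decreases, and `F(μ,ε) → h_μ(T)` as `ε → 0⁺`. -/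
def IsCandidate [MeasurableSpace X] (T : X → X) (F : Measure X → ℝ → ℝ≥0∞) : Prop :=
  ∀ μ : Measure X, IsProbabilityMeasure μ → MeasurePreserving T μ μ →
    (∀ ε₁ ε₂ : ℝ, 0 < ε₁ → ε₁ ≤ ε₂ → F μ ε₂ ≤ F μ ε₁) ∧
    Filter.Tendsto (F μ) (nhdsWithin 0 (Set.Ioi 0)) (nhds (ksEntropy T μ))

end MMD

open MMD

/-!
For the upper bound, the marker property provides towers and thereby finite families of sets whose
images under a prescribed iterate are arbitrarily small while their mean multiplicity along every
single orbit is close to the mean dimension. The distances to the complements of these sets, made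
compatible between families of different scales, are coordinates on `X`, and a weighted supremum of
coordinate differences along past orbits is a compatible metric. An orbit segment of length `n` has
only about `mdim · n` nonzero coordinates, and `log (1 / ε)` nats each suffice to record them with
precision `ε`; so the information dimension of every invariant measure is at most `mdim`.

For the lower bound, let `d` be any compatible metric and suppose that the joins `α ^ n` satisfy
`D(α ^ n) ≥ a n`. Lipschitz functions adapted to `α` map orbit segments into a Euclidean space. For
every translate of the unit grid, some segment of length `n` has at least `a n` coordinates within
`1 / n` of the walls, for otherwise the preimages of the sets swept out by the grid cells while the
grid moves by `1 / n` would refine `α ^ n` with too small an order. Translating each coordinate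
independently by multiples of `1 / n` yields a family of orbit segments in which, for every fixed
`δ` and large `n`, subfamilies that stay `δ`-close at most times are exponentially small. A limit of
the empirical measures of these families is invariant, and by Gibbs' inequality every partition into
sets of diameter at most a third of `δ` has entropy rate at least `a log (1 / δ) - O(1)` for it. The
family does not depend on `δ`, so the information dimension of this one measure is at least `a`.
-/

open scoped Finset NNReal

namespace MMD

section Depth

variable {X : Type*} [PseudoMetricSpace X] {B : Set X}

/-- The distance from `x` to the complement of `B`, truncated at `1`: a canonical `1`-Lipschitz
function which is positive exactly on the open set `B`. -/
def depth (B : Set X) (x : X) : ℝ≥0 :=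
  (min 1 (Metric.infEDist x Bᶜ)).toNNReal

lemma coe_depth (B : Set X) (x : X) : (depth B x : ℝ≥0∞) = min 1 (Metric.infEDist x Bᶜ) :=
  ENNReal.coe_toNNReal ((min_le_left _ _).trans_lt ENNReal.one_lt_top).ne

lemma depth_le_one (B : Set X) (x : X) : depth B x ≤ 1 := by
  rw [← ENNReal.coe_le_coe, coe_depth]
  exact min_le_left _ _

lemma depth_pos_iff (hB : IsOpen B) {x : X} : 0 < depth B x ↔ x ∈ B := by
  rw [← ENNReal.coe_pos, coe_depth, lt_min_iff, Metric.infEDist_pos_iff_notMem_closure,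
    hB.isClosed_compl.closure_eq, notMem_compl_iff, and_iff_right zero_lt_one]

lemma mem_of_depth_ne_zero (hB : IsOpen B) {x : X} (hx : depth B x ≠ 0) : x ∈ B :=
  (depth_pos_iff hB).1 (pos_iff_ne_zero.2 hx)

lemma depth_le_add_nndist (B : Set X) (x y : X) : depth B x ≤ depth B y + nndist x y := by
  rw [← ENNReal.coe_le_coe, ENNReal.coe_add, coe_depth, coe_depth, ← edist_nndist,
    ← min_add_add_right]
  exact min_le_min le_self_add Metric.infEDist_le_infEDist_add_edist

lemma nndist_le_iff_le_add {a b e : ℝ≥0} : nndist a b ≤ e ↔ a ≤ b + e ∧ b ≤ a + e := by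
  rw [← NNReal.coe_le_coe, coe_nndist, NNReal.dist_eq, abs_sub_le_iff]
  simp only [← NNReal.coe_le_coe, NNReal.coe_add, sub_le_iff_le_add']

lemma lipschitzWith_depth (B : Set X) : LipschitzWith 1 (depth B) := by
  refine LipschitzWith.of_dist_le_mul fun x y => ?_
  rw [NNReal.coe_one, one_mul, ← coe_nndist, ← coe_nndist, NNReal.coe_le_coe, nndist_le_iff_le_add]
  exact ⟨depth_le_add_nndist B x y, nndist_comm y x ▸ depth_le_add_nndist B y x⟩

lemma continuous_depth (B : Set X) : Continuous (depth B) :=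
  (lipschitzWith_depth B).continuous

end Depth

lemma exists_finset_forall_one_lt_mul {X ι : Type*} [TopologicalSpace X] [CompactSpace X]
    {f : ι → X → ℝ≥0} (hf : ∀ i, Continuous (f i)) (hpos : ∀ x, ∃ i, 0 < f i x) :
    ∃ (t : Finset ι) (R : ℕ), ∀ x, ∃ i ∈ t, 1 < R * f i x := by
  classical
  obtain ⟨P, hP⟩ := isCompact_univ.elim_finite_subcover
    (fun q : ι × ℕ => {x | 1 < (q.2 : ℝ≥0) * f q.1 x})
    (fun q => isOpen_lt continuous_const (continuous_const.mul (hf q.1))) fun x _ => by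
      obtain ⟨i, hi⟩ := hpos x
      obtain ⟨r, hr⟩ := exists_nat_gt (1 / f i x)
      exact mem_iUnion.2 ⟨(i, r), (div_lt_iff₀ hi).1 hr⟩
  refine ⟨P.image Prod.fst, P.sup Prod.snd, fun x => ?_⟩
  obtain ⟨q, hq, hlt⟩ := mem_iUnion₂.1 (hP (mem_univ x))
  refine ⟨q.1, Finset.mem_image_of_mem _ hq, lt_of_lt_of_le hlt ?_⟩
  gcongr
  exact Finset.le_sup (f := Prod.snd) hq

section CountIco

variable {p e : ℤ → Prop} {s t r s' t' : ℤ}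

open Classical in
/-- The number of integers of `[s, t)` satisfying `p`. -/
def countIco (p : ℤ → Prop) (s t : ℤ) : ℕ := {j ∈ Finset.Ico s t | p j}.card

lemma countIco_add (h₁ : s ≤ t) (h₂ : t ≤ r) :
    countIco p s r = countIco p s t + countIco p t r := by
  classical
  rw [countIco, ← Finset.Ico_union_Ico_eq_Ico h₁ h₂, Finset.filter_union,
    Finset.card_union_of_disjoint]
  · rfl
  · exact Finset.disjoint_filter_filter (Finset.Ico_disjoint_Ico_consecutive s t r)

lemma countIco_mono (h₁ : s' ≤ s) (h₂ : t ≤ t') : countIco p s t ≤ countIco p s' t' := by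
  classical
  exact Finset.card_le_card (Finset.filter_subset_filter _ (Finset.Ico_subset_Ico h₁ h₂))

lemma countIco_false : countIco (fun _ => False) s t = 0 := by
  simp [countIco]

lemma countIco_comp_add (p : ℤ → Prop) (s t a : ℤ) :
    countIco (fun j => p (j + a)) s t = countIco p (s + a) (t + a) := by
  classical
  rw [countIco, countIco, ← Finset.image_add_right_Ico, Finset.filter_image,
    Finset.card_image_of_injective _ (add_left_injective a)]

lemma countIco_add_mul_le (w : ℕ)
    (h : ∀ s, countIco p s (s + w) ≤ 1 + countIco e s (s + w)) (s : ℤ) (k : ℕ) :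
    countIco p s (s + (k * w : ℕ)) ≤ k + countIco e s (s + (k * w : ℕ)) := by
  induction k with
  | zero => simp [countIco]
  | succ k ih =>
    have hsplit : s + (((k + 1) * w : ℕ) : ℤ) = s + (k * w : ℕ) + w := by push_cast; ring
    have hle : s ≤ s + (k * w : ℕ) := by omega
    have hle' : s + (k * w : ℕ) ≤ s + (k * w : ℕ) + w := by omega
    rw [hsplit, countIco_add (p := p) hle hle', countIco_add (p := e) hle hle']
    have := h (s + (k * w : ℕ))
    omega

lemma countIco_le_one_add_of_separated (w : ℕ)
    (h : ∀ j : ℤ, ∀ t : ℕ, 0 < t → t < w → p j → p (j + t) → ∃ i, j < i ∧ i ≤ j + t ∧ e i)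
    (s : ℤ) : countIco p s (s + w) ≤ 1 + countIco e s (s + w) := by
  classical
  unfold countIco
  -- Doubling makes the half-open condition `j < i ≤ j + t` strict: `2j + 1 < 2i < 2(j + t) + 1`.
  have hinterleaved : ({j ∈ Finset.Ico s (s + w) | p j}.image (fun j => 2 * j + 1)).card ≤
      ({j ∈ Finset.Ico s (s + w) | e j}.image (fun j => 2 * j)).card + 1 := by
    apply Finset.card_le_of_interleaved
    simp only [Finset.mem_image, Finset.mem_filter, Finset.mem_Ico]
    rintro _ ⟨a, ⟨⟨ha₁, -⟩, ha₃⟩, rfl⟩ _ ⟨b, ⟨⟨-, hb₂⟩, hb₃⟩, rfl⟩ hab _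
    obtain ⟨t, rfl⟩ := Int.le.dest (show a ≤ b by omega)
    obtain ⟨i, hi₁, hi₂, hi₃⟩ := h a t (by omega) (by omega) ha₃ hb₃
    exact ⟨2 * i, ⟨i, ⟨⟨by omega, by omega⟩, hi₃⟩, rfl⟩, by omega, by omega⟩
  rw [Finset.card_image_of_injective _ (fun a b hab => by simpa using hab),
    Finset.card_image_of_injective _ (fun a b hab => by simpa using hab)] at hinterleaved
  omega

lemma countIco_le_mul_of_trace (d c : ℕ) (S : ℤ → Finset ℤ) (hS : ∀ m, (S m).card ≤ c)
    (h : ∀ j, p j → ∃ m, j - d ≤ m ∧ m ≤ j ∧ e m ∧ j ∈ S m) :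
    countIco p s t ≤ c * countIco e (s - d) t := by
  classical
  unfold countIco
  rw [mul_comm]
  refine (Finset.card_le_card fun j hj => ?_).trans
    (Finset.card_biUnion_le_card_mul {m ∈ Finset.Ico (s - d) t | e m} S c fun m _ => hS m)
  simp only [Finset.mem_filter, Finset.mem_Ico, Finset.mem_biUnion] at hj ⊢
  obtain ⟨m, hm₁, hm₂, hem, hjm⟩ := h j hj.2
  exact ⟨m, ⟨⟨by omega, by omega⟩, hem⟩, hjm⟩

lemma countIco_exists_lag_le (e : ℤ → Prop) (N : ℕ) (s t : ℤ) :
    countIco (fun j => ∃ i : ℕ, i < N ∧ e (j - i)) s t ≤ N * countIco e (s - N) t := by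
  refine countIco_le_mul_of_trace N N (fun m => (Finset.range N).image fun i : ℕ => m + i)
    (fun m => Finset.card_image_le.trans_eq (Finset.card_range N)) ?_
  rintro j ⟨i, hi, hj⟩
  exact ⟨j - i, by omega, by omega, hj,
    Finset.mem_image.2 ⟨i, Finset.mem_range.2 hi, by omega⟩⟩

end CountIco

section BlockStarts

variable {N L : ℕ} {a : ℤ → ℝ} {j : ℤ}

/-- A marker visited at time `m` with height `a m` casts a shadow on the times `m + q` with
`q < a m`. A time is a transition if a marker is visited then, or if it is at one of the last two
times of a shadow; between transitions the set of markers casting a shadow does not change. -/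
def IsTransition (L : ℕ) (a : ℤ → ℝ) (j : ℤ) : Prop :=
  0 < a j ∨ ∃ q : ℕ, q ≤ L ∧ (q : ℝ) < a (j - q) ∧ a (j - q) < q + 2

/-- The time `j` starts a block if the most recent marker whose shadow reaches past `j` was
visited a multiple of `N` steps ago. -/
def IsBlockStart (N L : ℕ) (a : ℤ → ℝ) (j : ℤ) : Prop :=
  ∃ p : ℕ, p ≤ L ∧ N ∣ p ∧ (p : ℝ) + 1 < a (j - p) ∧ ∀ q : ℕ, q < p → a (j - q) < q + 1

/-- Away from transitions, a shadow shorter than its age `n` by at most one time unit at time `j`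
was already over `i` steps earlier. -/
lemma le_sub_of_not_isTransition {n : ℕ} (hn : n ≤ L) (ha : a (j - n) ≤ n + 1) {i : ℕ} (hi : i ≤ n)
    (hj : ∀ k ≤ i, ¬ IsTransition L a (j - k)) : a (j - n) ≤ ((n - i : ℕ) : ℝ) := by
  have hstep : ∀ k ≤ i, a (j - n) ≤ ((n - k : ℕ) : ℝ) + 1 → a (j - n) ≤ ((n - k : ℕ) : ℝ) := by
    intro k hk hle
    by_contra! hlt
    have hidx : j - k - ((n - k : ℕ) : ℤ) = j - n := by omega
    exact hj k hk (Or.inr ⟨n - k, by omega, by rwa [hidx], by rw [hidx]; linarith⟩)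
  induction i with
  | zero => exact hstep 0 le_rfl (by simpa using ha)
  | succ i ih =>
    refine hstep (i + 1) le_rfl ((ih (by omega) (fun k hk => hj k (by omega)) fun k hk =>
      hstep k (by omega)).trans_eq ?_)
    rw [show n - i = n - (i + 1) + 1 by omega, Nat.cast_succ]

lemma exists_isBlockStart (hN : 0 < N) (hj : ∀ i : ℕ, i < N → ¬ IsTransition L a (j - i))
    (hactive : ∃ p : ℕ, p ≤ L ∧ (p : ℝ) + 1 < a (j - p)) :
    ∃ i : ℕ, i < N ∧ IsBlockStart N L a (j - i) := by
  classical
  let p := Nat.find hactive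
  obtain ⟨hpL, hpa⟩ : p ≤ L ∧ (p : ℝ) + 1 < a (j - p) := Nat.find_spec hactive
  have hlast : ∀ q : ℕ, q < p → a (j - q) ≤ q + 1 := fun q hq =>
    not_lt.1 fun hlt => Nat.find_min hactive hq ⟨by omega, hlt⟩
  have hNp : N ≤ p := by
    by_contra! hlt
    exact hj p hlt (Or.inl (by linarith [Nat.cast_nonneg (α := ℝ) p]))
  have hmod : p % N < N := Nat.mod_lt _ hN
  refine ⟨p % N, hmod, p - p % N, by omega, Nat.dvd_sub_mod p, ?_, fun q hq => ?_⟩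
  · rw [show j - (p % N : ℕ) - ((p - p % N : ℕ) : ℤ) = j - p by omega]
    have : ((p - p % N : ℕ) : ℝ) ≤ p := mod_cast Nat.sub_le _ _
    linarith
  · have hle := le_sub_of_not_isTransition (n := p % N + q) (by omega) (hlast _ (by omega))
      (Nat.le_add_right _ _) fun k hk => hj k (by omega)
    rw [Nat.add_sub_cancel_left] at hle
    rw [show j - (p % N : ℕ) - (q : ℤ) = j - (p % N + q : ℕ) by omega]
    linarith

lemma lt_of_not_isTransition (haL : ∀ i, a i ≤ L) {p t : ℕ} (hp : (p : ℝ) + 1 < a (j - p))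
    (hj : ∀ k : ℕ, 0 < k → k ≤ t → ¬ IsTransition L a (j + k)) :
    (p : ℝ) + t + 1 < a (j - p) := by
  induction t with
  | zero => simpa using hp
  | succ t ih =>
    have hlt := ih fun k hk hkt => hj k hk (by omega)
    by_contra! hle
    have hage : p + (t + 1) ≤ L := by
      have : ((p + (t + 1) : ℕ) : ℝ) ≤ L := by push_cast; linarith [haL (j - p)]
      exact_mod_cast this
    have hidx : j + ((t + 1 : ℕ) : ℤ) - ((p + (t + 1) : ℕ) : ℤ) = j - p := by push_cast; ring
    refine hj (t + 1) (by omega) le_rfl (Or.inr ⟨p + (t + 1), hage, ?_, ?_⟩) <;>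
      · rw [hidx]; push_cast at hle ⊢; linarith

lemma exists_isTransition_between (haL : ∀ i, a i ≤ L) {t : ℕ} (ht : 0 < t) (htN : t < N)
    (h : IsBlockStart N L a j) (h' : IsBlockStart N L a (j + t)) :
    ∃ e : ℤ, j < e ∧ e ≤ j + t ∧ IsTransition L a e := by
  by_contra! hnone
  obtain ⟨p, hpL, hNp, hpa, hlast⟩ := h
  obtain ⟨p', -, hNp', hpa', hlast'⟩ := h'
  have htp' : t ≤ p' := by
    by_contra! hlt
    exact hnone (j + t - p') (by omega) (by omega)
      (Or.inl (by linarith [Nat.cast_nonneg (α := ℝ) p']))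
  obtain ⟨q, rfl⟩ := Nat.exists_eq_add_of_le htp'
  rw [show j + (t : ℤ) - ((t + q : ℕ) : ℤ) = j - q by push_cast; ring] at hpa'
  push_cast at hpa'
  rcases lt_trichotomy q p with hqp | rfl | hpq
  · linarith [hlast q hqp, Nat.cast_nonneg (α := ℝ) t]
  · have hNt : N ∣ t := (Nat.dvd_add_left hNp).1 hNp'
    exact absurd (Nat.le_of_dvd ht hNt) (by omega)
  · have hshort := hlast' (t + p) (by omega)
    rw [show j + (t : ℤ) - ((t + p : ℕ) : ℤ) = j - p by push_cast; ring] at hshort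
    have hlong := lt_of_not_isTransition haL hpa (t := t) fun k hk hkt =>
      hnone (j + k) (by omega) (by omega)
    push_cast at hshort
    linarith

lemma countIco_isTransition_le (L : ℕ) (a : ℤ → ℝ) (s t : ℤ) :
    countIco (IsTransition L a) s t ≤ 3 * countIco (fun j => 0 < a j) (s - L) t := by
  refine countIco_le_mul_of_trace L 3 (fun m => {m, m + ⌈a m⌉ - 1, m + ⌈a m⌉ - 2})
    (fun m => Finset.card_le_three) ?_
  simp only [Finset.mem_insert, Finset.mem_singleton]
  rintro j (hj | ⟨q, hqL, hq₁, hq₂⟩)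
  · exact ⟨j, by omega, le_rfl, hj, Or.inl rfl⟩
  · have hlo : (q : ℤ) < ⌈a (j - q)⌉ := Int.lt_ceil.2 (mod_cast hq₁)
    have hhi : ⌈a (j - q)⌉ ≤ (q : ℤ) + 2 := Int.ceil_le.2 (mod_cast hq₂.le)
    exact ⟨j - q, by omega, by omega, (Nat.cast_nonneg q).trans_lt hq₁, by omega⟩

lemma countIco_isBlockStart_le (haL : ∀ i, a i ≤ L) (s : ℤ) (k : ℕ) :
    countIco (IsBlockStart N L a) s (s + (k * N : ℕ)) ≤
      k + countIco (IsTransition L a) s (s + (k * N : ℕ)) :=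
  countIco_add_mul_le N (countIco_le_one_add_of_separated N fun _ _ ht htN =>
    exists_isTransition_between haL ht htN) s k

end BlockStarts

section Powers

variable {X : Type*} [TopologicalSpace X] (T : X ≃ₜ X)

lemma zpow_natCast_apply (n : ℕ) (x : X) : (T ^ (n : ℤ)) x = T^[n] x := by
  rw [zpow_natCast, hom_coe_pow (fun S : X ≃ₜ X => (S : X → X)) rfl (fun _ _ => rfl) T n]

lemma zpow_add_apply (i j : ℤ) (x : X) : (T ^ (i + j)) x = (T ^ i) ((T ^ j) x) := by
  rw [zpow_add, Homeomorph.mul_apply]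

lemma zpow_apply_zpow_neg (k : ℤ) (x : X) : (T ^ k) ((T ^ (-k)) x) = x := by
  rw [← zpow_add_apply, add_neg_cancel, zpow_zero, Homeomorph.one_apply]

lemma toEquiv_zpow_apply (n : ℤ) (x : X) : (T.toEquiv ^ n : Equiv.Perm X) x = (T ^ n) x :=
  congrArg (fun e : Equiv.Perm X => e x) (map_zpow
    (⟨⟨Homeomorph.toEquiv, rfl⟩, fun _ _ => rfl⟩ : (X ≃ₜ X) →* Equiv.Perm X) T n).symm

variable {T}

lemma MarkerProperty.exists_isOpen (hT : MarkerProperty T) {M : ℕ} (hM : 0 < M) :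
    ∃ U : Set X, IsOpen U ∧
      (∀ x, ∀ t : ℕ, 0 < t → t ≤ M → x ∈ U → (T ^ (t : ℤ)) x ∉ U) ∧
      ∀ x, ∃ n : ℤ, (T ^ n) x ∈ U := by
  obtain ⟨U, hU, hdisj, hcov⟩ := hT M hM
  refine ⟨U, hU, fun x t ht htM hx hx' => ?_, fun x => ?_⟩
  · have : (T ^ (t : ℤ)) x ∈ U ∩ T^[t] '' U := ⟨hx', x, hx, (zpow_natCast_apply T t x).symm⟩
    rwa [hdisj t ht htM] at this
  · obtain ⟨n, y, hy, rfl⟩ := mem_iUnion.1 (hcov.ge (mem_univ x))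
    refine ⟨-n, ?_⟩
    rwa [toEquiv_zpow_apply, ← zpow_add_apply, neg_add_cancel, zpow_zero, Homeomorph.one_apply]

end Powers

section Tower

variable {X : Type*} [PseudoMetricSpace X] {T : X ≃ₜ X}

lemma exists_uniform_depth_visit [CompactSpace X] {U : Set X} (hU : IsOpen U)
    (hcov : ∀ x, ∃ n : ℤ, (T ^ n) x ∈ U) :
    ∃ R : ℕ, ∀ x, ∃ n : ℤ, |n| ≤ R ∧ (1 : ℝ) < R * depth U ((T ^ n) x) := by
  obtain ⟨t, R, hR⟩ := exists_finset_forall_one_lt_mul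
    (fun n : ℤ => (continuous_depth U).comp (T ^ n).continuous)
    fun x => (hcov x).imp fun n => (depth_pos_iff hU).2
  refine ⟨max R (t.sup Int.natAbs), fun x => ?_⟩
  obtain ⟨n, hn, hlt⟩ := hR x
  refine ⟨n, ?_, ?_⟩
  · rw [Int.abs_eq_natAbs]
    exact_mod_cast (Finset.le_sup hn).trans (le_max_right _ _)
  · refine lt_of_lt_of_le (b := (R * depth U ((T ^ n) x) : ℝ)) (mod_cast hlt) ?_
    gcongr
    exact le_max_left _ _

lemma exists_height [CompactSpace X] {U : Set X} (hU : IsOpen U)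
    (hcov : ∀ x, ∃ n : ℤ, (T ^ n) x ∈ U) :
    ∃ (L : ℕ) (u : X → ℝ), Continuous u ∧ (∀ x, u x ≤ L) ∧ (∀ x, 0 < u x → x ∈ U) ∧
      ∀ x, ∃ p : ℕ, p ≤ L ∧ (p : ℝ) + 1 < u ((T ^ (-p : ℤ)) x) := by
  obtain ⟨R, hR⟩ := exists_uniform_depth_visit hU hcov
  refine ⟨2 * R + 2, fun x => (2 * R + 2 : ℕ) * min (1 : ℝ) (R * depth U x), ?_, fun x => ?_,
    fun x hx => ?_, fun x => ?_⟩
  · have := NNReal.continuous_coe.comp (continuous_depth U)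
    exact continuous_const.mul (continuous_const.min (continuous_const.mul this))
  · exact mul_le_of_le_one_right (Nat.cast_nonneg _) (min_le_left _ _)
  · rw [← depth_pos_iff hU]
    by_contra hzero
    simp [nonpos_iff_eq_zero.1 (not_lt.1 hzero)] at hx
  · obtain ⟨n, hn, hlt⟩ := hR ((T ^ (-R : ℤ)) x)
    rw [abs_le] at hn
    obtain ⟨p, hp⟩ := Int.eq_ofNat_of_zero_le (show 0 ≤ R - n by omega)
    rw [← zpow_add_apply, show n + -(R : ℤ) = -p by omega] at hlt
    refine ⟨p, by omega, ?_⟩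
    dsimp only
    rw [min_eq_left hlt.le, mul_one]
    exact_mod_cast (by omega : p + 1 < 2 * R + 2)

variable {u : X → ℝ}

/-- The values of `u` along the orbit of `x`. -/
def orbitValues (T : X ≃ₜ X) (u : X → ℝ) (x : X) (j : ℤ) : ℝ :=
  u ((T ^ j) x)

lemma orbitValues_zpow_apply (x : X) (i j : ℤ) :
    orbitValues T u ((T ^ i) x) j = orbitValues T u x (i + j) := by
  rw [orbitValues, ← zpow_add_apply, add_comm, orbitValues]

lemma isTransition_orbitValues_zpow {L : ℕ} {x : X} {i j : ℤ} :
    IsTransition L (orbitValues T u ((T ^ i) x)) j ↔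
      IsTransition L (orbitValues T u x) (i + j) := by
  simp only [IsTransition, orbitValues_zpow_apply, add_sub_assoc]

lemma isBlockStart_orbitValues_zpow {N L : ℕ} {x : X} {i j : ℤ} :
    IsBlockStart N L (orbitValues T u ((T ^ i) x)) j ↔
      IsBlockStart N L (orbitValues T u x) (i + j) := by
  simp only [IsBlockStart, orbitValues_zpow_apply, add_sub_assoc]

lemma continuous_orbitValues (hu : Continuous u) (j : ℤ) :
    Continuous fun x => orbitValues T u x j :=
  hu.comp (T ^ j).continuous

lemma isOpen_setOf_isTransition (hu : Continuous u) (L : ℕ) (j : ℤ) :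
    IsOpen {x | IsTransition L (orbitValues T u x) j} := by
  simp only [IsTransition, Set.ofPred_or, Set.ofPred_exists, Set.ofPred_and]
  refine (isOpen_lt continuous_const (continuous_orbitValues hu _)).union
    (isOpen_iUnion fun q => ?_)
  exact isOpen_const.inter ((isOpen_lt continuous_const (continuous_orbitValues hu _)).inter
    (isOpen_lt (continuous_orbitValues hu _) continuous_const))

lemma isOpen_setOf_isBlockStart (hu : Continuous u) (N L : ℕ) (j : ℤ) :
    IsOpen {x | IsBlockStart N L (orbitValues T u x) j} := by
  simp only [IsBlockStart, Set.ofPred_exists, Set.ofPred_and, Set.ofPred_forall]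
  refine isOpen_iUnion fun p => isOpen_const.inter (isOpen_const.inter
    ((isOpen_lt continuous_const (continuous_orbitValues hu _)).inter ?_))
  exact (Set.finite_lt_nat p).isOpen_biInter fun q _ =>
    isOpen_lt (continuous_orbitValues hu _) continuous_const

lemma countIco_pos_orbitValues_le {U : Set X} {M : ℕ}
    (hU : ∀ x, ∀ t : ℕ, 0 < t → t ≤ M → x ∈ U → (T ^ (t : ℤ)) x ∉ U)
    (hu : ∀ x, 0 < u x → x ∈ U) (x : X) (s : ℤ) (r : ℕ) :
    countIco (fun j => 0 < orbitValues T u x j) s (s + (r * (M + 1) : ℕ)) ≤ r := by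
  have hgap : ∀ s, countIco (fun j => 0 < orbitValues T u x j) s (s + (M + 1 : ℕ)) ≤
      1 + countIco (fun _ => False) s (s + (M + 1 : ℕ)) :=
    countIco_le_one_add_of_separated _ fun j t ht htM hj hjt =>
      (hU _ t ht (by omega) (hu _ hj) (hu _ (by
        rwa [← zpow_add_apply, add_comm]))).elim
  simpa only [countIco_false, add_zero] using countIco_add_mul_le (M + 1) hgap s r

lemma countIco_isTransition_orbitValues_le {U : Set X} {M : ℕ}
    (hU : ∀ x, ∀ t : ℕ, 0 < t → t ≤ M → x ∈ U → (T ^ (t : ℤ)) x ∉ U)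
    (hu : ∀ x, 0 < u x → x ∈ U) (L N k : ℕ) (x : X) :
    countIco (IsTransition L (orbitValues T u x)) (-N) (k * (M + 1) : ℕ) ≤ 3 * (k + (L + N)) := by
  refine (countIco_isTransition_le L _ _ _).trans (Nat.mul_le_mul_left 3 ?_)
  refine (countIco_mono le_rfl ?_).trans
    (countIco_pos_orbitValues_le hU hu x (-N - L) (k + (L + N)))
  push_cast
  nlinarith [Nat.zero_le ((L + N) * M)]

lemma mem_iUnion_setOf_isTransition_or_exists_isBlockStart {L N : ℕ} (hN : 0 < N)
    (hactive : ∀ x, ∃ p : ℕ, p ≤ L ∧ (p : ℝ) + 1 < u ((T ^ (-p : ℤ)) x)) (x : X) :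
    x ∈ ⋃ i : Fin N, {x | IsTransition L (orbitValues T u x) (-i)} ∨
      ∃ k : ℕ, k < N ∧ (T ^ (-k : ℤ)) x ∈ {x | IsBlockStart N L (orbitValues T u x) 0} := by
  rw [or_iff_not_imp_left]
  intro hx
  simp only [mem_iUnion, mem_ofPred_eq, not_exists, Fin.forall_iff] at hx
  obtain ⟨i, hi, hstart⟩ := exists_isBlockStart (j := 0) (a := orbitValues T u x) hN
    (by simpa only [zero_sub] using hx)
    (by simpa only [orbitValues, zero_sub] using hactive x)
  refine ⟨i, hi, ?_⟩
  rwa [mem_ofPred_eq, isBlockStart_orbitValues_zpow, add_zero, ← zero_sub]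

lemma countIco_isBlockStart_orbitValues_le {U : Set X} {L M : ℕ}
    (hU : ∀ x, ∀ t : ℕ, 0 < t → t ≤ M → x ∈ U → (T ^ (t : ℤ)) x ∉ U)
    (hu : ∀ x, 0 < u x → x ∈ U) (huL : ∀ x, u x ≤ L) (N r : ℕ) (x : X) :
    countIco (fun j => (T ^ j) x ∈ {x | IsBlockStart N L (orbitValues T u x) 0}) 0
      (r * N * (M + 1) : ℕ) ≤ r * (M + 1) + 3 * (r * N + (L + N)) := by
  have hblock := countIco_isBlockStart_le (N := N) (fun j => huL ((T ^ j) x)) 0 (r * (M + 1))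
  rw [zero_add, mul_right_comm] at hblock
  simp only [mem_ofPred_eq, isBlockStart_orbitValues_zpow, add_zero]
  exact hblock.trans (Nat.add_le_add_left ((countIco_mono (by omega) le_rfl).trans
    (countIco_isTransition_orbitValues_le hU hu L N (r * N) x)) _)

lemma countIco_iUnion_isTransition_orbitValues_le {U : Set X} {M : ℕ}
    (hU : ∀ x, ∀ t : ℕ, 0 < t → t ≤ M → x ∈ U → (T ^ (t : ℤ)) x ∉ U)
    (hu : ∀ x, 0 < u x → x ∈ U) (L N k : ℕ) (x : X) :
    countIco (fun j => (T ^ j) x ∈ ⋃ i : Fin N, {x | IsTransition L (orbitValues T u x) (-i)}) 0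
      (k * (M + 1) : ℕ) ≤ N * (3 * (k + (L + N))) := by
  have hshift : ∀ j, (T ^ j) x ∈ ⋃ i : Fin N, {x | IsTransition L (orbitValues T u x) (-i)} ↔
      ∃ i : ℕ, i < N ∧ IsTransition L (orbitValues T u x) (j - i) := fun j => by
    simp only [mem_iUnion, mem_ofPred_eq, isTransition_orbitValues_zpow, ← sub_eq_add_neg,
      Fin.exists_iff, exists_prop]
  simp only [hshift]
  exact (countIco_exists_lag_le (IsTransition L (orbitValues T u x)) N 0 _).trans
    (Nat.mul_le_mul_left N
      (by simpa only [zero_sub] using countIco_isTransition_orbitValues_le hU hu L N k x))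

/-- A topological Rokhlin tower: `W` is its base and `V` its error set. -/
lemma MarkerProperty.exists_tower [CompactSpace X] (hT : MarkerProperty T) {N : ℕ} (hN : 0 < N)
    {η : ℝ} (hη : 0 < η) :
    ∃ (W V : Set X) (n : ℕ), IsOpen W ∧ IsOpen V ∧ 0 < n ∧
      (∀ x, x ∈ V ∨ ∃ k : ℕ, k < N ∧ (T ^ (-k : ℤ)) x ∈ W) ∧
      (∀ x, (countIco (fun j => (T ^ j) x ∈ W) 0 n : ℝ) ≤ n * (1 / N + η)) ∧
      (∀ x, (countIco (fun j => (T ^ j) x ∈ V) 0 n : ℝ) ≤ n * η) := by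
  obtain ⟨M, hM⟩ := exists_nat_gt (6 * N / η)
  have hMpos : (0 : ℝ) < M := lt_of_le_of_lt (by positivity) hM
  obtain ⟨U, hU, hdisj, hcov⟩ := hT.exists_isOpen (M := M) (mod_cast hMpos)
  obtain ⟨L, u, hu, huL, huU, hactive⟩ := exists_height hU hcov
  let r : ℕ := L + N
  let n : ℕ := r * N * (M + 1)
  have hN1 : (1 : ℝ) ≤ N := mod_cast hN
  have herror : (N * (3 * (r * N + r)) : ℝ) ≤ n * η := by
    rw [div_lt_iff₀ hη] at hM
    calc (N * (3 * (r * N + r)) : ℝ) ≤ N * (3 * (r * N + r * N)) := by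
          gcongr
          exact le_mul_of_one_le_right (Nat.cast_nonneg r) hN1
      _ = r * N * (6 * N) := by ring
      _ ≤ r * N * ((M + 1) * η) := mul_le_mul_of_nonneg_left (by linarith) (by positivity)
      _ = n * η := by simp only [n]; push_cast; ring
  refine ⟨{x | IsBlockStart N L (orbitValues T u x) 0},
    ⋃ i : Fin N, {x | IsTransition L (orbitValues T u x) (-i)}, n,
    isOpen_setOf_isBlockStart hu N L 0, isOpen_iUnion fun i => isOpen_setOf_isTransition hu L _,
    by positivity, mem_iUnion_setOf_isTransition_or_exists_isBlockStart hN hactive, fun x => ?_,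
    fun x => ?_⟩
  · have hfreq : (n : ℝ) * (1 / N) = r * (M + 1) := by
      simp only [n]; push_cast; field_simp
    have herror' : (3 * (r * N + r) : ℝ) ≤ N * (3 * (r * N + r)) :=
      le_mul_of_one_le_left (by positivity) hN1
    rw [mul_add, hfreq]
    refine le_trans (mod_cast countIco_isBlockStart_orbitValues_le hdisj huU huL N r x)
      (add_le_add_right (herror'.trans herror) (r * (M + 1) : ℝ))
  · exact le_trans (mod_cast countIco_iUnion_isTransition_orbitValues_le hdisj huU L N (r * N) x)
      herror

end Tower

section Covers

variable {X : Type*} {T : X → X} {α : Finset (Set X)} {n : ℕ}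

lemma mem_joinN {B : Set X} :
    B ∈ joinN T α n ↔ ∃ f : Fin n → Set X, (∀ j, f j ∈ α) ∧
      B = ⋂ j : Fin n, T^[(j : ℕ)] ⁻¹' f j := by
  classical
  simp only [joinN, Finset.mem_image, Fintype.mem_piFinset]
  exact exists_congr fun f => and_congr_right fun _ => eq_comm

lemma IsFinOpenCover.exists_mem [TopologicalSpace X] (hα : IsFinOpenCover α) (x : X) :
    ∃ A ∈ α, x ∈ A :=
  hα.2.ge (mem_univ x)

lemma isFinOpenCover_joinN [TopologicalSpace X] (hT : Continuous T) (hα : IsFinOpenCover α)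
    (n : ℕ) : IsFinOpenCover (joinN T α n) := by
  refine ⟨fun A hA => ?_, eq_univ_of_forall fun x => ?_⟩
  · obtain ⟨f, hf, rfl⟩ := mem_joinN.1 hA
    exact isOpen_iInter_of_finite fun j => (hα.1 _ (hf j)).preimage (hT.iterate _)
  · choose g hgα hg using hα.exists_mem
    exact ⟨_, mem_joinN.2 ⟨fun j => g (T^[(j : ℕ)] x), fun j => hgα _, rfl⟩,
      mem_iInter.2 fun j => hg _⟩

lemma exists_isFinOpenCover_nndist_le (X : Type*) [PseudoMetricSpace X] [CompactSpace X] {ρ : ℝ≥0}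
    (hρ : 0 < ρ) : ∃ α : Finset (Set X), IsFinOpenCover α ∧
      ∀ A ∈ α, ∀ z ∈ A, ∀ z' ∈ A, nndist z z' ≤ ρ := by
  classical
  obtain ⟨t, ht⟩ := isCompact_univ.elim_finite_subcover (fun x : X => Metric.ball x (ρ / 2))
    (fun x => Metric.isOpen_ball) fun x _ => mem_iUnion.2 ⟨x, Metric.mem_ball_self (by positivity)⟩
  refine ⟨t.image fun x => Metric.ball x (ρ / 2), ⟨?_, eq_univ_of_forall fun x => ?_⟩, ?_⟩
  · exact Finset.forall_mem_image.2 fun x _ => Metric.isOpen_ball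
  · obtain ⟨y, hy, hxy⟩ := mem_iUnion₂.1 (ht (mem_univ x))
    exact ⟨_, Finset.mem_coe.2 (Finset.mem_image_of_mem _ hy), hxy⟩
  · refine Finset.forall_mem_image.2 fun x _ z hz z' hz' => ?_
    rw [← NNReal.coe_le_coe, coe_nndist]
    linarith [dist_triangle_right z z' x, Metric.mem_ball.1 hz, Metric.mem_ball.1 hz']

open Classical in
/-- The number of members of the family `β` that contain `x`. -/
def multiplicity (β : Finset (Set X)) (x : X) : ℕ := {B ∈ β | x ∈ B}.card

lemma natCard_eq_multiplicity (β : Finset (Set X)) (x : X) :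
    Nat.card {B : Set X // B ∈ β ∧ x ∈ B} = multiplicity β x := by
  classical
  rw [multiplicity, ← Nat.card_eq_finsetCard]
  exact Nat.card_congr (Equiv.subtypeEquivRight (by simp))

lemma multiplicity_le_card (β : Finset (Set X)) (x : X) : multiplicity β x ≤ β.card := by
  classical
  exact Finset.card_filter_le _ _

lemma multiplicity_le_ordCover_add_one (β : Finset (Set X)) (x : X) :
    multiplicity β x ≤ ordCover β + 1 := by
  have : multiplicity β x ≤ sSup {k | ∃ x, Nat.card {B : Set X // B ∈ β ∧ x ∈ B} = k} := by
    simp only [natCard_eq_multiplicity]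
    refine le_csSup ⟨β.card, ?_⟩ ⟨x, rfl⟩
    rintro _ ⟨y, rfl⟩
    exact multiplicity_le_card β y
  exact this.trans (by rw [ordCover]; omega)

lemma ordCover_le {β : Finset (Set X)} {m : ℕ} (h : ∀ x, multiplicity β x ≤ m + 1) :
    ordCover β ≤ m := by
  refine Nat.sub_le_of_le_add (csSup_le' ?_)
  rintro _ ⟨x, rfl⟩
  exact (natCard_eq_multiplicity β x).trans_le (h x)

lemma exists_refinement_multiplicity_le [TopologicalSpace X] (hα : IsFinOpenCover α) :
    ∃ γ : Finset (Set X), IsFinOpenCover γ ∧ (∀ B ∈ γ, ∃ A ∈ α, B ⊆ A) ∧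
      ∀ x, multiplicity γ x ≤ Dcover α + 1 := by
  obtain ⟨γ, hγ, href, hord⟩ := Nat.sInf_mem (s := {k | ∃ β : Finset (Set X), IsFinOpenCover β ∧
    (∀ B ∈ β, ∃ A ∈ α, B ⊆ A) ∧ ordCover β = k}) ⟨_, α, hα, fun B hB => ⟨B, hB, le_rfl⟩, rfl⟩
  exact ⟨γ, hγ, href, fun x => (multiplicity_le_ordCover_add_one γ x).trans_eq (by
    rw [hord, Dcover])⟩

lemma exists_Dcover_joinN_le_mul [TopologicalSpace X] {s : ℝ} (hs : mdimTop T < ENNReal.ofReal s)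
    (hα : IsFinOpenCover α) :
    ∃ s', 0 ≤ s' ∧ s' < s ∧ ∀ K : ℕ, ∃ N, K ≤ N ∧ (Dcover (joinN T α N) : ℝ) ≤ s' * N := by
  obtain ⟨s', hs'0, hs', hs's⟩ := ENNReal.lt_iff_exists_real_btwn.1 hs
  have hlim : liminf (fun n : ℕ => (Dcover (joinN T α n) : ℝ≥0∞) / (n : ℝ≥0∞)) atTop <
      ENNReal.ofReal s' := (le_iSup₂_of_le α hα le_rfl).trans_lt hs'
  refine ⟨s', hs'0, (ENNReal.ofReal_lt_ofReal_iff_of_nonneg hs'0).1 hs's, fun K => ?_⟩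
  obtain ⟨N, hKN, hN⟩ := frequently_atTop.1 (frequently_lt_of_liminf_lt (by isBoundedDefault) hlim)
    (max K 1)
  refine ⟨N, (le_max_left _ _).trans hKN, ?_⟩
  have hN1 : 1 ≤ N := (le_max_right _ _).trans hKN
  rw [ENNReal.div_lt_iff (Or.inl (by norm_cast; omega)) (Or.inl (by finiteness)),
    ← ENNReal.ofReal_natCast N, ← ENNReal.ofReal_mul hs'0, ← ENNReal.ofReal_natCast] at hN
  exact (ENNReal.ofReal_le_ofReal_iff (by positivity)).1 hN.le

end Covers

section TotalVisits

variable {X : Type*} [TopologicalSpace X] {T : X ≃ₜ X}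

/-- The number of visits of the orbit segment `x, T x, …, T ^ (n - 1) x` to the members of `β`,
counted with multiplicity. -/
def totalVisits (T : X ≃ₜ X) (β : Finset (Set X)) (n : ℕ) (x : X) : ℕ :=
  ∑ B ∈ β, countIco (fun j => (T ^ j) x ∈ B) 0 n

open Classical in
/-- The sets `γ` restricted to the base of a tower together with the sets `α` restricted to its
error set. -/
def towerFamily (γ : Finset (Set X)) (W : Set X) (α : Finset (Set X)) (V : Set X) :
    Finset (Set X) :=
  γ.image (· ∩ W) ∪ α.image (· ∩ V)

lemma sum_countIco_inter_le {γ : Finset (Set X)} {K : ℕ} (hγ : ∀ x, multiplicity γ x ≤ K)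
    (W : Set X) (n : ℕ) (x : X) :
    ∑ B ∈ γ, countIco (fun j => (T ^ j) x ∈ B ∩ W) 0 n ≤
      K * countIco (fun j => (T ^ j) x ∈ W) 0 n := by
  classical
  simp only [countIco, Finset.card_filter]
  rw [Finset.sum_comm, Finset.mul_sum]
  refine Finset.sum_le_sum fun j _ => ?_
  by_cases hW : (T ^ j) x ∈ W
  · have := hγ ((T ^ j) x)
    rw [multiplicity, Finset.card_filter] at this
    simpa only [mem_inter_iff, hW, and_true, if_true, mul_one]
  · simp only [mem_inter_iff, hW, and_false, if_false, Finset.sum_const_zero, mul_zero, le_rfl]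

lemma totalVisits_towerFamily_le {γ : Finset (Set X)} {K : ℕ} (hγ : ∀ x, multiplicity γ x ≤ K)
    (W : Set X) (α : Finset (Set X)) (V : Set X) (n : ℕ) (x : X) :
    totalVisits T (towerFamily γ W α V) n x ≤
      K * countIco (fun j => (T ^ j) x ∈ W) 0 n +
        α.card * countIco (fun j => (T ^ j) x ∈ V) 0 n := by
  classical
  have hunion : totalVisits T (towerFamily γ W α V) n x ≤
      totalVisits T (γ.image (· ∩ W)) n x + totalVisits T (α.image (· ∩ V)) n x := by
    unfold totalVisits towerFamily
    rw [← Finset.sum_union_inter]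
    exact Nat.le_add_right _ _
  refine hunion.trans (add_le_add ?_ ?_)
  · exact (Finset.sum_image_le_of_nonneg fun _ _ => Nat.zero_le _).trans
      (sum_countIco_inter_le hγ W n x)
  · exact (Finset.sum_image_le_of_nonneg fun _ _ => Nat.zero_le _).trans
      (sum_countIco_inter_le (multiplicity_le_card α) V n x)

lemma isOpen_of_mem_towerFamily {γ α : Finset (Set X)} {W V : Set X} (hγ : ∀ B ∈ γ, IsOpen B)
    (hW : IsOpen W) (hα : ∀ A ∈ α, IsOpen A) (hV : IsOpen V) :
    ∀ C ∈ towerFamily γ W α V, IsOpen C := by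
  classical
  intro C hC
  rcases Finset.mem_union.1 hC with h | h
  · obtain ⟨B, hB, rfl⟩ := Finset.mem_image.1 h
    exact (hγ B hB).inter hW
  · obtain ⟨A, hA, rfl⟩ := Finset.mem_image.1 h
    exact (hα A hA).inter hV

end TotalVisits

section Levels

variable {X : Type*} [PseudoMetricSpace X] {T : X ≃ₜ X}

/-- The set `C` has small `k`-th image under `T`. -/
def IsSmallAt (T : X ≃ₜ X) (ρ : ℝ≥0) (k : ℕ) (C : Set X) : Prop :=
  ∀ z ∈ C, ∀ z' ∈ C, nndist ((T ^ (k : ℤ)) z) ((T ^ (k : ℤ)) z') ≤ ρ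

lemma exists_mem_towerFamily {α γ : Finset (Set X)} {N : ℕ} {ρ : ℝ≥0} {W V : Set X}
    (hα : IsFinOpenCover α) (hαρ : ∀ A ∈ α, ∀ z ∈ A, ∀ z' ∈ A, nndist z z' ≤ ρ)
    (hγ : IsFinOpenCover γ) (hγα : ∀ B ∈ γ, ∃ A ∈ joinN T α N, B ⊆ A)
    (hWV : ∀ x, x ∈ V ∨ ∃ k : ℕ, k < N ∧ (T ^ (-k : ℤ)) x ∈ W) (x : X) :
    ∃ k ≤ N, ∃ C ∈ towerFamily γ W α V, (T ^ (-k : ℤ)) x ∈ C ∧ IsSmallAt T ρ k C := by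
  classical
  rcases hWV x with hx | ⟨k, hk, hx⟩
  · obtain ⟨A, hA, hxA⟩ := hα.exists_mem x
    refine ⟨0, N.zero_le, A ∩ V, Finset.mem_union_right _ (Finset.mem_image_of_mem _ hA), ?_, ?_⟩
    · simpa using ⟨hxA, hx⟩
    · intro z hz z' hz'
      simpa using hαρ A hA z hz.1 z' hz'.1
  · obtain ⟨B, hB, hxB⟩ := hγ.exists_mem ((T ^ (-k : ℤ)) x)
    refine ⟨k, hk.le, B ∩ W, Finset.mem_union_left _ (Finset.mem_image_of_mem _ hB),
      ⟨hxB, hx⟩, fun z hz z' hz' => ?_⟩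
    obtain ⟨J, hJ, hBJ⟩ := hγα B hB
    obtain ⟨f, hf, rfl⟩ := mem_joinN.1 hJ
    rw [zpow_natCast_apply, zpow_natCast_apply]
    exact hαρ _ (hf ⟨k, hk⟩) _ (mem_iInter.1 (hBJ hz.1) ⟨k, hk⟩) _
      (mem_iInter.1 (hBJ hz'.1) ⟨k, hk⟩)

variable (X) in
/-- The data of one level of the construction: a finite family of sets, the height of the tower
it comes from, the factor amplifying depths in the family, and the time over which visits to the
family are counted. -/
structure Level where
  family : Finset (Set X)
  height : ℕ
  gain : ℝ≥0
  period : ℕ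

/-- A level is adapted if its family is visited with mean multiplicity at most `s` and every orbit
passes deep inside a member of the family whose image at the present time has diameter at most
`ρ`. -/
structure Level.IsAdapted (T : X ≃ₜ X) (D : Level X) (s : ℝ) (ρ : ℝ≥0) : Prop where
  period_pos : 0 < D.period
  one_le_gain : 1 ≤ D.gain
  isOpen : ∀ B ∈ D.family, IsOpen B
  totalVisits_le : ∀ x, (totalVisits T D.family D.period x : ℝ) ≤ s * D.period
  exists_deep : ∀ x, ∃ k ≤ D.height, ∃ C ∈ D.family,
    2 ≤ D.gain * depth C ((T ^ (-k : ℤ)) x) ∧ IsSmallAt T ρ k C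

lemma Level.IsAdapted.gain_pos {D : Level X} {s : ℝ} {ρ : ℝ≥0} (hD : D.IsAdapted T s ρ) :
    0 < D.gain :=
  zero_lt_one.trans_le hD.one_le_gain

lemma exists_gain [CompactSpace X] {β : Finset (Set X)} {N : ℕ} {ρ : ℝ≥0}
    (hβ : ∀ B ∈ β, IsOpen B)
    (hcov : ∀ x, ∃ k ≤ N, ∃ C ∈ β, (T ^ (-k : ℤ)) x ∈ C ∧ IsSmallAt T ρ k C) :
    ∃ Λ : ℝ≥0, 1 ≤ Λ ∧ ∀ x, ∃ k ≤ N, ∃ C ∈ β,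
      2 ≤ Λ * depth C ((T ^ (-k : ℤ)) x) ∧ IsSmallAt T ρ k C := by
  let ι := {q : ℕ × Set X // q.1 ≤ N ∧ q.2 ∈ β ∧ IsSmallAt T ρ q.1 q.2}
  obtain ⟨_, R, hR⟩ := exists_finset_forall_one_lt_mul
    (fun q : ι => (continuous_depth q.1.2).comp (T ^ (-q.1.1 : ℤ)).continuous) fun x => by
      obtain ⟨k, hk, C, hC, hxC, hsmall⟩ := hcov x
      exact ⟨⟨(k, C), hk, hC, hsmall⟩, (depth_pos_iff (hβ C hC)).2 hxC⟩
  refine ⟨2 * R + 1, le_add_self, fun x => ?_⟩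
  obtain ⟨⟨⟨k, C⟩, hk, hC, hsmall⟩, -, hlt⟩ := hR x
  refine ⟨k, hk, C, hC, ?_, hsmall⟩
  calc (2 : ℝ≥0) = 2 * 1 := (mul_one 2).symm
    _ ≤ 2 * (R * depth C ((T ^ (-k : ℤ)) x)) := by gcongr; exact hlt.le
    _ ≤ (2 * R + 1) * depth C ((T ^ (-k : ℤ)) x) := by
        rw [← mul_assoc]; gcongr; exact le_self_add

lemma exists_tower_visits_le [CompactSpace X] (hT : MarkerProperty T) {s s' : ℝ} (hs' : s' < s)
    (hs'0 : 0 ≤ s') (m : ℕ) {N : ℕ} (hN : 2 / (s - s') < N) :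
    ∃ (W V : Set X) (n : ℕ), IsOpen W ∧ IsOpen V ∧ 0 < n ∧
      (∀ x, x ∈ V ∨ ∃ k : ℕ, k < N ∧ (T ^ (-k : ℤ)) x ∈ W) ∧
      ∀ x, (s' * N + 1) * countIco (fun j => (T ^ j) x ∈ W) 0 n +
        m * countIco (fun j => (T ^ j) x ∈ V) 0 n ≤ s * n := by
  have hgap : 0 < s - s' := sub_pos.2 hs'
  have hNpos : (0 : ℝ) < N := (by positivity : 0 < 2 / (s - s')).trans hN
  have hden : 0 < s' * N + 1 + m := by positivity
  obtain ⟨η, hη⟩ : ∃ η, η = (s - s') / 2 / (s' * N + 1 + m) := ⟨_, rfl⟩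
  obtain ⟨W, V, n, hW, hV, hn, hWV, hcountW, hcountV⟩ :=
    hT.exists_tower (N := N) (mod_cast hNpos) (η := η) (by rw [hη]; positivity)
  refine ⟨W, V, n, hW, hV, hn, hWV, fun x => ?_⟩
  have hinv : 1 / (N : ℝ) ≤ (s - s') / 2 := by
    rw [div_le_div_iff₀ hNpos two_pos]
    linarith [(div_lt_iff₀ hgap).1 hN]
  calc _ ≤ (s' * N + 1) * (n * (1 / N + η)) + m * (n * η) := by
        gcongr
        exacts [hcountW x, hcountV x]
    _ = n * (s' + 1 / N + η * (s' * N + 1 + m)) := by field_simp; ring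
    _ = n * (s' + 1 / N + (s - s') / 2) := by rw [hη, div_mul_cancel₀ _ hden.ne']
    _ ≤ s * n := by
        rw [mul_comm s]
        gcongr
        linarith

/-- Lindenstrauss' lemma: under the marker property mean dimension less than `s` is witnessed by
families of sets whose mean multiplicity along every single orbit is at most `s`. -/
lemma exists_isAdapted [CompactSpace X] (hT : MarkerProperty T) {s : ℝ}
    (hs : mdimTop T < ENNReal.ofReal s) {ρ : ℝ≥0} (hρ : 0 < ρ) :
    ∃ D : Level X, D.IsAdapted T s ρ := by
  obtain ⟨α, hα, hαρ⟩ := exists_isFinOpenCover_nndist_le X hρ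
  obtain ⟨s', hs'0, hs', hD⟩ := exists_Dcover_joinN_le_mul hs hα
  obtain ⟨K, hK⟩ := exists_nat_gt (2 / (s - s'))
  obtain ⟨N, hKN, hDN⟩ := hD K
  obtain ⟨γ, hγ, hγα, hmult⟩ :=
    exists_refinement_multiplicity_le (isFinOpenCover_joinN T.continuous hα N)
  obtain ⟨W, V, n, hW, hV, hn, hWV, hvisits⟩ :=
    exists_tower_visits_le hT hs' hs'0 α.card (hK.trans_le (mod_cast hKN))
  have hopen := isOpen_of_mem_towerFamily hγ.1 hW hα.1 hV
  obtain ⟨Λ, hΛ, hdeep⟩ := exists_gain hopen (exists_mem_towerFamily hα hαρ hγ hγα hWV)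
  refine ⟨⟨towerFamily γ W α V, N, Λ, n⟩, hn, hΛ, hopen, fun x => ?_, hdeep⟩
  have hle : (totalVisits T (towerFamily γ W α V) n x : ℝ) ≤
      (Dcover (joinN T α N) + 1) * countIco (fun j => (T ^ j) x ∈ W) 0 n +
        α.card * countIco (fun j => (T ^ j) x ∈ V) 0 n :=
    mod_cast totalVisits_towerFamily_le hmult W α V n x
  refine (hle.trans ?_).trans (hvisits x)
  gcongr

/-- A sequence of adapted levels in which the precision demanded from each level accounts for the
gains of all previous ones. -/
def IsAdaptedSequence (T : X ≃ₜ X) (D : ℕ → Level X) (s : ℕ → ℝ) : Prop :=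
  ∀ l, (D l).IsAdapted T (s l) (2⁻¹ ^ l / ∏ i ∈ Finset.range l, (D i).gain)

lemma exists_isAdaptedSequence [CompactSpace X] (hT : MarkerProperty T) (hm : mdimTop T ≠ ⊤) :
    ∃ D : ℕ → Level X, IsAdaptedSequence T D fun l => (mdimTop T).toReal + 1 / ((l : ℝ) + 1) := by
  have hlevel : ∀ (l : ℕ) (Q : ℝ≥0), ∃ D : Level X,
      0 < Q → D.IsAdapted T ((mdimTop T).toReal + 1 / ((l : ℝ) + 1)) (2⁻¹ ^ l / Q) := by
    intro l Q
    by_cases hQ : 0 < Q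
    · have hs : mdimTop T < ENNReal.ofReal ((mdimTop T).toReal + 1 / ((l : ℝ) + 1)) := by
        conv_lhs => rw [← ENNReal.ofReal_toReal hm]
        have : (0 : ℝ) < 1 / ((l : ℝ) + 1) := by positivity
        exact (ENNReal.ofReal_lt_ofReal_iff (by positivity)).2 (by linarith)
      obtain ⟨D, hD⟩ := exists_isAdapted hT hs (ρ := 2⁻¹ ^ l / Q) (by positivity)
      exact ⟨D, fun _ => hD⟩
    · exact ⟨⟨∅, 0, 0, 0⟩, fun h => absurd h hQ⟩
  choose D hD using hlevel
  let Q : ℕ → ℝ≥0 := fun l => Nat.rec 1 (fun l q => q * (D l q).gain) l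
  have hQ : ∀ l, Q l = ∏ i ∈ Finset.range l, (D i (Q i)).gain := by
    intro l
    induction l with
    | zero => rfl
    | succ l ih => rw [Finset.prod_range_succ, ← ih]
  have hQpos : ∀ l, 0 < Q l := by
    intro l
    induction l with
    | zero => exact zero_lt_one
    | succ l ih => exact mul_pos ih (hD l (Q l) ih).gain_pos
  refine ⟨fun l => D l (Q l), fun l => ?_⟩
  rw [← hQ]
  exact hD l _ (hQpos l)

end Levels

section Transfer

variable {X : Type*} [PseudoMetricSpace X] {T : X ≃ₜ X} {D : Level X} {B C : Set X} {k : ℕ}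

/-- The smallest depth in `B` of a point of `T ^ k C`. -/
def infDepth (T : X ≃ₜ X) (B C : Set X) (k : ℕ) : ℝ≥0 :=
  ⨅ z : C, depth B ((T ^ (k : ℤ)) z)

/-- Re-expresses the depth in `B` through functions `g C`, for `C` in the family of the level `D`,
evaluated along the past of `x`. It has the form of a maximum of truncations, so that it is
monotone and Lipschitz in the values of `g`. -/
def transfer (T : X ≃ₜ X) (D : Level X) (g : Set X → X → ℝ≥0) (B : Set X) (x : X) : ℝ≥0 :=
  (D.family ×ˢ Finset.range (D.height + 1)).sup
    fun p => min (infDepth T B p.1 p.2) (D.gain * g p.1 ((T ^ (-p.2 : ℤ)) x))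

lemma min_le_transfer (hC : C ∈ D.family) (hk : k ≤ D.height) (g : Set X → X → ℝ≥0) (B : Set X)
    (x : X) :
    min (infDepth T B C k) (D.gain * g C ((T ^ (-k : ℤ)) x)) ≤ transfer T D g B x :=
  Finset.le_sup (f := fun p : Set X × ℕ => min (infDepth T B p.1 p.2)
      (D.gain * g p.1 ((T ^ (-p.2 : ℤ)) x))) (b := (C, k))
    (Finset.mem_product.2 ⟨hC, Finset.mem_range.2 (Nat.lt_succ_of_le hk)⟩)

lemma transfer_le {g : Set X → X → ℝ≥0} {x : X} {c : ℝ≥0}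
    (h : ∀ C ∈ D.family, ∀ k ≤ D.height,
      min (infDepth T B C k) (D.gain * g C ((T ^ (-k : ℤ)) x)) ≤ c) :
    transfer T D g B x ≤ c :=
  Finset.sup_le fun p hp => h p.1 (Finset.mem_product.1 hp).1 p.2
    (Nat.le_of_lt_succ (Finset.mem_range.1 (Finset.mem_product.1 hp).2))

lemma transfer_le_transfer_add {g g' : Set X → X → ℝ≥0} {x y : X} {e : ℝ≥0}
    (h : ∀ C ∈ D.family, ∀ k ≤ D.height,
      g C ((T ^ (-k : ℤ)) x) ≤ g' C ((T ^ (-k : ℤ)) y) + e) :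
    transfer T D g B x ≤ transfer T D g' B y + D.gain * e := by
  refine transfer_le fun C hC k hk => ?_
  calc min (infDepth T B C k) (D.gain * g C ((T ^ (-k : ℤ)) x))
      ≤ min (infDepth T B C k + D.gain * e)
          (D.gain * g' C ((T ^ (-k : ℤ)) y) + D.gain * e) := by
        refine min_le_min le_self_add ?_
        rw [← mul_add]
        gcongr
        exact h C hC k hk
    _ = min (infDepth T B C k) (D.gain * g' C ((T ^ (-k : ℤ)) y)) + D.gain * e :=
        min_add_add_right _ _ _
    _ ≤ _ := by
        gcongr
        exact min_le_transfer hC hk g' B y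

lemma infDepth_le {z : X} (hz : z ∈ C) : infDepth T B C k ≤ depth B ((T ^ (k : ℤ)) z) :=
  ciInf_le' _ (⟨z, hz⟩ : C)

lemma transfer_depth_le (hD : ∀ C ∈ D.family, IsOpen C) (B : Set X) (x : X) :
    transfer T D depth B x ≤ depth B x := by
  refine transfer_le fun C hC k _ => ?_
  by_cases hx : depth C ((T ^ (-k : ℤ)) x) = 0
  · rw [hx, mul_zero, min_zero]
    exact zero_le
  · refine (min_le_left _ _).trans ((infDepth_le (mem_of_depth_ne_zero (hD C hC) hx)).trans_eq ?_)
    rw [zpow_apply_zpow_neg]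

lemma depth_le_transfer_add {s : ℝ} {ρ : ℝ≥0} (hD : D.IsAdapted T s ρ) (B : Set X) (x : X) :
    depth B x ≤ transfer T D depth B x + ρ := by
  obtain ⟨k, hk, C, hC, hdeep, hsmall⟩ := hD.exists_deep x
  have hx : (T ^ (-k : ℤ)) x ∈ C := mem_of_depth_ne_zero (hD.isOpen C hC) fun h => by
    rw [h, mul_zero] at hdeep
    exact absurd hdeep (by norm_num)
  have hinf : depth B x ≤ infDepth T B C k + ρ := by
    have : Nonempty C := ⟨⟨_, hx⟩⟩
    rw [← tsub_le_iff_right]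
    refine le_ciInf fun z => tsub_le_iff_right.2 ?_
    refine (depth_le_add_nndist B x ((T ^ (k : ℤ)) z)).trans ?_
    gcongr
    simpa only [zpow_apply_zpow_neg] using hsmall _ hx z z.2
  have hmin : infDepth T B C k ≤ D.gain * depth C ((T ^ (-k : ℤ)) x) :=
    ((infDepth_le hx).trans (depth_le_one _ _)).trans (one_le_two.trans hdeep)
  refine hinf.trans ?_
  gcongr
  exact (min_eq_left hmin).ge.trans (min_le_transfer hC hk depth B x)

lemma continuous_transfer {g : Set X → X → ℝ≥0} (hg : ∀ C, Continuous (g C)) (B : Set X) :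
    Continuous (transfer T D g B) :=
  Continuous.finset_sup_apply fun p _ =>
    continuous_const.min (continuous_const.mul ((hg _).comp (T ^ (-p.2 : ℤ)).continuous))

end Transfer

section Coord

variable {X : Type*} [PseudoMetricSpace X] {T : X ≃ₜ X} {D : ℕ → Level X} {s : ℕ → ℝ}

/-- The depth functions of level `k + j`, transferred `j` times down to level `k`. -/
def approxCoord (T : X ≃ₜ X) (D : ℕ → Level X) : ℕ → ℕ → Set X → X → ℝ≥0
  | 0, _ => depth
  | j + 1, k => transfer T (D (k + 1)) (approxCoord T D j (k + 1))

/-- The limit of the transferred depth functions; the coordinates of level `k` are exactly the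
transfers of the coordinates of level `k + 1`. -/
def limitCoord (T : X ≃ₜ X) (D : ℕ → Level X) (k : ℕ) (B : Set X) (x : X) : ℝ≥0 :=
  ⨅ j, approxCoord T D j k B x

/-- The inverse of the product of the gains of the levels up to `k`. -/
def invGain (D : ℕ → Level X) (k : ℕ) : ℝ≥0 :=
  (∏ i ∈ Finset.range (k + 1), (D i).gain)⁻¹

lemma continuous_approxCoord (T : X ≃ₜ X) (D : ℕ → Level X) (j k : ℕ) (B : Set X) :
    Continuous (approxCoord T D j k B) := by
  induction j generalizing k B with
  | zero => exact continuous_depth B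
  | succ j ih => exact continuous_transfer (ih (k + 1)) B

lemma antitone_approxCoord (hD : IsAdaptedSequence T D s) (k : ℕ) (B : Set X) (x : X) :
    Antitone fun j => approxCoord T D j k B x := by
  refine antitone_nat_of_succ_le fun j => ?_
  induction j generalizing k B x with
  | zero => exact transfer_depth_le (hD (k + 1)).isOpen B x
  | succ j ih =>
    refine (transfer_le_transfer_add (e := 0) fun C _ i _ => ?_).trans_eq
      (by rw [mul_zero, add_zero]; rfl)
    rw [add_zero]
    exact ih (k + 1) C _

lemma limitCoord_le_approxCoord (T : X ≃ₜ X) (D : ℕ → Level X) (j k : ℕ) (B : Set X) (x : X) :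
    limitCoord T D k B x ≤ approxCoord T D j k B x :=
  ciInf_le' _ j

lemma gain_mul_invGain_succ (hD : IsAdaptedSequence T D s) (k : ℕ) :
    (D (k + 1)).gain * invGain D (k + 1) = invGain D k := by
  rw [invGain, Finset.prod_range_succ _ (k + 1), mul_inv, mul_comm, mul_assoc,
    inv_mul_cancel₀ (hD (k + 1)).gain_pos.ne', mul_one, invGain]

lemma invGain_le (hD : IsAdaptedSequence T D s) (k : ℕ) : invGain D k ≤ (D k).gain⁻¹ := by
  refine inv_anti₀ (hD k).gain_pos ?_
  rw [Finset.prod_range_succ]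
  exact le_mul_of_one_le_left zero_le (Finset.one_le_prod' fun i _ => (hD i).one_le_gain)

lemma approxCoord_le_succ_add (hD : IsAdaptedSequence T D s) (j k : ℕ) (B : Set X) (x : X) :
    approxCoord T D j k B x ≤
      approxCoord T D (j + 1) k B x + invGain D k * 2⁻¹ ^ (k + j + 1) := by
  induction j generalizing k B x with
  | zero =>
    refine (depth_le_transfer_add (hD (k + 1)) B x).trans_eq ?_
    rw [div_eq_inv_mul]
    rfl
  | succ j ih =>
    refine (transfer_le_transfer_add fun C _ i _ => ih (k + 1) C _).trans_eq ?_
    rw [← mul_assoc, gain_mul_invGain_succ hD, show k + 1 + j + 1 = k + (j + 1) + 1 by ring]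
    rfl

/-- The errors form a geometric series; the tail is moved to the left to avoid subtraction. -/
lemma approxCoord_add_le (hD : IsAdaptedSequence T D s) (j i k : ℕ) (B : Set X) (x : X) :
    approxCoord T D j k B x + invGain D k * 2⁻¹ ^ (k + j + i) ≤
      approxCoord T D (j + i) k B x + invGain D k * 2⁻¹ ^ (k + j) := by
  induction i with
  | zero => exact le_rfl
  | succ i ih =>
    obtain ⟨δ, hδ⟩ : ∃ δ, δ = invGain D k * 2⁻¹ ^ (k + j + i + 1) := ⟨_, rfl⟩
    have hhalf : invGain D k * 2⁻¹ ^ (k + j + i) = δ + δ := by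
      rw [hδ, pow_succ, ← two_mul]
      field_simp
    have hstep := approxCoord_le_succ_add hD (j + i) k B x
    rw [show k + (j + i) + 1 = k + j + i + 1 by ring, ← hδ] at hstep
    rw [hhalf, ← add_assoc] at ih
    refine le_of_add_le_add_right (a := δ) ?_
    rw [← add_assoc (k + j), ← hδ]
    calc _ ≤ _ := ih
      _ ≤ approxCoord T D (j + (i + 1)) k B x + δ + invGain D k * 2⁻¹ ^ (k + j) := by
          gcongr
          exact hstep
      _ = _ := add_right_comm _ _ _

lemma approxCoord_le_limitCoord_add (hD : IsAdaptedSequence T D s) (j k : ℕ) (B : Set X) (x : X) :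
    approxCoord T D j k B x ≤ limitCoord T D k B x + invGain D k * 2⁻¹ ^ (k + j) := by
  rw [← tsub_le_iff_right]
  refine le_ciInf fun i => tsub_le_iff_right.2 ?_
  rcases le_total j i with h | h
  · obtain ⟨r, rfl⟩ := Nat.exists_eq_add_of_le h
    exact le_self_add.trans (approxCoord_add_le hD j r k B x)
  · exact (antitone_approxCoord hD k B x h).trans le_self_add

lemma approxCoord_le_limitCoord_add_pow (hD : IsAdaptedSequence T D s) (j k : ℕ) (B : Set X)
    (x : X) : approxCoord T D j k B x ≤ limitCoord T D k B x + 2⁻¹ ^ j := by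
  refine (approxCoord_le_limitCoord_add hD j k B x).trans ?_
  have hgain : invGain D k ≤ 1 :=
    (invGain_le hD k).trans (inv_le_one_of_one_le₀ (hD k).one_le_gain)
  have hpow : (2⁻¹ : ℝ≥0) ^ (k + j) ≤ 2⁻¹ ^ j :=
    pow_le_pow_of_le_one zero_le (inv_le_one_of_one_le₀ one_le_two) le_add_self
  gcongr
  exact (mul_le_mul' hgain hpow).trans_eq (one_mul _)

lemma tendsto_inv_two_pow : Tendsto (fun j : ℕ => (2⁻¹ : ℝ≥0) ^ j) atTop (𝓝 0) :=
  tendsto_pow_atTop_nhds_zero_of_lt_one zero_le (inv_lt_one_of_one_lt₀ one_lt_two)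

lemma continuous_limitCoord (hD : IsAdaptedSequence T D s) (k : ℕ) (B : Set X) :
    Continuous (limitCoord T D k B) := by
  have hunif : TendstoUniformly (fun j => approxCoord T D j k B) (limitCoord T D k B) atTop := by
    refine Metric.tendstoUniformly_iff.2 fun ε hε => ?_
    filter_upwards [tendsto_inv_two_pow.eventually_lt_const (Real.toNNReal_pos.2 hε)] with j hj x
    rw [← coe_nndist]
    refine lt_of_le_of_lt ?_ (Real.lt_toNNReal_iff_coe_lt.1 hj)
    exact NNReal.coe_le_coe.2 (nndist_le_iff_le_add.2
      ⟨(limitCoord_le_approxCoord T D j k B x).trans le_self_add,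
        approxCoord_le_limitCoord_add_pow hD j k B x⟩)
  exact hunif.continuous (Frequently.of_forall fun j => continuous_approxCoord T D j k B)

lemma mem_of_limitCoord_ne_zero (hD : IsAdaptedSequence T D s) {k : ℕ} {B : Set X}
    (hB : B ∈ (D k).family) {x : X} (hx : limitCoord T D k B x ≠ 0) : x ∈ B :=
  (depth_pos_iff ((hD k).isOpen B hB)).1
    ((pos_iff_ne_zero.2 hx).trans_le (limitCoord_le_approxCoord T D 0 k B x))

lemma limitCoord_le_transfer_add (hD : IsAdaptedSequence T D s) (k : ℕ) (B : Set X) (x : X)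
    (j : ℕ) :
    limitCoord T D k B x ≤
      transfer T (D (k + 1)) (limitCoord T D (k + 1)) B x + (D (k + 1)).gain * 2⁻¹ ^ j :=
  (limitCoord_le_approxCoord T D (j + 1) k B x).trans (transfer_le_transfer_add fun C _ _ _ =>
    approxCoord_le_limitCoord_add_pow hD j (k + 1) C _)

lemma limitCoord_eq_transfer (hD : IsAdaptedSequence T D s) (k : ℕ) (B : Set X) (x : X) :
    limitCoord T D k B x = transfer T (D (k + 1)) (limitCoord T D (k + 1)) B x := by
  refine le_antisymm ?_ (le_ciInf fun j => ?_)
  · have hlim := (tendsto_inv_two_pow.const_mul (D (k + 1)).gain).const_add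
      (transfer T (D (k + 1)) (limitCoord T D (k + 1)) B x)
    rw [mul_zero, add_zero] at hlim
    exact ge_of_tendsto' hlim (limitCoord_le_transfer_add hD k B x)
  · refine le_trans ?_ (antitone_approxCoord hD k B x j.le_succ)
    refine (transfer_le_transfer_add (e := 0) fun C _ _ _ => ?_).trans_eq
      (by rw [mul_zero, add_zero]; rfl)
    rw [add_zero]
    exact limitCoord_le_approxCoord T D j (k + 1) C _

lemma limitCoord_ne_zero (hD : IsAdaptedSequence T D s) {k : ℕ} {C : Set X} {x : X}
    (hdeep : 2 ≤ (D k).gain * depth C x) : limitCoord T D k C x ≠ 0 := by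
  intro hzero
  have hdepth : depth C x ≤ invGain D k * 2⁻¹ ^ (k + 0) := by
    have hle := approxCoord_le_limitCoord_add hD 0 k C x
    rwa [hzero, zero_add] at hle
  have : (D k).gain * depth C x ≤ 1 := calc
    _ ≤ (D k).gain * ((D k).gain⁻¹ * 1) := by
        gcongr
        exact hdepth.trans (mul_le_mul' (invGain_le hD k)
          (pow_le_one₀ zero_le (inv_le_one_of_one_le₀ one_le_two)))
    _ = 1 := by rw [mul_one, mul_inv_cancel₀ (hD k).gain_pos.ne']
  exact absurd (hdeep.trans this) (by norm_num)

lemma nndist_le_of_limitCoord_eq (hD : IsAdaptedSequence T D s) {k : ℕ} {x y : X}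
    (h : ∀ B ∈ (D k).family, ∀ i ≤ (D k).height,
      limitCoord T D k B ((T ^ (-i : ℤ)) x) = limitCoord T D k B ((T ^ (-i : ℤ)) y)) :
    nndist x y ≤ 2⁻¹ ^ k := by
  obtain ⟨i, hi, C, hC, hdeep, hsmall⟩ := (hD k).exists_deep x
  have hx := limitCoord_ne_zero hD hdeep
  have hxy := hsmall _ (mem_of_limitCoord_ne_zero hD hC hx) _
    (mem_of_limitCoord_ne_zero hD hC (h C hC i hi ▸ hx))
  rw [zpow_apply_zpow_neg, zpow_apply_zpow_neg] at hxy
  exact hxy.trans (div_le_self zero_le (Finset.one_le_prod' fun i _ => (hD i).one_le_gain))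

end Coord

section LevelSystem

/-- A sequence of levels with continuous coordinates subordinate to their families, such that the
coordinates of each level are Lipschitz functions of those of the next one along the past orbit,
and all coordinates along the past orbits together separate points. -/
structure LevelSystem {X : Type*} [TopologicalSpace X] (T : X ≃ₜ X) (s : ℕ → ℝ) where
  level : ℕ → Level X
  coord : ℕ → Set X → X → ℝ≥0
  period_pos : ∀ k, 0 < (level k).period
  one_le_gain : ∀ k, 1 ≤ (level k).gain
  totalVisits_le : ∀ k x,
    (totalVisits T (level k).family (level k).period x : ℝ) ≤ s k * (level k).period
  continuous_coord : ∀ k B, Continuous (coord k B)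
  mem_of_coord_ne_zero : ∀ {k}, ∀ B ∈ (level k).family, ∀ {x}, coord k B x ≠ 0 → x ∈ B
  coord_le_one : ∀ k B x, coord k B x ≤ 1
  coord_le_add : ∀ {k B x y e},
    (∀ C ∈ (level (k + 1)).family, ∀ i ≤ (level (k + 1)).height,
      coord (k + 1) C ((T ^ (-i : ℤ)) x) ≤ coord (k + 1) C ((T ^ (-i : ℤ)) y) + e) →
    coord k B x ≤ coord k B y + (level (k + 1)).gain * e
  eq_of_coord_eq : ∀ {x y},
    (∀ k, ∀ B ∈ (level k).family, ∀ i ≤ (level k).height,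
      coord k B ((T ^ (-i : ℤ)) x) = coord k B ((T ^ (-i : ℤ)) y)) → x = y

/-- The level system given by the limit coordinates of an adapted sequence of levels. -/
def IsAdaptedSequence.levelSystem {X : Type*} [MetricSpace X] {T : X ≃ₜ X} {D : ℕ → Level X}
    {s : ℕ → ℝ} (hD : IsAdaptedSequence T D s) : LevelSystem T s where
  level := D
  coord := limitCoord T D
  period_pos k := (hD k).period_pos
  one_le_gain k := (hD k).one_le_gain
  totalVisits_le k := (hD k).totalVisits_le
  continuous_coord := continuous_limitCoord hD
  mem_of_coord_ne_zero B hB x hx := mem_of_limitCoord_ne_zero hD hB hx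
  coord_le_one k B x := (limitCoord_le_approxCoord T D 0 k B x).trans (depth_le_one B x)
  coord_le_add h := by
    rw [limitCoord_eq_transfer hD, limitCoord_eq_transfer hD]
    exact transfer_le_transfer_add h
  eq_of_coord_eq h := nndist_eq_zero.1 <| le_zero_iff.1 <|
    ge_of_tendsto' tendsto_inv_two_pow fun k => nndist_le_of_limitCoord_eq hD (h k)

end LevelSystem

section PartitionEntropy

variable {X : Type*} [MeasurableSpace X] {P : Finset (Set X)}

lemma IsFinPartition.pairwise_disjoint_coe (hP : IsFinPartition P) :
    Pairwise (Function.onFun Disjoint ((↑) : P → Set X)) :=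
  fun A B hAB => hP.2.1 A A.2 B B.2 (Subtype.coe_ne_coe.2 hAB)

lemma IsFinPartition.iUnion_coe (hP : IsFinPartition P) : ⋃ A : P, (A : Set X) = univ := by
  rw [← hP.2.2, sUnion_eq_iUnion]
  rfl

variable {μ : Measure X} [IsProbabilityMeasure μ]

lemma IsFinPartition.sum_measureReal (hP : IsFinPartition P) : ∑ A ∈ P, μ.real A = 1 := by
  have hcover : ⋃ A ∈ P, A = univ := by
    rw [← hP.2.2, sUnion_eq_biUnion]
    rfl
  rw [← measureReal_biUnion_finset (f := fun A : Set X => A)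
    (fun A hA B hB hAB => hP.2.1 A hA B hB hAB) hP.1, hcover, probReal_univ]

lemma entP_eq (μ : Measure X) [IsProbabilityMeasure μ] (P : Finset (Set X)) :
    entP μ P = ENNReal.ofReal (∑ A ∈ P, Real.negMulLog (μ.real A)) := by
  rw [ENNReal.ofReal_sum_of_nonneg fun A _ =>
    Real.negMulLog_nonneg measureReal_nonneg measureReal_le_one]
  simp only [entP, Real.negMulLog, neg_mul, Measure.real]

lemma sum_negMulLog_le_log_card {ι : Type*} {s : Finset ι} {p : ι → ℝ} (hp : ∀ i ∈ s, 0 ≤ p i)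
    (hsum : ∑ i ∈ s, p i = 1) : ∑ i ∈ s, Real.negMulLog (p i) ≤ Real.log #s := by
  have hcard : 0 < (#s : ℝ) := by
    rcases s.eq_empty_or_nonempty with rfl | hs
    · simp at hsum
    · exact mod_cast hs.card_pos
  have hjensen := Real.concaveOn_negMulLog.le_map_sum (t := s) (w := fun _ => (#s : ℝ)⁻¹)
    (p := p) (fun _ _ => by positivity) (by simp [hcard.ne']) hp
  simp only [smul_eq_mul, ← Finset.mul_sum, hsum, mul_one] at hjensen
  rw [Real.negMulLog, Real.log_inv, neg_mul_neg] at hjensen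
  exact le_of_mul_le_mul_left hjensen (by positivity)

open Classical in
lemma entP_le_log (hP : IsFinPartition P) {K : ℕ} (hK : #{A ∈ P | A.Nonempty} ≤ K) :
    entP μ P ≤ ENNReal.ofReal (Real.log K) := by
  have hfilter : ∀ f : Set X → ℝ, f ∅ = 0 → ∑ A ∈ P with A.Nonempty, f A = ∑ A ∈ P, f A :=
    fun f hf => Finset.sum_filter_of_ne fun A _ hA => nonempty_iff_ne_empty.2 fun h =>
      hA (h ▸ hf)
  have hsum : ∑ A ∈ P with A.Nonempty, μ.real A = 1 := by
    rw [hfilter _ measureReal_empty, hP.sum_measureReal]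
  have hpos : 0 < #{A ∈ P | A.Nonempty} :=
    Finset.card_pos.2 (Finset.nonempty_of_sum_ne_zero (hsum.trans_ne one_ne_zero))
  rw [entP_eq, ← hfilter _ (by simp)]
  gcongr
  exact (sum_negMulLog_le_log_card (fun _ _ => measureReal_nonneg) hsum).trans
    (Real.log_le_log (mod_cast hpos) (mod_cast hK))

lemma isFinPartition_joinN {T : X → X} (hT : Measurable T) (hP : IsFinPartition P) (n : ℕ) :
    IsFinPartition (joinN T P n) := by
  refine ⟨fun A hA => ?_, fun A hA B hB hAB => ?_, eq_univ_of_forall fun x => ?_⟩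
  · obtain ⟨f, hf, rfl⟩ := mem_joinN.1 hA
    exact MeasurableSet.iInter fun j => (hT.iterate _) (hP.1 _ (hf j))
  · obtain ⟨f, hf, rfl⟩ := mem_joinN.1 hA
    obtain ⟨g, hg, rfl⟩ := mem_joinN.1 hB
    obtain ⟨j, hj⟩ : ∃ j, f j ≠ g j := by
      by_contra! h
      exact hAB (by simp only [h])
    exact ((hP.2.1 _ (hf j) _ (hg j) hj).preimage _).mono (iInter_subset _ j) (iInter_subset _ j)
  · have hcover : ∀ y, ∃ A ∈ P, y ∈ A := fun y => by
      simpa only [mem_sUnion, Finset.mem_coe] using hP.2.2.ge (mem_univ y)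
    choose A hA hmem using hcover
    exact ⟨_, mem_joinN.2 ⟨fun j => A (T^[j] x), fun j => hA _, rfl⟩,
      mem_iInter.2 fun j => hmem _⟩

end PartitionEntropy

section FiberPartition

variable {X ι : Type*} [Fintype ι] {c : X → ι} {A : Set X}

open Classical in
/-- The partition of `X` into the fibres of a map to a finite type. -/
def fiberPartition (c : X → ι) : Finset (Set X) :=
  Finset.univ.image fun a => c ⁻¹' {a}

lemma mem_fiberPartition : A ∈ fiberPartition c ↔ ∃ a, c ⁻¹' {a} = A := by
  simp [fiberPartition]

lemma isFinPartition_fiberPartition [MeasurableSpace X] (hc : ∀ a, MeasurableSet (c ⁻¹' {a})) :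
    IsFinPartition (fiberPartition c) := by
  refine ⟨fun A hA => ?_, fun A hA B hB hAB => ?_, eq_univ_of_forall fun x => ?_⟩
  · obtain ⟨a, rfl⟩ := mem_fiberPartition.1 hA
    exact hc a
  · obtain ⟨a, rfl⟩ := mem_fiberPartition.1 hA
    obtain ⟨b, rfl⟩ := mem_fiberPartition.1 hB
    exact (disjoint_singleton.2 fun h => hAB (by rw [h])).preimage c
  · exact ⟨c ⁻¹' {c x}, mem_fiberPartition.2 ⟨_, rfl⟩, rfl⟩

lemma eq_of_mem_joinN_fiberPartition {T : X → X} {n : ℕ} {x : X}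
    (hA : A ∈ joinN T (fiberPartition c) n) (hx : x ∈ A) :
    A = {y | ∀ j < n, c (T^[j] y) = c (T^[j] x)} := by
  obtain ⟨f, hf, rfl⟩ := mem_joinN.1 hA
  choose a ha using fun j => mem_fiberPartition.1 (hf j)
  obtain rfl : (fun j => c ⁻¹' {a j}) = f := funext ha
  ext y
  simp only [mem_iInter, mem_preimage, mem_singleton_iff] at hx ⊢
  simp only [← hx]
  exact ⟨fun h j hj => h ⟨j, hj⟩, fun h j => h j j.2⟩

open Classical in
lemma card_joinN_fiberPartition_le {ν : Type*} {T : X → X} {n : ℕ} {name : X → ν} {S : Finset ν}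
    (hS : ∀ x, name x ∈ S)
    (hname : ∀ x y, name x = name y → ∀ j < n, c (T^[j] x) = c (T^[j] y)) :
    #{A ∈ joinN T (fiberPartition c) n | A.Nonempty} ≤ #S := by
  refine Finset.card_le_card_of_forall_subsingleton (fun A b => ∃ x ∈ A, name x = b)
    (fun A hA => ?_) ?_
  · obtain ⟨x, hx⟩ := (Finset.mem_filter.1 hA).2
    exact ⟨name x, hS x, x, hx, rfl⟩
  · rintro b _ A ⟨hA, x, hx, hxb⟩ B ⟨hB, y, hy, hyb⟩
    rw [eq_of_mem_joinN_fiberPartition (Finset.mem_filter.1 hA).1 hx,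
      eq_of_mem_joinN_fiberPartition (Finset.mem_filter.1 hB).1 hy]
    ext z
    exact forall₂_congr fun j hj => by rw [hname x y (hxb.trans hyb.symm) j hj]

end FiberPartition

lemma card_filter_card_support_le (κ : Type*) [Fintype κ] [DecidableEq κ] {Q : ℕ} (hQ : 1 ≤ Q)
    (K : ℕ) :
    #{A : κ → Fin (Q + 1) | #{i | A i ≠ 0} ≤ K} ≤ 2 ^ Fintype.card κ * Q ^ K := by
  let supported : Finset κ → Finset (κ → Fin (Q + 1)) := fun s =>
    Fintype.piFinset fun i => if i ∈ s then Finset.univ.erase 0 else {0}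
  have hcard : ∀ s : Finset κ, #(supported s) = Q ^ #s := fun s => by
    simp only [supported, Fintype.card_piFinset, apply_ite Finset.card, Finset.card_singleton,
      Finset.card_erase_of_mem (Finset.mem_univ _), Finset.card_univ, Fintype.card_fin,
      Nat.add_sub_cancel, Finset.prod_ite_mem, Finset.univ_inter, Finset.prod_const]
  have hcover : ({A | #{i | A i ≠ 0} ≤ K} : Finset (κ → Fin (Q + 1))) ⊆
      ({s | #s ≤ K} : Finset (Finset κ)).biUnion supported := fun A hA => by
    refine Finset.mem_biUnion.2 ⟨({i | A i ≠ 0} : Finset κ), by simpa using hA,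
      Fintype.mem_piFinset.2 fun i => ?_⟩
    by_cases h : A i = 0 <;> simp [h]
  calc _ ≤ _ := Finset.card_le_card hcover
    _ ≤ _ * Q ^ K := Finset.card_biUnion_le_card_mul _ _ _ fun s hs =>
        (hcard s).trans_le (Nat.pow_le_pow_right hQ (Finset.mem_filter.1 hs).2)
    _ ≤ 2 ^ Fintype.card κ * Q ^ K := by
        rw [← Fintype.card_finset]
        gcongr
        exact Finset.card_le_univ _

lemma liminf_div_le_of_frequently_le {u : ℕ → ℝ≥0∞} {v C : ℝ}
    (h : ∃ᶠ n in atTop, u n ≤ ENNReal.ofReal (v * n + C)) :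
    liminf (fun n => u n / n) atTop ≤ ENNReal.ofReal v := by
  refine le_of_forall_gt_imp_ge_of_dense fun b hb => ?_
  have hlim : Tendsto (fun n : ℕ => ENNReal.ofReal (v + C / n)) atTop (𝓝 (ENNReal.ofReal v)) := by
    refine ENNReal.tendsto_ofReal ?_
    simpa using (tendsto_const_div_atTop_nhds_zero_nat C).const_add v
  have hfreq : ∃ᶠ n : ℕ in atTop, u n / n ≤ b := by
    refine (((hlim.eventually_lt_const hb).and (eventually_gt_atTop 0)).and_frequently h).mono
      fun n ⟨⟨hlt, hn⟩, hle⟩ => le_trans ?_ hlt.le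
    have hn' : (0 : ℝ) < n := mod_cast hn
    rw [← ENNReal.ofReal_natCast, show v + C / n = (v * n + C) / n by field_simp,
      ENNReal.ofReal_div_of_pos hn']
    gcongr
  exact liminf_le_of_frequently_le' hfreq

section WindowLabel

variable {X : Type*} [TopologicalSpace X] {T : X ≃ₜ X} {β : Finset (Set X)} {Q : ℕ}
  {q : Set X → X → Fin (Q + 1)}

/-- The values along the orbit segment `T ^ (-I) x, …, T ^ (n - 1 - I) x` of the functions `q B`
with `B ∈ β`. -/
def windowLabel (T : X ≃ₜ X) (β : Finset (Set X)) (q : Set X → X → Fin (Q + 1)) (I n : ℕ) (x : X)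
    (p : β × Fin n) : Fin (Q + 1) :=
  q p.1 ((T ^ ((p.2 : ℤ) - I)) x)

lemma totalVisits_mul_le {n : ℕ} {s : ℝ} (h : ∀ x, (totalVisits T β n x : ℝ) ≤ s * n) (r : ℕ)
    (x : X) : (totalVisits T β (r * n) x : ℝ) ≤ s * (r * n : ℕ) := by
  induction r generalizing x with
  | zero => simp [totalVisits, countIco]
  | succ r ih =>
    have hend : (((r + 1) * n : ℕ) : ℤ) = (r * n : ℕ) + (n : ℤ) := by push_cast; ring
    have hsplit : totalVisits T β ((r + 1) * n) x =
        totalVisits T β n x + totalVisits T β (r * n) ((T ^ (n : ℤ)) x) := by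
      rw [totalVisits, totalVisits, totalVisits, ← Finset.sum_add_distrib]
      refine Finset.sum_congr rfl fun B _ => ?_
      rw [countIco_add (t := (n : ℤ)) (by omega) (by omega), hend]
      congr 1
      have hshift := countIco_comp_add (fun j => (T ^ j) x ∈ B) 0 (r * n : ℕ) n
      simp only [zpow_add_apply, zero_add] at hshift
      exact hshift.symm
    rw [hsplit]
    push_cast at ih ⊢
    linarith [h x, ih ((T ^ (n : ℤ)) x)]

lemma sum_countIco_neg_le (T : X ≃ₜ X) (β : Finset (Set X)) (I n : ℕ) (x : X) :
    ∑ B ∈ β, countIco (fun j => (T ^ j) x ∈ B) (-I) n ≤ #β * I + totalVisits T β n x := by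
  rw [totalVisits, ← smul_eq_mul, ← Finset.sum_const, ← Finset.sum_add_distrib]
  refine Finset.sum_le_sum fun B _ => ?_
  rw [countIco_add (t := 0) (by omega) (by omega)]
  gcongr
  classical exact (Finset.card_filter_le _ _).trans (by simp)

lemma card_support_windowLabel_le (hq : ∀ B ∈ β, ∀ x, q B x ≠ 0 → x ∈ B) (I n : ℕ) (x : X) :
    #{p | windowLabel T β q I (I + n) x p ≠ 0} ≤
      ∑ B ∈ β, countIco (fun j => (T ^ j) x ∈ B) (-I) n := by
  classical
  refine le_trans (Finset.card_le_card_of_injOn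
    (t := β.sigma fun B => {j ∈ Finset.Ico (-I : ℤ) n | (T ^ j) x ∈ B})
    (fun p : β × Fin (I + n) => ⟨(p.1 : Set X), (p.2 : ℤ) - I⟩) (fun p hp => ?_) ?_)
    (Finset.card_sigma _ _).le
  · simp only [Finset.coe_sigma, mem_sigma_iff, Finset.mem_coe, Finset.mem_filter,
      Finset.mem_Ico]
    exact ⟨p.1.2, by omega, hq _ p.1.2 _ (Finset.mem_filter.1 hp).2⟩
  · rintro ⟨B, i⟩ _ ⟨C, j⟩ _ h
    simp only [Sigma.mk.injEq, heq_eq_eq, sub_left_inj, Nat.cast_inj] at h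
    exact Prod.ext (Subtype.ext h.1) (Fin.ext h.2)

lemma windowLabel_iterate_eq {I n : ℕ} {x y : X}
    (hxy : windowLabel T β q I (I + n) x = windowLabel T β q I (I + n) y) {j : ℕ} (hj : j < n) :
    windowLabel T β q I (I + 1) (T^[j] x) = windowLabel T β q I (I + 1) (T^[j] y) := by
  funext p
  have h := congrFun hxy (p.1, ⟨j + p.2, by omega⟩)
  simp only [windowLabel, Nat.cast_add] at h ⊢
  rw [← zpow_natCast_apply, ← zpow_natCast_apply, ← zpow_add_apply, ← zpow_add_apply]
  rwa [show (p.2 : ℤ) - I + j = j + p.2 - I by ring]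

variable [MeasurableSpace X] [BorelSpace X]

lemma measurable_windowLabel (hq : ∀ B, Measurable (q B)) (I n : ℕ) :
    Measurable (windowLabel T β q I n) :=
  measurable_pi_lambda _ fun _ => (hq _).comp (T ^ (_ : ℤ)).continuous.measurable

lemma isFinPartition_windowLabel (hq : ∀ B, Measurable (q B)) (I n : ℕ) :
    IsFinPartition (fiberPartition (windowLabel T β q I n)) :=
  isFinPartition_fiberPartition fun a => measurable_windowLabel hq I n (measurableSet_singleton a)

variable {μ : Measure X} [IsProbabilityMeasure μ]

lemma entP_joinN_windowLabel_le (hQ : 1 ≤ Q) (hqm : ∀ B, Measurable (q B))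
    (hq : ∀ B ∈ β, ∀ x, q B x ≠ 0 → x ∈ B) {I n K : ℕ} (hK : ∀ x, totalVisits T β n x ≤ K) :
    entP μ (joinN T (fiberPartition (windowLabel T β q I (I + 1))) n) ≤
      ENNReal.ofReal (#β * (I + n) * Real.log 2 + (#β * I + K) * Real.log Q) := by
  classical
  have hcard : #{A ∈ joinN T (fiberPartition (windowLabel T β q I (I + 1))) n | A.Nonempty} ≤
      2 ^ (#β * (I + n)) * Q ^ (#β * I + K) := by
    refine ((card_joinN_fiberPartition_le (name := windowLabel T β q I (I + n)) (fun x => ?_)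
      fun x y hxy j hj => windowLabel_iterate_eq hxy hj).trans
        (card_filter_card_support_le (β × Fin (I + n)) hQ (#β * I + K))).trans_eq (by simp)
    refine Finset.mem_filter.2 ⟨Finset.mem_univ _, (card_support_windowLabel_le hq I n x).trans ?_⟩
    exact (sum_countIco_neg_le T β I n x).trans (Nat.add_le_add_left (hK x) _)
  refine (entP_le_log (isFinPartition_joinN T.continuous.measurable
    (isFinPartition_windowLabel hqm I (I + 1)) n) hcard).trans_eq (congrArg ENNReal.ofReal ?_)
  push_cast
  rw [Real.log_mul (by positivity) (by positivity), Real.log_pow, Real.log_pow]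
  push_cast
  ring

lemma entRate_windowLabel_le (hQ : 1 ≤ Q) (hqm : ∀ B, Measurable (q B))
    (hq : ∀ B ∈ β, ∀ x, q B x ≠ 0 → x ∈ B) {n : ℕ} (hn : 0 < n) {s : ℝ} (hs : 0 ≤ s)
    (h : ∀ x, (totalVisits T β n x : ℝ) ≤ s * n) (I : ℕ) :
    entRate T μ (fiberPartition (windowLabel T β q I (I + 1))) ≤
      ENNReal.ofReal (#β * Real.log 2 + s * Real.log Q) := by
  refine liminf_div_le_of_frequently_le (C := #β * I * (Real.log 2 + Real.log Q))
    (frequently_atTop.2 fun a => ⟨a * n, Nat.le_mul_of_pos_right a hn, ?_⟩)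
  refine (entP_joinN_windowLabel_le hQ hqm hq fun x =>
    Nat.le_floor (totalVisits_mul_le h a x)).trans (ENNReal.ofReal_le_ofReal ?_)
  have hfloor : (⌊s * (a * n : ℕ)⌋₊ : ℝ) * Real.log Q ≤ s * (a * n : ℕ) * Real.log Q := by
    gcongr
    exact Nat.floor_le (by positivity)
  push_cast at hfloor ⊢
  linarith

end WindowLabel

section CompatibleMetric

lemma topologicalSpace_eq_of_le {X : Type*} {t t' : TopologicalSpace X} (hc : @CompactSpace X t)
    (h2 : @T2Space X t') (h : t ≤ t') : t' = t := by
  have hid := @Continuous.isClosedEmbedding X X t t' hc h2 id (continuous_id_iff_le.2 h)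
    Function.injective_id
  exact ((@Topology.IsInducing.eq_induced X X t t' id
    (@Topology.IsClosedEmbedding.isInducing X X id t t' hid)).trans induced_id).symm

/-- The metric `⨆ k, E k x y` of a bounded family of pseudometrics separating points. -/
abbrev iSupMetric {X : Type*} {E : ℕ → X → X → ℝ≥0}
    (hbdd : ∀ x y, BddAbove (range fun k => E k x y)) (hself : ∀ k x, E k x x = 0)
    (hcomm : ∀ k x y, E k x y = E k y x) (htri : ∀ k x y z, E k x z ≤ E k x y + E k y z)
    (hsep : ∀ x y, (∀ k, E k x y = 0) → x = y) : MetricSpace X where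
  dist x y := (⨆ k, E k x y : ℝ≥0)
  dist_self x := by simp [hself]
  dist_comm x y := by simp only [hcomm]
  dist_triangle x y z := by
    rw [← NNReal.coe_add, NNReal.coe_le_coe]
    exact ciSup_le fun k => (htri k x y z).trans
      (add_le_add (le_ciSup (hbdd x y) k) (le_ciSup (hbdd y z) k))
  eq_of_dist_eq_zero {x y} h := hsep x y fun k =>
    le_zero_iff.1 ((le_ciSup (hbdd x y) k).trans_eq (NNReal.coe_eq_zero.1 h))

lemma exists_metricSpace_dist_eq_iSup {X : Type*} [tX : TopologicalSpace X] [CompactSpace X]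
    {E : ℕ → X → X → ℝ≥0} {c : ℕ → ℝ≥0} (hc : Tendsto c atTop (𝓝 0))
    (hle : ∀ k x y, E k x y ≤ c k) (hself : ∀ k x, E k x x = 0)
    (hcomm : ∀ k x y, E k x y = E k y x) (htri : ∀ k x y z, E k x z ≤ E k x y + E k y z)
    (hcont : ∀ k y, Continuous fun x => E k x y) (hsep : ∀ x y, (∀ k, E k x y = 0) → x = y) :
    ∃ m : MetricSpace X, m.toPseudoMetricSpace.toUniformSpace.toTopologicalSpace = tX ∧
      ∀ x y, m.dist x y = (⨆ k, E k x y : ℝ≥0) := by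
  have hbdd : ∀ x y, BddAbove (range fun k => E k x y) := fun x y =>
    hc.bddAbove_range.range_mono _ fun k => hle k x y
  let m : MetricSpace X := iSupMetric hbdd hself hcomm htri hsep
  refine ⟨m, topologicalSpace_eq_of_le ‹_› inferInstance (le_of_nhds_le_nhds fun x => ?_),
    fun _ _ => rfl⟩
  rw [(@Metric.nhds_basis_ball X m.toPseudoMetricSpace x).ge_iff]
  intro ε hε
  have hδ : 0 < (ε / 2).toNNReal := Real.toNNReal_pos.2 (half_pos hε)
  obtain ⟨K, hK⟩ := eventually_atTop.1 (hc.eventually_lt_const hδ)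
  have hfirst : ∀ᶠ y in 𝓝 x, ∀ k ∈ Finset.range K, E k y x < (ε / 2).toNNReal :=
    (Finset.range K).eventually_all.2 fun k _ =>
      (hcont k x).continuousAt.eventually_lt_const ((hself k x).trans_lt hδ)
  filter_upwards [hfirst] with y hy
  change ((⨆ k, E k y x : ℝ≥0) : ℝ) < ε
  refine (NNReal.coe_le_coe.2 (ciSup_le (c := (ε / 2).toNNReal) fun k => ?_)).trans_lt
    (by rw [Real.coe_toNNReal _ (half_pos hε).le]; exact half_lt_self hε)
  rcases lt_or_ge k K with hk | hk
  · exact (hy k (Finset.mem_range.2 hk)).le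
  · exact (hle k y x).trans (hK k hk).le

end CompatibleMetric

section Quantize

/-- The rounding of `a ∈ [0, 1]` to a multiple of `1 / Q`, as the numerator of that multiple. -/
def quantize (Q : ℕ) (a : ℝ≥0) : Fin (Q + 1) := ⟨min ⌈Q * a⌉₊ Q, by omega⟩

lemma quantize_zero (Q : ℕ) : quantize Q 0 = 0 := by simp [quantize]

lemma measurable_quantize (Q : ℕ) : Measurable (quantize Q) :=
  (Measurable.of_discrete (f := fun n : ℕ => (⟨min n Q, by omega⟩ : Fin (Q + 1)))).comp
    (Nat.measurable_ceil.comp (measurable_const_mul (Q : ℝ≥0)))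

lemma le_add_inv_of_quantize_eq {Q : ℕ} (hQ : 0 < Q) {a b : ℝ≥0} (ha : a ≤ 1) (hb : b ≤ 1)
    (h : quantize Q a = quantize Q b) : a ≤ b + (Q : ℝ≥0)⁻¹ := by
  have hceil : ∀ {r : ℝ≥0}, r ≤ 1 → min ⌈Q * r⌉₊ Q = ⌈Q * r⌉₊ := fun hr =>
    min_eq_left (Nat.ceil_le.2 (mul_le_of_le_one_right' hr))
  have hab : ⌈Q * a⌉₊ = ⌈Q * b⌉₊ := by
    simpa only [quantize, Fin.mk.injEq, hceil ha, hceil hb] using h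
  have hmul : (Q : ℝ≥0) * a ≤ Q * b + 1 := (Nat.le_ceil _).trans
    (hab ▸ (Nat.ceil_lt_add_one zero_le).le)
  have hQ' : (Q : ℝ≥0) ≠ 0 := mod_cast hQ.ne'
  calc a = (Q : ℝ≥0)⁻¹ * (Q * a) := by rw [inv_mul_cancel_left₀ hQ']
    _ ≤ (Q : ℝ≥0)⁻¹ * (Q * b + 1) := by gcongr
    _ = b + (Q : ℝ≥0)⁻¹ := by rw [mul_add, inv_mul_cancel_left₀ hQ', mul_one]

lemma nndist_le_inv_of_quantize_eq {Q : ℕ} (hQ : 0 < Q) {a b : ℝ≥0} (ha : a ≤ 1) (hb : b ≤ 1)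
    (h : quantize Q a = quantize Q b) : nndist a b ≤ (Q : ℝ≥0)⁻¹ :=
  nndist_le_iff_le_add.2
    ⟨le_add_inv_of_quantize_eq hQ ha hb h, le_add_inv_of_quantize_eq hQ hb ha h.symm⟩

end Quantize

namespace LevelSystem

variable {X : Type*} [TopologicalSpace X] {T : X ≃ₜ X} {s : ℕ → ℝ} (S : LevelSystem T s)

/-- The largest difference between the coordinates of level `k` along the orbit segments
`T ^ (-I) x, …, x` and `T ^ (-I) y, …, y`. -/
def pastDist (k I : ℕ) (x y : X) : ℝ≥0 :=
  ((S.level k).family ×ˢ Finset.range (I + 1)).sup fun p =>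
    nndist (S.coord k p.1 ((T ^ (-p.2 : ℤ)) x)) (S.coord k p.1 ((T ^ (-p.2 : ℤ)) y))

variable {S} in
lemma pastDist_le_iff {k I : ℕ} {x y : X} {e : ℝ≥0} : S.pastDist k I x y ≤ e ↔
    ∀ B ∈ (S.level k).family, ∀ i ≤ I,
      nndist (S.coord k B ((T ^ (-i : ℤ)) x)) (S.coord k B ((T ^ (-i : ℤ)) y)) ≤ e := by
  simp only [pastDist, Finset.sup_le_iff, Finset.mem_product, Finset.mem_range,
    Nat.lt_succ_iff, Prod.forall, and_imp]
  exact ⟨fun h B hB i hi => h B i hB hi, fun h B i hB hi => h B hB i hi⟩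

lemma nndist_coord_le_pastDist {k I i : ℕ} {B : Set X} (hB : B ∈ (S.level k).family) (hi : i ≤ I)
    (x y : X) : nndist (S.coord k B ((T ^ (-i : ℤ)) x)) (S.coord k B ((T ^ (-i : ℤ)) y)) ≤
      S.pastDist k I x y :=
  pastDist_le_iff.1 le_rfl B hB i hi

lemma pastDist_self (k I : ℕ) (x : X) : S.pastDist k I x x = 0 := by simp [pastDist]

lemma pastDist_comm (k I : ℕ) (x y : X) : S.pastDist k I x y = S.pastDist k I y x := by
  simp only [pastDist, nndist_comm]

lemma pastDist_triangle (k I : ℕ) (x y z : X) :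
    S.pastDist k I x z ≤ S.pastDist k I x y + S.pastDist k I y z :=
  pastDist_le_iff.2 fun _ hB _ hi => (nndist_triangle _ _ _).trans
    (add_le_add (S.nndist_coord_le_pastDist hB hi x y) (S.nndist_coord_le_pastDist hB hi y z))

lemma pastDist_le_one (k I : ℕ) (x y : X) : S.pastDist k I x y ≤ 1 :=
  pastDist_le_iff.2 fun _ _ _ _ => nndist_le_iff_le_add.2
    ⟨(S.coord_le_one _ _ _).trans le_add_self, (S.coord_le_one _ _ _).trans le_add_self⟩

lemma pastDist_mono (k : ℕ) {I J : ℕ} (hIJ : I ≤ J) (x y : X) :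
    S.pastDist k I x y ≤ S.pastDist k J x y :=
  pastDist_le_iff.2 fun _ hB _ hi => S.nndist_coord_le_pastDist hB (hi.trans hIJ) x y

lemma continuous_pastDist (k I : ℕ) (y : X) : Continuous fun x => S.pastDist k I x y :=
  Continuous.finset_sup_apply fun _ _ =>
    ((S.continuous_coord _ _).comp (T ^ (_ : ℤ)).continuous).nndist continuous_const

lemma eq_of_pastDist_eq_zero {x y : X}
    (h : ∀ k, S.pastDist k (S.level k).height x y = 0) : x = y :=
  S.eq_of_coord_eq fun k _ hB _ hi =>
    nndist_eq_zero.1 (le_zero_iff.1 (pastDist_le_iff.1 (h k).le _ hB _ hi))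

lemma pastDist_le_gain_mul (k I : ℕ) (x y : X) :
    S.pastDist k I x y ≤
      (S.level (k + 1)).gain * S.pastDist (k + 1) (I + (S.level (k + 1)).height) x y := by
  refine pastDist_le_iff.2 fun B _ i hi => ?_
  have hnext : ∀ C ∈ (S.level (k + 1)).family, ∀ j ≤ (S.level (k + 1)).height,
      nndist (S.coord (k + 1) C ((T ^ (-j : ℤ)) ((T ^ (-i : ℤ)) x)))
        (S.coord (k + 1) C ((T ^ (-j : ℤ)) ((T ^ (-i : ℤ)) y))) ≤
          S.pastDist (k + 1) (I + (S.level (k + 1)).height) x y := fun C hC j hj => by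
    have h := S.nndist_coord_le_pastDist hC (add_le_add hi hj) x y
    rwa [Nat.cast_add, neg_add_rev, zpow_add_apply, zpow_add_apply] at h
  exact nndist_le_iff_le_add.2
    ⟨S.coord_le_add fun C hC j hj => (nndist_le_iff_le_add.1 (hnext C hC j hj)).1,
      S.coord_le_add fun C hC j hj => (nndist_le_iff_le_add.1 (hnext C hC j hj)).2⟩

/-- The sum of the heights of the levels `0, …, l`. -/
def totalHeight (l : ℕ) : ℕ := ∑ i ∈ Finset.range (l + 1), (S.level i).height

/-- The product of the gains of the levels `0, …, l`. -/
def totalGain (l : ℕ) : ℝ≥0 := ∏ i ∈ Finset.range (l + 1), (S.level i).gain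

lemma one_le_totalGain (l : ℕ) : 1 ≤ S.totalGain l :=
  Finset.one_le_prod' fun i _ => S.one_le_gain i

lemma pastDist_le_totalGain_mul {k l : ℕ} (hkl : k ≤ l) (x y : X) :
    S.pastDist k (S.level k).height x y ≤
      S.totalGain l * S.pastDist l (S.totalHeight l) x y := by
  induction l, hkl using Nat.le_induction with
  | base =>
    exact (S.pastDist_mono k (Finset.single_le_sum (f := fun i => (S.level i).height)
      (fun _ _ => zero_le) (Finset.self_mem_range_succ k)) x y).trans
        (le_mul_of_one_le_left zero_le (S.one_le_totalGain k))
  | succ l _ ih =>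
    rw [totalGain, totalHeight, Finset.prod_range_succ, Finset.sum_range_succ, mul_assoc]
    exact ih.trans (mul_le_mul_right (S.pastDist_le_gain_mul l _ x y) _)

/-- The entropy, per unit of time and up to a multiple of `log (1 / ε)`, of a partition by the
coordinates of level `l` on which the pseudodistances of the levels `0, …, l` are at most `ε`. -/
def cost (l : ℕ) : ℝ := #(S.level l).family * Real.log 2 + s l * Real.log (2 * S.totalGain l)

variable {l : ℕ} {ε : ℝ} [MeasurableSpace X] [BorelSpace X]

lemma exists_isFinPartition_entRate_le (hs : 0 ≤ s l) (hε : 0 < ε) (hε1 : ε ≤ 1) :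
    ∃ P : Finset (Set X), IsFinPartition P ∧
      (∀ A ∈ P, ∀ x ∈ A, ∀ y ∈ A, ∀ k ≤ l, (S.pastDist k (S.level k).height x y : ℝ) ≤ ε) ∧
      ∀ μ : Measure X, IsProbabilityMeasure μ →
        entRate T μ P ≤ ENNReal.ofReal (S.cost l + s l * Real.log (1 / ε)) := by
  have hG : (1 : ℝ) ≤ S.totalGain l := mod_cast S.one_le_totalGain l
  have hGε : 1 ≤ S.totalGain l / ε := (one_le_div hε).2 (hε1.trans hG)
  set Q : ℕ := ⌈S.totalGain l / ε⌉₊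
  have hQ1 : 1 ≤ Q := Nat.one_le_ceil_iff.2 (one_pos.trans_le hGε)
  have hlogQ : Real.log Q ≤ Real.log (2 * S.totalGain l) + Real.log (1 / ε) := by
    rw [← Real.log_mul (by positivity) (by positivity), mul_one_div, mul_div_assoc]
    refine Real.log_le_log (mod_cast hQ1) ?_
    linarith [Nat.ceil_lt_add_one (zero_le_one.trans hGε)]
  let q : Set X → X → Fin (Q + 1) := fun B x => quantize Q (S.coord l B x)
  have hqm : ∀ B, Measurable (q B) := fun B =>
    (measurable_quantize Q).comp (S.continuous_coord l B).measurable
  have hq : ∀ B ∈ (S.level l).family, ∀ x, q B x ≠ 0 → x ∈ B := fun B hB x hx =>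
    S.mem_of_coord_ne_zero B hB fun h0 => hx (by simp only [q, h0, quantize_zero])
  refine ⟨_, isFinPartition_windowLabel hqm (S.totalHeight l) (S.totalHeight l + 1), ?_, fun μ _ =>
    (entRate_windowLabel_le hQ1 hqm hq (S.period_pos l) hs (S.totalVisits_le l) _).trans
      (ENNReal.ofReal_le_ofReal ?_)⟩
  · intro A hA x hx y hy k hk
    obtain ⟨a, rfl⟩ := mem_fiberPartition.1 hA
    have hlast : S.pastDist l (S.totalHeight l) x y ≤ (Q : ℝ≥0)⁻¹ :=
      pastDist_le_iff.2 fun B hB i hi => by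
        have h := congrFun (Eq.trans hx (Eq.symm hy)) (⟨B, hB⟩, ⟨S.totalHeight l - i, by omega⟩)
        simp only [windowLabel, Nat.cast_sub hi, sub_sub_cancel_left] at h
        exact nndist_le_inv_of_quantize_eq hQ1 (S.coord_le_one _ _ _) (S.coord_le_one _ _ _) h
    calc (S.pastDist k (S.level k).height x y : ℝ)
        ≤ S.totalGain l * (Q : ℝ)⁻¹ := mod_cast (S.pastDist_le_totalGain_mul hk x y).trans
          (mul_le_mul_right hlast _)
      _ ≤ ε := by
        rw [← div_eq_mul_inv, div_le_comm₀ (by positivity) hε]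
        exact Nat.le_ceil _
  · rw [cost, add_assoc, ← mul_add]
    gcongr

lemma infEntRate_le (hs : 0 ≤ s l) {c : ℕ → ℝ≥0} (hc : ∀ k, c k ≤ 1) {m : MetricSpace X}
    (hm : ∀ x y, m.dist x y = (⨆ k, c k * S.pastDist k (S.level k).height x y : ℝ≥0))
    (hε : 0 < ε) (hε1 : ε ≤ 1) (hcε : ∀ k, l < k → (c k : ℝ) ≤ ε) (μ : Measure X)
    [IsProbabilityMeasure μ] : @infEntRate X m.toPseudoMetricSpace _ T μ ε ≤
      ENNReal.ofReal (S.cost l + s l * Real.log (1 / ε)) := by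
  obtain ⟨P, hP, hdist, hent⟩ := S.exists_isFinPartition_entRate_le hs hε hε1
  refine iInf_le_of_le P (iInf_le_of_le hP (iInf_le_of_le (fun A hA => ?_) (hent μ ‹_›)))
  refine @Metric.diam_le_of_forall_dist_le X _ m.toPseudoMetricSpace _ hε.le fun x hx y hy => ?_
  lift ε to ℝ≥0 using hε.le
  rw [hm, NNReal.coe_le_coe]
  refine ciSup_le fun k => ?_
  rcases Nat.lt_or_ge l k with hk | hk
  · exact (mul_le_of_le_one_right' (S.pastDist_le_one _ _ x y)).trans (mod_cast hcε k hk)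
  · exact (mul_le_of_le_one_left' (hc k)).trans (mod_cast hdist A hA x hx y hy k hk)

end LevelSystem

section Asymptotics

lemma exists_monotone_forall_add_one_mul_le {b : ℕ → ℝ} (hb : ∀ k, 0 ≤ b k) :
    ∃ M : ℕ → ℝ, Monotone M ∧ (∀ k : ℕ, (k : ℝ) ≤ M k) ∧ ∀ k : ℕ, (k + 1) * b k ≤ M k := by
  have hterm : ∀ i : ℕ, 0 ≤ ((i : ℝ) + 1) * b i := fun i => mul_nonneg (by positivity) (hb i)
  refine ⟨fun k => ∑ i ∈ Finset.range (k + 1), (((i : ℝ) + 1) * b i + 1),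
    monotone_nat_of_le_succ fun k => ?_, fun k => ?_, fun k => ?_⟩
  · rw [Finset.sum_range_succ _ (k + 1)]
    linarith [hterm (k + 1)]
  · refine le_trans ?_ (Finset.sum_le_sum fun i _ => le_add_of_nonneg_left (hterm i))
    simp
  · exact (le_add_of_nonneg_right zero_le_one).trans (Finset.single_le_sum
      (f := fun i : ℕ => ((i : ℝ) + 1) * b i + 1) (fun i _ => add_nonneg (hterm i) zero_le_one)
      (Finset.self_mem_range_succ k))

lemma exists_ge_lt_le_succ {M : ℕ → ℝ} (hM : Tendsto M atTop atTop) {L : ℕ} {t : ℝ}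
    (ht : M L < t) : ∃ l ≥ L, M l < t ∧ t ≤ M (l + 1) := by
  by_contra! hcon
  have hlt : ∀ l ≥ L, M l < t := fun l hl => Nat.le_induction ht hcon l hl
  obtain ⟨l, hl, hlL⟩ := ((hM.eventually_ge_atTop t).and (eventually_ge_atTop L)).exists
  exact (hlt l hlL).not_ge hl

lemma tendsto_log_one_div_nhdsGT_zero :
    Tendsto (fun ε : ℝ => Real.log (1 / ε)) (𝓝[>] 0) atTop := by
  simp only [one_div]
  exact Real.tendsto_log_atTop.comp tendsto_inv_nhdsGT_zero

lemma limsup_div_log_le {F : ℝ → ℝ≥0∞} {M b : ℕ → ℝ} {v : ℝ} (hv : 0 ≤ v)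
    (hM : ∀ k : ℕ, (k : ℝ) ≤ M k) (hMb : ∀ k : ℕ, (k + 1) * b k ≤ M k)
    (hF : ∀ (l : ℕ) (ε : ℝ), 0 < ε → ε ≤ 1 → Real.log (1 / ε) ≤ M (l + 1) →
      F ε ≤ ENNReal.ofReal (b l + (v + 1 / ((l : ℝ) + 1)) * Real.log (1 / ε))) :
    limsup (fun ε => F ε / ENNReal.ofReal (Real.log (1 / ε))) (𝓝[>] 0) ≤ ENNReal.ofReal v := by
  refine ENNReal.le_of_forall_pos_le_add fun δ hδ _ => limsup_le_of_le (by isBoundedDefault) ?_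
  obtain ⟨L, hL⟩ := exists_nat_gt (2 / (δ : ℝ))
  filter_upwards [tendsto_log_one_div_nhdsGT_zero.eventually_gt_atTop (M L), self_mem_nhdsWithin]
    with ε hεL (hε : 0 < ε)
  obtain ⟨l, hLl, hlt, hle⟩ := exists_ge_lt_le_succ
    (tendsto_atTop_mono hM tendsto_natCast_atTop_atTop) hεL
  set t := Real.log (1 / ε)
  have ht : 0 < t := ((Nat.cast_nonneg L).trans (hM L)).trans_lt hεL
  have hε1 : ε ≤ 1 := le_of_not_gt fun h => ht.not_ge <| Real.log_nonpos (by positivity)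
    ((div_le_one hε).2 h.le)
  rw [ENNReal.div_le_iff (by simpa using ht) ENNReal.ofReal_ne_top, ← ENNReal.ofReal_coe_nnreal,
    ← ENNReal.ofReal_add hv δ.coe_nonneg, ← ENNReal.ofReal_mul (by positivity)]
  refine (hF l ε hε hε1 hle).trans (ENNReal.ofReal_le_ofReal ?_)
  have hb : b l ≤ 1 / ((l : ℝ) + 1) * t := by
    rw [one_div_mul_eq_div, le_div_iff₀ (by positivity), mul_comm]
    exact (hMb l).trans hlt.le
  have hl : 2 * (1 / ((l : ℝ) + 1)) ≤ δ := by
    rw [mul_one_div, div_le_iff₀ (by positivity), ← div_le_iff₀' (mod_cast hδ)]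
    linarith [(Nat.cast_le (α := ℝ)).2 hLl]
  calc b l + (v + 1 / ((l : ℝ) + 1)) * t ≤ v * t + 2 * (1 / ((l : ℝ) + 1)) * t := by linarith
    _ ≤ (v + δ) * t := by rw [add_mul]; gcongr

end Asymptotics

section UpperBound

variable {X : Type*} [tX : TopologicalSpace X] [CompactSpace X] [MeasurableSpace X] [BorelSpace X]
  {T : X ≃ₜ X}

lemma LevelSystem.exists_metricSpace_dimFUpper_le {v : ℝ} (hv : 0 ≤ v)
    (S : LevelSystem T fun l => v + 1 / ((l : ℝ) + 1)) :
    ∃ m : MetricSpace X, m.toPseudoMetricSpace.toUniformSpace.toTopologicalSpace = tX ∧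
      ∀ μ : Measure X, IsProbabilityMeasure μ →
        dimFUpper (@infEntRate X m.toPseudoMetricSpace _ T) μ ≤ ENNReal.ofReal v := by
  have hcost : ∀ l, 0 ≤ S.cost l := fun l => by
    have hG : (1 : ℝ) ≤ S.totalGain l := mod_cast S.one_le_totalGain l
    have hlog : 0 ≤ Real.log (2 * S.totalGain l) := Real.log_nonneg (by linarith)
    exact add_nonneg (by positivity) (mul_nonneg (by positivity) hlog)
  obtain ⟨M, hMmono, hMk, hMb⟩ := exists_monotone_forall_add_one_mul_le hcost
  let c : ℕ → ℝ≥0 := fun k => ⟨Real.exp (-M k), (Real.exp_pos _).le⟩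
  have hc1 : ∀ k, c k ≤ 1 := fun k => NNReal.coe_le_coe.1 <|
    Real.exp_le_one_iff.2 (neg_nonpos.2 ((Nat.cast_nonneg k).trans (hMk k)))
  have hc : Tendsto c atTop (𝓝 0) := NNReal.tendsto_coe.1 <|
    Real.tendsto_exp_neg_atTop_nhds_zero.comp
      (tendsto_atTop_mono hMk tendsto_natCast_atTop_atTop)
  obtain ⟨m, hmX, hm⟩ := exists_metricSpace_dist_eq_iSup
    (E := fun k x y => c k * S.pastDist k (S.level k).height x y) hc
    (fun k x y => mul_le_of_le_one_right' (S.pastDist_le_one _ _ x y))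
    (fun k x => by rw [S.pastDist_self, mul_zero])
    (fun k x y => by rw [S.pastDist_comm])
    (fun k x y z => by rw [← mul_add]; exact mul_le_mul_right (S.pastDist_triangle _ _ x y z) _)
    (fun k y => continuous_const.mul (S.continuous_pastDist _ _ y))
    (fun x y h => S.eq_of_pastDist_eq_zero fun k =>
      (mul_eq_zero.1 (h k)).resolve_left (NNReal.coe_ne_zero.1 (Real.exp_pos _).ne'))
  refine ⟨m, hmX, fun μ _ => limsup_div_log_le hv hMk hMb fun l ε hε hε1 hle =>
    S.infEntRate_le (by positivity) hc1 hm hε hε1 (fun k hk => ?_) μ⟩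
  refine (Real.le_log_iff_exp_le hε).1 ?_
  rw [one_div, Real.log_inv] at hle
  linarith [hMmono (Nat.succ_le_of_lt hk)]

lemma exists_metricSpace_dimFUpper_le_mdimTop [TopologicalSpace.MetrizableSpace X]
    (hmk : MarkerProperty T) (hmd : mdimTop T ≠ ⊤) :
    ∃ m : MetricSpace X, m.toPseudoMetricSpace.toUniformSpace.toTopologicalSpace = tX ∧
      ∀ μ : Measure X, IsProbabilityMeasure μ →
        dimFUpper (@infEntRate X m.toPseudoMetricSpace _ T) μ ≤ mdimTop T := by
  obtain ⟨S⟩ : Nonempty (LevelSystem T fun l => (mdimTop T).toReal + 1 / ((l : ℝ) + 1)) := by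
    let := TopologicalSpace.metrizableSpaceMetric X
    obtain ⟨D, hD⟩ := exists_isAdaptedSequence hmk hmd
    exact ⟨hD.levelSystem⟩
  simpa only [ENNReal.ofReal_toReal hmd] using
    S.exists_metricSpace_dimFUpper_le ENNReal.toReal_nonneg

end UpperBound

lemma Dcover_le {X : Type*} [TopologicalSpace X] {α β : Finset (Set X)} {m : ℕ}
    (hβ : IsFinOpenCover β) (href : ∀ B ∈ β, ∃ A ∈ α, B ⊆ A)
    (hm : ∀ x, multiplicity β x ≤ m + 1) : Dcover α ≤ m := by
  unfold Dcover
  exact le_trans (Nat.sInf_le ⟨β, hβ, href, rfl⟩) (ordCover_le hm)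

section MovingGrid

variable {X ι : Type*} {f : ι → X → ℝ} {M : ℕ} {v w : ι → ℤ} {τ τ' : ℝ} {x y : X}

/-- The preimage under `f` of the open cube of side `M` with top corner `M • v + (τ, …, τ)`, a cell
of the grid `M • ℤ ^ ι` shifted along the diagonal by `τ`. -/
def gridCell (f : ι → X → ℝ) (M : ℕ) (τ : ℝ) (v : ι → ℤ) : Set X :=
  {x | ∀ i, f i x - τ ∈ Ioo (M * ((v i : ℝ) - 1)) (M * v i)}

/-- The points swept out by the grid cell with index `v` while the grid is shifted by one unit along
the diagonal. -/
def sweptCell (f : ι → X → ℝ) (M : ℕ) (v : ι → ℤ) : Set X :=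
  ⋃ τ ∈ Ioo (0 : ℝ) 1, gridCell f M τ v

lemma isOpen_sweptCell [TopologicalSpace X] [Finite ι] (hf : ∀ i, Continuous (f i)) (M : ℕ)
    (v : ι → ℤ) : IsOpen (sweptCell f M v) := by
  refine isOpen_biUnion fun τ _ => ?_
  simp only [gridCell, ofPred_forall]
  exact isOpen_iInter_of_finite fun i => isOpen_Ioo.preimage ((hf i).sub continuous_const)

lemma exists_mem_sweptCell [Finite ι] (f : ι → X → ℝ) (hM : 0 < M) (x : X) :
    ∃ v, x ∈ sweptCell f M v := by
  obtain ⟨τ, hτ, hfract⟩ : ∃ τ ∈ Ioo (0 : ℝ) 1, τ ∉ range fun i => Int.fract (f i x) :=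
    (Ioo_infinite one_pos).exists_notMem_finite (finite_range _)
  have hM' : (0 : ℝ) < M := mod_cast hM
  refine ⟨fun i => ⌈(f i x - τ) / M⌉, mem_biUnion hτ fun i => ⟨?_, ?_⟩⟩
  · rw [← lt_div_iff₀' hM']
    linarith [Int.ceil_lt_add_one ((f i x - τ) / M)]
  · refine lt_of_le_of_ne ((div_le_iff₀' hM').1 (Int.le_ceil _)) fun h => hfract ⟨i, ?_⟩
    have hx : f i x = ((M * ⌈(f i x - τ) / M⌉ : ℤ) : ℝ) + τ := by
      push_cast
      linarith
    dsimp only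
    rw [hx, Int.fract_intCast_add, Int.fract_eq_self.2 ⟨hτ.1.le, hτ.2⟩]

lemma abs_sub_lt_of_mem_sweptCell (hx : x ∈ sweptCell f M v) (hy : y ∈ sweptCell f M v) (i : ι) :
    |f i x - f i y| < M + 1 := by
  obtain ⟨τ, ⟨hτ₀, hτ₁⟩, hx⟩ := mem_iUnion₂.1 hx
  obtain ⟨τ', ⟨hτ'₀, hτ'₁⟩, hy⟩ := mem_iUnion₂.1 hy
  rw [abs_lt]
  constructor <;> linarith [(hx i).1, (hx i).2, (hy i).1, (hy i).2]

/-- A point in two cells `v ≠ w` at times `τ ≤ τ'` has been crossed by a wall in between. -/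
lemma exists_dvd_floor_of_mem_gridCell (hτ : 0 < τ) (hτ' : τ' < 1) (hle : τ ≤ τ')
    (hv : x ∈ gridCell f M τ v) (hw : x ∈ gridCell f M τ' w) (hne : v ≠ w) :
    ∃ i, (M : ℤ) ∣ ⌊f i x⌋ ∧ Int.fract (f i x) ∈ Ioo τ τ' := by
  obtain ⟨i, hi⟩ := Function.ne_iff.1 hne
  obtain ⟨hv₁, hv₂⟩ := hv i
  obtain ⟨hw₁, hw₂⟩ := hw i
  have hwv : w i < v i := by
    have h : (M : ℝ) * ((w i : ℝ) - 1) < M * v i := by linarith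
    have : (w i : ℝ) - 1 < v i := lt_of_mul_lt_mul_left h M.cast_nonneg
    have : w i - 1 < v i := mod_cast this
    omega
  have hstep : (M : ℝ) * w i ≤ M * ((v i : ℝ) - 1) := by
    gcongr
    exact le_sub_iff_add_le.2 (mod_cast hwv)
  have hfloor : ⌊f i x⌋ = M * w i := by
    rw [Int.floor_eq_iff]
    push_cast
    constructor <;> linarith
  refine ⟨i, ⟨w i, hfloor⟩, ?_⟩
  rw [Int.fract, hfloor]
  push_cast
  constructor <;> linarith

lemma card_le_of_mem_sweptCell [Fintype ι] {V : Finset (ι → ℤ)}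
    (hV : ∀ v ∈ V, x ∈ sweptCell f M v) : #V ≤ #{i | (M : ℤ) ∣ ⌊f i x⌋} + 1 := by
  classical
  have htime : ∀ v ∈ V, ∃ τ ∈ Ioo (0 : ℝ) 1, x ∈ gridCell f M τ v := fun v hv => by
    simpa only [exists_prop] using mem_iUnion₂.1 (hV v hv)
  choose! τ hτ hmem using htime
  have hwall : ∀ v ∈ V, ∀ w ∈ V, v ≠ w → τ v ≤ τ w →
      ∃ i, (M : ℤ) ∣ ⌊f i x⌋ ∧ Int.fract (f i x) ∈ Ioo (τ v) (τ w) :=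
    fun v hv w hw hne hle => exists_dvd_floor_of_mem_gridCell (hτ v hv).1 (hτ w hw).2 hle
      (hmem v hv) (hmem w hw) hne
  have hinj : InjOn τ V := fun v hv w hw h => by
    by_contra hne
    obtain ⟨i, -, hi⟩ := hwall v hv w hw hne h.le
    exact lt_irrefl _ ((hi.1.trans hi.2).trans_eq h.symm)
  rw [← Finset.card_image_of_injOn hinj]
  refine (Finset.card_le_of_interleaved
    (t := ({i | (M : ℤ) ∣ ⌊f i x⌋} : Finset ι).image fun i => Int.fract (f i x)) ?_).trans
      (Nat.add_le_add_right Finset.card_image_le 1)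
  rintro _ hv' _ hw' hlt -
  obtain ⟨v, hv, rfl⟩ := Finset.mem_image.1 hv'
  obtain ⟨w, hw, rfl⟩ := Finset.mem_image.1 hw'
  obtain ⟨i, hdvd, hi⟩ := hwall v hv w hw (fun h => hlt.ne (congrArg τ h)) hlt.le
  exact ⟨_, Finset.mem_image.2 ⟨i, by simpa using hdvd, rfl⟩, hi⟩

variable [TopologicalSpace X] [CompactSpace X] [Nonempty X] {γ : Finset (Set X)}

lemma Dcover_le_of_card_dvd_floor_le [Fintype ι] (hf : ∀ i, Continuous (f i)) (hM : 0 < M) {m : ℕ}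
    (hm : ∀ x, #{i | (M : ℤ) ∣ ⌊f i x⌋} ≤ m)
    (hγ : ∀ x, ∃ A ∈ γ, ∀ y, (∀ i, |f i x - f i y| < M + 1) → y ∈ A) : Dcover γ ≤ m := by
  classical
  obtain ⟨V, hV⟩ := isCompact_univ.elim_finite_subcover (sweptCell f M)
    (isOpen_sweptCell hf M) fun x _ => mem_iUnion.2 (exists_mem_sweptCell f hM x)
  refine Dcover_le (β := V.image (sweptCell f M)) ⟨?_, eq_univ_of_forall fun x => ?_⟩
    (Finset.forall_mem_image.2 fun v _ => ?_) fun x => ?_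
  · exact Finset.forall_mem_image.2 fun v _ => isOpen_sweptCell hf M v
  · obtain ⟨v, hv, hx⟩ := mem_iUnion₂.1 (hV (mem_univ x))
    exact ⟨_, Finset.mem_coe.2 (Finset.mem_image_of_mem _ hv), hx⟩
  · obtain hempty | ⟨x, hx⟩ := (sweptCell f M v).eq_empty_or_nonempty
    · obtain ⟨A, hA, -⟩ := hγ (Classical.arbitrary X)
      exact ⟨A, hA, hempty ▸ empty_subset A⟩
    · obtain ⟨A, hA, hball⟩ := hγ x
      exact ⟨A, hA, fun y hy => hball y (abs_sub_lt_of_mem_sweptCell hx hy)⟩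
  · rw [multiplicity, Finset.filter_image]
    exact Finset.card_image_le.trans ((card_le_of_mem_sweptCell fun v hv =>
      (Finset.mem_filter.1 hv).2).trans (Nat.add_le_add_right (hm x) 1))

lemma exists_card_eq_Dcover_dvd_floor_sub [Finite ι] (hf : ∀ i, Continuous (f i)) (hM : 0 < M)
    (hγ : ∀ x, ∃ A ∈ γ, ∀ y, (∀ i, |f i x - f i y| < 2) → y ∈ A) (t : ι → ℤ) :
    ∃ (x : X) (J : Finset ι), #J = Dcover γ ∧ ∀ i ∈ J, (M : ℤ) ∣ ⌊M * f i x⌋ - t i := by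
  cases nonempty_fintype ι
  have hM' : (1 : ℝ) ≤ M := mod_cast hM
  obtain ⟨x, hx⟩ : ∃ x, Dcover γ ≤ #{i | (M : ℤ) ∣ ⌊M * f i x - t i⌋} := by
    by_contra! hlt
    have hle := Dcover_le_of_card_dvd_floor_le (γ := γ) (m := Dcover γ - 1)
      (f := fun i x => M * f i x - t i) (fun i => ((hf i).const_mul (M : ℝ)).sub continuous_const)
      hM (fun x => Nat.le_sub_one_of_lt (hlt x)) fun x => ?_
    · have := hlt (Classical.arbitrary X)
      omega
    · obtain ⟨A, hA, hball⟩ := hγ x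
      refine ⟨A, hA, fun y hy => hball y fun i => ?_⟩
      have hi : |M * f i x - t i - (M * f i y - t i)| < M + 1 := hy i
      rw [sub_sub_sub_cancel_right, ← mul_sub, abs_mul, Nat.abs_cast] at hi
      nlinarith
  obtain ⟨J, hJ, hcard⟩ := Finset.exists_subset_card_eq hx
  refine ⟨x, J, hcard, fun i hi => ?_⟩
  simpa only [Int.floor_sub_intCast, Finset.mem_filter, Finset.mem_univ, true_and] using hJ hi

lemma exists_common_dvd_floor_sub [Fintype ι] (hf : ∀ i, Continuous (f i)) (hM : 0 < M)
    (hγ : ∀ x, ∃ A ∈ γ, ∀ y, (∀ i, |f i x - f i y| < 2) → y ∈ A) :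
    ∃ (J : Finset ι) (S : Finset (ι → Fin M)) (x : (ι → Fin M) → X), #J = Dcover γ ∧
      S.Nonempty ∧ (M : ℝ) ^ Fintype.card ι ≤ #S * 2 ^ Fintype.card ι ∧
      ∀ t ∈ S, ∀ i ∈ J, (M : ℤ) ∣ ⌊M * f i (x t)⌋ - ((t i : ℕ) : ℤ) := by
  classical
  choose x J hcard hdvd using fun t : ι → Fin M =>
    exists_card_eq_Dcover_dvd_floor_sub hf hM hγ fun i => ((t i : ℕ) : ℤ)
  obtain ⟨J₀, -, hJ₀⟩ := Finset.exists_le_card_fiber_of_nsmul_le_card_of_maps_to (f := J)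
    (s := Finset.univ) (t := Finset.univ) (b := (M : ℝ) ^ Fintype.card ι / 2 ^ Fintype.card ι)
    (fun t _ => Finset.mem_univ _) Finset.univ_nonempty (by
      simp [mul_div_cancel₀])
  have hpos : (0 : ℝ) < M ^ Fintype.card ι / 2 ^ Fintype.card ι := by positivity
  have hne : ({t | J t = J₀} : Finset (ι → Fin M)).Nonempty :=
    Finset.card_pos.1 (Nat.cast_pos.1 (hpos.trans_le hJ₀))
  refine ⟨J₀, ({t | J t = J₀} : Finset (ι → Fin M)), x, ?_, hne,
    (div_le_iff₀ (by positivity)).1 hJ₀, fun t ht => ?_⟩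
  · obtain ⟨t, ht⟩ := hne
    rw [← (Finset.mem_filter.1 ht).2, hcard]
  · rw [← (Finset.mem_filter.1 ht).2]
    exact hdvd t

end MovingGrid

section Residues

variable {M : ℕ} {ℓ : ℝ}

lemma card_residues_le (hM : 0 < M) (hℓ : 0 ≤ ℓ) (y : ℝ) {R : Finset (Fin M)}
    (hR : ∀ r ∈ R, ∃ z : ℝ, |z - y| ≤ ℓ ∧ (M : ℤ) ∣ ⌊M * z⌋ - ((r : ℕ) : ℤ)) :
    (#R : ℝ) ≤ 2 * (M * ℓ) + 2 := by
  have hMℓ : 0 ≤ M * ℓ := by positivity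
  have hfloor : ⌊M * y - M * ℓ⌋ ≤ ⌊M * y + M * ℓ⌋ := Int.floor_le_floor (by linarith)
  choose! z hz hdvd using hR
  have hcard : #R ≤ #(Finset.Icc ⌊M * y - M * ℓ⌋ ⌊M * y + M * ℓ⌋) := by
    refine Finset.card_le_card_of_injOn (fun r => ⌊M * z r⌋) (fun r hr => ?_) ?_
    · obtain ⟨h₁, h₂⟩ := abs_le.1 (hz r hr)
      exact Finset.mem_coe.2 (Finset.mem_Icc.2
        ⟨Int.floor_le_floor (by nlinarith), Int.floor_le_floor (by nlinarith)⟩)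
    · intro r hr r' hr' h
      have hsub := dvd_sub (hdvd r hr) (hdvd r' hr')
      rw [show ⌊M * z r⌋ = ⌊M * z r'⌋ from h, sub_sub_sub_cancel_left] at hsub
      have := Int.eq_zero_of_abs_lt_dvd hsub (by rw [abs_lt]; omega)
      omega
  have hIcc : ((#(Finset.Icc ⌊M * y - M * ℓ⌋ ⌊M * y + M * ℓ⌋) : ℤ) : ℝ) =
      ⌊M * y + M * ℓ⌋ + 1 - ⌊M * y - M * ℓ⌋ := by
    rw [Int.card_Icc_of_le _ _ (hfloor.trans (lt_add_one _).le)]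
    push_cast
    rfl
  have hcard' : (#R : ℝ) ≤ ((#(Finset.Icc ⌊M * y - M * ℓ⌋ ⌊M * y + M * ℓ⌋) : ℤ) : ℝ) :=
    mod_cast hcard
  linarith [Int.floor_le (M * y + M * ℓ), Int.lt_floor_add_one (M * y - M * ℓ)]

lemma card_le_pow_mul_pow_of_dvd_floor_sub {ι : Type*} [Fintype ι] (hℓ : 0 ≤ ℓ) (hMℓ : 1 ≤ M * ℓ)
    {z : (ι → Fin M) → ι → ℝ} {U : Finset (ι → Fin M)} {J : Finset ι}
    (hz : ∀ t ∈ U, ∀ t' ∈ U, ∀ i ∈ J, |z t i - z t' i| ≤ ℓ)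
    (hdvd : ∀ t ∈ U, ∀ i ∈ J, (M : ℤ) ∣ ⌊M * z t i⌋ - ((t i : ℕ) : ℤ)) :
    (#U : ℝ) ≤ M ^ Fintype.card ι * (4 * ℓ) ^ #J := by
  classical
  have hM : 0 < M := Nat.pos_of_ne_zero fun h => by simp [h] at hMℓ; linarith
  obtain rfl | ⟨t₀, ht₀⟩ := U.eq_empty_or_nonempty
  · simp only [Finset.card_empty, Nat.cast_zero]
    positivity
  let R : ι → Finset (Fin M) := fun i => U.image fun t => t i
  have hR : ∀ i, (#(R i) : ℝ) ≤ M * if i ∈ J then 4 * ℓ else 1 := fun i => by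
    split_ifs with hi
    · have := card_residues_le hM hℓ (z t₀ i) (R := R i) (Finset.forall_mem_image.2 fun t ht =>
        ⟨z t i, hz t ht t₀ ht₀ i hi, hdvd t ht i hi⟩)
      linarith
    · rw [mul_one]
      exact_mod_cast (Finset.card_le_univ (R i)).trans_eq (Fintype.card_fin M)
  calc (#U : ℝ) ≤ #(Fintype.piFinset R) := mod_cast Finset.card_le_card fun t ht =>
        Fintype.mem_piFinset.2 fun i => Finset.mem_image_of_mem _ ht
    _ = ∏ i, (#(R i) : ℝ) := by rw [Fintype.card_piFinset, Nat.cast_prod]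
    _ ≤ ∏ i, (M * if i ∈ J then 4 * ℓ else 1 : ℝ) :=
        Finset.prod_le_prod (fun _ _ => Nat.cast_nonneg _) fun i _ => hR i
    _ = M ^ Fintype.card ι * (4 * ℓ) ^ #J := by
        rw [Finset.prod_mul_distrib, Finset.prod_const, Finset.card_univ, Finset.prod_ite_mem,
          Finset.univ_inter, Finset.prod_const]

end Residues

section Dispersed

variable {X : Type*} {T : X → X} {α : Finset (Set X)} {n : ℕ}

lemma card_filter_fst_notMem (α : Finset (Set X)) {J : Finset ℕ} (hJ : J ⊆ Finset.range n) :
    #{p : Fin n × α | (p.1 : ℕ) ∉ J} = (n - #J) * #α := by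
  have hprod : ({p : Fin n × α | (p.1 : ℕ) ∉ J} : Finset (Fin n × α)) =
      ({j : Fin n | (j : ℕ) ∉ J} : Finset (Fin n)) ×ˢ Finset.univ := by
    ext p
    simp
  have hmap : ({j : Fin n | (j : ℕ) ∉ J} : Finset (Fin n)).map Fin.valEmbedding =
      Finset.range n \ J := by
    ext j
    simp only [Finset.mem_map, Finset.mem_filter, Finset.mem_univ, true_and, Fin.valEmbedding_apply,
      Finset.mem_sdiff, Finset.mem_range]
    exact ⟨fun ⟨i, hi, hij⟩ => hij ▸ ⟨i.2, hi⟩, fun ⟨hj, hjJ⟩ => ⟨⟨j, hj⟩, hjJ, rfl⟩⟩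
  rw [hprod, Finset.card_product, Finset.card_univ, Fintype.card_coe, ← Finset.card_map, hmap,
    Finset.card_sdiff_of_subset hJ, Finset.card_range]

lemma card_sub_le_card_filter_fst_mem {J : Finset ℕ} (hJ : J ⊆ Finset.range n)
    (K : Finset (Fin n × α)) : #K - (n - #J) * #α ≤ #{p ∈ K | (p.1 : ℕ) ∈ J} := by
  rw [← card_filter_fst_notMem α hJ, Nat.sub_le_iff_le_add,
    ← Finset.card_filter_add_card_filter_not (s := K) fun p => (p.1 : ℕ) ∈ J]
  exact Nat.add_le_add_left (Finset.card_le_card (Finset.filter_subset_filter _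
    (Finset.subset_univ K))) _

section Separation

variable [PseudoMetricSpace X]

lemma exists_forall_one_lt_mul_depth [CompactSpace X] (hα : IsFinOpenCover α) :
    ∃ R : ℕ, ∀ x, ∃ A ∈ α, 1 < R * depth A x := by
  have hpos : ∀ x, ∃ A : α, 0 < depth (A : Set X) x := fun x => by
    obtain ⟨A, hA, hx⟩ := hα.exists_mem x
    exact ⟨⟨A, hA⟩, (depth_pos_iff (hα.1 A hA)).2 hx⟩
  obtain ⟨t, R, hR⟩ := exists_finset_forall_one_lt_mul (fun A : α => continuous_depth (A : Set X))
    hpos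
  refine ⟨R, fun x => ?_⟩
  obtain ⟨A, -, hA⟩ := hR x
  exact ⟨A, A.2, hA⟩

lemma exists_mem_joinN_forall_abs_sub_lt (hα : IsFinOpenCover α) {R : ℕ}
    (hR : ∀ x, ∃ A ∈ α, 1 < R * depth A x) (x : X) :
    ∃ B ∈ joinN T α n, ∀ y, (∀ p : Fin n × α, |(2 * R * depth (p.2 : Set X) (T^[p.1] x) : ℝ) -
      2 * R * depth (p.2 : Set X) (T^[p.1] y)| < 2) → y ∈ B := by
  choose A hA hdepth using hR
  refine ⟨_, mem_joinN.2 ⟨fun j => A (T^[j] x), fun j => hA _, rfl⟩, fun y hy => ?_⟩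
  refine mem_iInter.2 fun j => (depth_pos_iff (hα.1 _ (hA _))).1 (pos_iff_ne_zero.2 fun h => ?_)
  have hx : (1 : ℝ) < R * depth (A (T^[j] x)) (T^[j] x) := mod_cast hdepth (T^[j] x)
  have hxy := hy (j, ⟨A (T^[j] x), hA _⟩)
  rw [h, NNReal.coe_zero, mul_zero, sub_zero, abs_lt] at hxy
  linarith [hxy.2]

lemma exists_forall_card_le_of_dist_le [CompactSpace X] [Nonempty X] (hT : Continuous T)
    (hα : IsFinOpenCover α) :
    ∃ lam : ℝ, 0 < lam ∧ ∀ n M : ℕ, 0 < M →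
      ∃ (S : Finset (Fin n × α → Fin M)) (x : (Fin n × α → Fin M) → X), S.Nonempty ∧
        ∀ δ, 0 ≤ δ → 4 * (lam * δ) ≤ 1 → 1 ≤ M * (lam * δ) → ∀ J ⊆ Finset.range n, ∀ U ⊆ S,
          (∀ s ∈ U, ∀ t ∈ U, ∀ j ∈ J, dist (T^[j] (x s)) (T^[j] (x t)) ≤ δ) →
          (#U : ℝ) ≤
            #S * 2 ^ (n * #α) * (4 * (lam * δ)) ^ (Dcover (joinN T α n) - (n - #J) * #α) := by
  obtain ⟨R, hR⟩ := exists_forall_one_lt_mul_depth hα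
  have hR₀ : 0 < R := by
    obtain ⟨A, -, hA⟩ := hR (Classical.arbitrary X)
    exact Nat.pos_of_ne_zero fun h => by simp [h] at hA
  refine ⟨2 * R, by positivity, fun n M hM => ?_⟩
  let f : Fin n × α → X → ℝ := fun p x => 2 * R * depth (p.2 : Set X) (T^[p.1] x)
  have hf : ∀ p, Continuous (f p) := fun p => continuous_const.mul
    (NNReal.continuous_coe.comp ((continuous_depth _).comp (hT.iterate _)))
  obtain ⟨K, S, x, hK, hS, hcard, hdvd⟩ := exists_common_dvd_floor_sub hf hM
    (exists_mem_joinN_forall_abs_sub_lt (T := T) (n := n) hα hR)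
  refine ⟨S, x, hS, fun δ hδ hδ4 hMδ J hJ U hU hdist => ?_⟩
  let K' : Finset (Fin n × α) := {p ∈ K | (p.1 : ℕ) ∈ J}
  have hK' : Dcover (joinN T α n) - (n - #J) * #α ≤ #K' :=
    hK ▸ card_sub_le_card_filter_fst_mem hJ K
  have hclose : ∀ t ∈ U, ∀ t' ∈ U, ∀ p ∈ K', |f p (x t) - f p (x t')| ≤ 2 * R * δ :=
    fun t ht t' ht' p hp => by
      rw [← mul_sub, abs_mul, abs_of_nonneg (by positivity : (0 : ℝ) ≤ 2 * R)]
      gcongr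
      refine ((lipschitzWith_depth _).dist_le_mul _ _).trans ?_
      rw [NNReal.coe_one, one_mul]
      exact hdist t ht t' ht' _ (Finset.mem_filter.1 hp).2
  calc (#U : ℝ) ≤ M ^ Fintype.card (Fin n × α) * (4 * (2 * R * δ)) ^ #K' :=
        card_le_pow_mul_pow_of_dvd_floor_sub (by positivity) hMδ hclose fun t ht p hp =>
          hdvd t (hU ht) p (Finset.mem_filter.1 hp).1
    _ ≤ #S * 2 ^ Fintype.card (Fin n × α) *
        (4 * (2 * R * δ)) ^ (Dcover (joinN T α n) - (n - #J) * #α) :=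
        mul_le_mul hcard (pow_le_pow_of_le_one (by positivity) hδ4 hK') (by positivity)
          (by positivity)
    _ = #S * 2 ^ (n * #α) * (4 * (2 * R * δ)) ^ (Dcover (joinN T α n) - (n - #J) * #α) := by
        rw [Fintype.card_prod, Fintype.card_fin, Fintype.card_coe]

end Separation

/-- Any subfamily of the orbit segments `x s, T (x s), …, T^[n - 1] (x s)` whose members are
pairwise `r`-related at all times in `J` makes up at most the fraction `exp (C * (n - #J) - h * n)`
of the family: each of the `n` times contributes `h` to the entropy of the uniform distribution on
the family, at a loss of at most `C` for each time that is not observed. -/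
def IsDispersed {ι : Type*} [Fintype ι] (T : X → X) (r : X → X → Prop) (n : ℕ) (h C : ℝ)
    (x : ι → X) : Prop :=
  ∀ J ⊆ Finset.range n, ∀ U : Finset ι,
    (∀ s ∈ U, ∀ t ∈ U, ∀ j ∈ J, r (T^[j] (x s)) (T^[j] (x t))) →
      (#U : ℝ) ≤ Fintype.card ι * Real.exp (C * (n - #J) - h * n)

lemma IsDispersed.mono {ι : Type*} [Fintype ι] {r r' : X → X → Prop} {h C : ℝ} {x : ι → X}
    (hx : IsDispersed T r n h C x) (hr : ∀ y z, r' y z → r y z) : IsDispersed T r' n h C x :=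
  fun J hJ U hU => hx J hJ U fun s hs t ht j hj => hr _ _ (hU s hs t ht j hj)

lemma two_pow_mul_pow_sub_le {D k b n : ℕ} {ρ a : ℝ} (hρ : 0 < ρ) (hρ1 : ρ ≤ 1)
    (ha : a * n ≤ D) :
    2 ^ (n * b) * ρ ^ (D - k * b) ≤
      Real.exp (b * Real.log (1 / ρ) * k - (a * Real.log (1 / ρ) - b * Real.log 2) * n) := by
  have hlog : 0 ≤ Real.log (1 / ρ) := Real.log_nonneg (one_le_one_div hρ hρ1)
  have hD : a * n - k * b ≤ (D - k * b : ℕ) := by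
    have : (D : ℝ) - (k * b : ℕ) ≤ (D - k * b : ℕ) := by
      rw [sub_le_iff_le_add]
      exact_mod_cast le_tsub_add
    push_cast at this
    linarith
  have hpow : ρ ^ (D - k * b) = Real.exp (-(Real.log (1 / ρ) * (D - k * b : ℕ))) := by
    rw [← neg_mul, one_div, Real.log_inv, neg_neg, ← Real.rpow_natCast, Real.rpow_def_of_pos hρ]
  have htwo : (2 : ℝ) ^ (n * b) = Real.exp (Real.log 2 * (n * b)) := by
    rw [← Real.rpow_natCast, Real.rpow_def_of_pos two_pos, Nat.cast_mul]
  rw [hpow, htwo, ← Real.exp_add, Real.exp_le_exp]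
  linarith [mul_le_mul_of_nonneg_left hD hlog]

variable [PseudoMetricSpace X]

lemma exists_isDispersed [CompactSpace X] [Nonempty X] (hT : Continuous T)
    (hα : IsFinOpenCover α) :
    ∃ lam : ℝ, 0 < lam ∧ ∃ (N : ℕ → ℕ) (x : ∀ n, Fin (N n + 1) → X),
      ∀ δ, 0 < δ → lam * δ ≤ 1 → ∀ a : ℝ, (∀ᶠ n : ℕ in atTop, a * n ≤ Dcover (joinN T α n)) →
        ∀ᶠ n in atTop, IsDispersed T (fun y z => dist y z ≤ δ) n
          (a * Real.log (1 / (lam * δ)) - #α * Real.log 2) (#α * Real.log (1 / (lam * δ)))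
          (x n) := by
  classical
  obtain ⟨lam, hlam, hsep⟩ := exists_forall_card_le_of_dist_le hT hα
  choose S y hS hcard using fun n => hsep n (n + 1) n.succ_pos
  have hN : ∀ n, Fintype.card (S n) = #(S n) - 1 + 1 := fun n => by
    rw [Fintype.card_coe, Nat.sub_add_cancel (hS n).card_pos]
  let e : ∀ n, Fin (#(S n) - 1 + 1) ≃ S n := fun n => (Fintype.equivFinOfCardEq (hN n)).symm
  refine ⟨4 * lam, by positivity, fun n => #(S n) - 1, fun n s => y n (e n s),
    fun δ hδ hδ1 a ha => ?_⟩
  rw [mul_assoc] at hδ1 ⊢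
  filter_upwards [ha, eventually_ge_atTop ⌈1 / (lam * δ)⌉₊] with n han hn J hJ U hU
  have hMδ : 1 ≤ ((n + 1 : ℕ) : ℝ) * (lam * δ) := by
    rw [← div_le_iff₀ (by positivity)]
    exact (Nat.ceil_le.1 hn).trans (by exact_mod_cast n.le_succ)
  let V : Finset (Fin n × α → Fin (n + 1)) := U.map ((e n).toEmbedding.trans (.subtype _))
  have hV : V ⊆ S n := fun t ht => by
    obtain ⟨s, -, rfl⟩ := Finset.mem_map.1 ht
    exact (e n s).2
  have hJn : #J ≤ n := by simpa using Finset.card_le_card hJ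
  calc (#U : ℝ) = #V := by rw [Finset.card_map]
    _ ≤ #(S n) * 2 ^ (n * #α) *
        (4 * (lam * δ)) ^ (Dcover (joinN T α n) - (n - #J) * #α) :=
      hcard n δ hδ.le hδ1 hMδ J hJ V hV (by simpa [V] using hU)
    _ ≤ #(S n) * Real.exp (#α * Real.log (1 / (4 * (lam * δ))) * (n - #J : ℕ) -
        (a * Real.log (1 / (4 * (lam * δ))) - #α * Real.log 2) * n) := by
      rw [mul_assoc]
      gcongr
      exact two_pow_mul_pow_sub_le (by positivity) hδ1 han
    _ = _ := by rw [Nat.cast_sub hJn, Fintype.card_fin, ← hN, Fintype.card_coe]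

end Dispersed

section Itinerary

variable {X ι S : Type*} [Fintype ι] {T : X → X} {σ : X → S} {x : ι → X} {n q : ℕ}

lemma card_mul_le_sum_neg_log {B : Type*} [Fintype B] [DecidableEq B] {ν : ι → B} {w : B → ℝ}
    (hw : ∀ b, 0 < w b) (hsum : ∑ b, w b ≤ 1) {L : ℝ}
    (hν : ∀ b, (#{s | ν s = b} : ℝ) ≤ Fintype.card ι * Real.exp (-L)) :
    Fintype.card ι * L ≤ ∑ s, -Real.log (w (ν s)) := by
  have htotal : ∑ s, w (ν s) ≤ Fintype.card ι * Real.exp (-L) := by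
    calc ∑ s, w (ν s) = ∑ b, #{s | ν s = b} * w b := by
          rw [← Finset.sum_fiberwise Finset.univ ν]
          refine Finset.sum_congr rfl fun b _ => ?_
          rw [← nsmul_eq_mul, ← Finset.sum_const]
          exact Finset.sum_congr rfl fun s hs => by rw [(Finset.mem_filter.1 hs).2]
      _ ≤ ∑ b, Fintype.card ι * Real.exp (-L) * w b :=
          Finset.sum_le_sum fun b _ => mul_le_mul_of_nonneg_right (hν b) (hw b).le
      _ = Fintype.card ι * Real.exp (-L) * ∑ b, w b := by rw [Finset.mul_sum]
      _ ≤ _ := mul_le_of_le_one_right (by positivity) hsum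
  have hpoint : ∀ s, 1 + L - w (ν s) * Real.exp L ≤ -Real.log (w (ν s)) := fun s => by
    have h := Real.log_le_sub_one_of_pos (mul_pos (hw (ν s)) (Real.exp_pos L))
    rw [Real.log_mul (hw _).ne' (Real.exp_pos _).ne', Real.log_exp] at h
    linarith
  calc Fintype.card ι * L
      = Fintype.card ι * (1 + L) - Fintype.card ι * Real.exp (-L) * Real.exp L := by
        rw [mul_assoc, ← Real.exp_add, neg_add_cancel, Real.exp_zero]
        ring
    _ ≤ Fintype.card ι * (1 + L) - (∑ s, w (ν s)) * Real.exp L := by gcongr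
    _ = ∑ s, (1 + L - w (ν s) * Real.exp L) := by
        rw [Finset.sum_sub_distrib, Finset.sum_mul, Finset.sum_const, nsmul_eq_mul,
          Finset.card_univ]
    _ ≤ _ := Finset.sum_le_sum fun s _ => hpoint s

/-- The first `q` symbols of the `σ`-coding of the orbit of `u`. -/
def itinerary (T : X → X) (σ : X → S) (q : ℕ) (u : X) : Fin q → S :=
  fun j => σ (T^[j] u)

lemma apply_iterate_eq_of_itinerary_eq {r k : ℕ} {y z : X}
    (hyz : ∀ i : Fin k, itinerary T σ q (T^[r + q * i] y) = itinerary T σ q (T^[r + q * i] z))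
    {j : ℕ} (hj : j ∈ Finset.Ico r (r + q * k)) : σ (T^[j] y) = σ (T^[j] z) := by
  rw [Finset.mem_Ico] at hj
  have hq : 0 < q := Nat.pos_of_ne_zero fun h => by simp [h] at hj; omega
  have hdiv : (j - r) / q < k := Nat.div_lt_of_lt_mul (by omega)
  have hindex : (j - r) % q + (r + q * ((j - r) / q)) = j := by
    have := Nat.div_add_mod (j - r) q
    omega
  have h := congrFun (hyz ⟨_, hdiv⟩) ⟨_, Nat.mod_lt (j - r) hq⟩
  simpa only [itinerary, ← Function.iterate_add_apply, hindex] using h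

variable [Fintype S] {w : (Fin q → S) → ℝ} {h C : ℝ}

lemma IsDispersed.card_mul_le_sum_neg_log_itinerary
    (hx : IsDispersed T (fun y z => σ y = σ z) n h C x)
    (hw : ∀ b, 0 < w b) (hsum : ∑ b, w b ≤ 1) {r k : ℕ} (hrk : r + q * k ≤ n) :
    Fintype.card ι * (h * n - C * (n - q * k)) ≤
      ∑ s, ∑ i ∈ Finset.range k, -Real.log (w (itinerary T σ q (T^[r + q * i] (x s)))) := by
  classical
  have hgibbs := card_mul_le_sum_neg_log (L := h * n - C * (n - q * k))
    (ν := fun s (i : Fin k) => itinerary T σ q (T^[r + q * i] (x s)))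
    (w := fun b => ∏ i, w (b i)) (fun b => Finset.prod_pos fun i _ => hw _)
    (by
      rw [← Fintype.sum_pow]
      exact pow_le_one₀ (Finset.sum_nonneg fun b _ => (hw b).le) hsum)
    (fun b => by
      refine (hx (Finset.Ico r (r + q * k)) (fun j hj => ?_) _ fun s hs t ht j hj => ?_).trans ?_
      · rw [Finset.mem_Ico] at hj
        exact Finset.mem_range.2 (hj.2.trans_le hrk)
      · exact apply_iterate_eq_of_itinerary_eq
          (congrFun ((Finset.mem_filter.1 hs).2.trans (Finset.mem_filter.1 ht).2.symm)) hj
      · simp)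
  refine hgibbs.trans_eq (Finset.sum_congr rfl fun s _ => ?_)
  rw [Real.log_prod fun i _ => (hw _).ne', ← Finset.sum_neg_distrib,
    Finset.sum_range fun i => -Real.log (w (itinerary T σ q (T^[r + q * i] (x s))))]

lemma sum_range_sum_range_add_mul (f : ℕ → ℝ) (q k : ℕ) :
    ∑ r ∈ Finset.range q, ∑ i ∈ Finset.range k, f (r + q * i) =
      ∑ j ∈ Finset.range (q * k), f j := by
  induction k with
  | zero => simp
  | succ k ih =>
    simp only [Finset.sum_range_succ, Finset.sum_add_distrib, ih, mul_add_one,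
      Finset.sum_range_add, add_comm _ (q * k)]

lemma IsDispersed.card_mul_le_sum_sum_neg_log_itinerary
    (hx : IsDispersed T (fun y z => σ y = σ z) n h C x) (hC : 0 ≤ C)
    (hw : ∀ b, 0 < w b) (hsum : ∑ b, w b ≤ 1) (hq : 0 < q) (hqn : q ≤ n) :
    Fintype.card ι * (q * (h * n - 2 * q * C)) ≤
      ∑ s, ∑ j ∈ Finset.range n, -Real.log (w (itinerary T σ q (T^[j] (x s)))) := by
  have hw1 : ∀ b, w b ≤ 1 := fun b =>
    (Finset.single_le_sum (fun b _ => (hw b).le) (Finset.mem_univ b)).trans hsum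
  obtain ⟨k, hk⟩ := Nat.exists_eq_succ_of_ne_zero (Nat.div_pos hqn hq).ne'
  have hqk : q * k + q ≤ n := by
    rw [← mul_add_one, ← Nat.succ_eq_add_one, ← hk]
    exact Nat.mul_div_le n q
  have hn : n ≤ q * k + 2 * q := by
    have := Nat.lt_mul_div_succ n hq
    rw [hk, mul_add_one, Nat.succ_eq_add_one, mul_add_one] at this
    omega
  have hphase : ∀ r ∈ Finset.range q, Fintype.card ι * (h * n - 2 * q * C) ≤
      ∑ s, ∑ i ∈ Finset.range k, -Real.log (w (itinerary T σ q (T^[r + q * i] (x s)))) :=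
    fun r hr => by
      refine le_trans ?_ (hx.card_mul_le_sum_neg_log_itinerary hw hsum (r := r) (k := k)
        (by have := Finset.mem_range.1 hr; omega))
      have hgap : (n : ℝ) - q * k ≤ 2 * q := by
        rw [sub_le_iff_le_add']
        exact_mod_cast hn
      gcongr _ * (_ - ?_)
      rw [mul_comm]
      gcongr
  calc Fintype.card ι * (q * (h * n - 2 * q * C))
      = ∑ r ∈ Finset.range q, Fintype.card ι * (h * n - 2 * q * C) := by
        rw [Finset.sum_const, Finset.card_range, nsmul_eq_mul]
        ring
    _ ≤ ∑ s, ∑ j ∈ Finset.range (q * k), -Real.log (w (itinerary T σ q (T^[j] (x s)))) := by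
        refine (Finset.sum_le_sum hphase).trans_eq ?_
        rw [Finset.sum_comm]
        exact Finset.sum_congr rfl fun s _ => sum_range_sum_range_add_mul
          (fun j => -Real.log (w (itinerary T σ q (T^[j] (x s))))) q k
    _ ≤ _ := Finset.sum_le_sum fun s _ => Finset.sum_le_sum_of_subset_of_nonneg
        (Finset.range_mono (by omega)) fun j _ _ =>
          neg_nonneg.2 (Real.log_nonpos (hw _).le (hw1 _))

end Itinerary

section OrbitAverage

variable {X ι : Type*} [Fintype ι] {T : X → X} {n : ℕ} {x : ι → X}

/-- The average of a function over the orbit segments of length `n` that start at the points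
`x s`. It is a functional on all functions, since codings of points need not be measurable. -/
def orbitAverage (T : X → X) (n : ℕ) (x : ι → X) : (X → ℝ) →ₗ[ℝ] ℝ :=
  (Fintype.card ι : ℝ)⁻¹ • ∑ s, (n : ℝ)⁻¹ • ∑ j ∈ Finset.range n, LinearMap.proj (T^[j] (x s))

lemma orbitAverage_apply (f : X → ℝ) :
    orbitAverage T n x f = (Fintype.card ι : ℝ)⁻¹ * ∑ s, birkhoffAverage ℝ T f n (x s) := by
  simp [orbitAverage, birkhoffAverage, birkhoffSum]

lemma orbitAverage_mono {f g : X → ℝ} (hfg : f ≤ g) :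
    orbitAverage T n x f ≤ orbitAverage T n x g := by
  simp only [orbitAverage_apply, birkhoffAverage, birkhoffSum, smul_eq_mul]
  gcongr
  exact hfg _

lemma orbitAverage_const [Nonempty ι] (hn : n ≠ 0) (c : ℝ) :
    orbitAverage T n x (fun _ => c) = c := by
  simp [orbitAverage_apply, birkhoffAverage, birkhoffSum, hn]

lemma abs_orbitAverage_comp_sub_le {f : X → ℝ} {M : ℝ} (hM : 0 ≤ M) (hf : ∀ y, |f y| ≤ M) :
    |orbitAverage T n x (f ∘ T) - orbitAverage T n x f| ≤ 2 * M / n := by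
  have hpoint : ∀ s, |birkhoffAverage ℝ T (f ∘ T) n (x s) - birkhoffAverage ℝ T f n (x s)| ≤
      2 * M / n := fun s => by
    have hshift : birkhoffAverage ℝ T (f ∘ T) n (x s) = birkhoffAverage ℝ T f n (T (x s)) := by
      simp only [birkhoffAverage, birkhoffSum, Function.comp_apply,
        ← Function.iterate_succ_apply', Function.iterate_succ_apply]
    rw [hshift, birkhoffAverage_apply_sub_birkhoffAverage, smul_eq_mul, abs_mul, abs_inv,
      Nat.abs_cast, inv_mul_eq_div]
    gcongr
    linarith [abs_sub (f (T^[n] (x s))) (f (x s)), hf (T^[n] (x s)), hf (x s)]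
  rw [orbitAverage_apply, orbitAverage_apply, ← mul_sub, ← Finset.sum_sub_distrib, abs_mul,
    abs_inv, Nat.abs_cast]
  calc _ ≤ (Fintype.card ι : ℝ)⁻¹ * ∑ _s : ι, 2 * M / n := by
        gcongr
        exact (Finset.abs_sum_le_sum_abs _ _).trans (Finset.sum_le_sum fun s _ => hpoint s)
    _ ≤ _ := by
        rw [Finset.sum_const, Finset.card_univ, nsmul_eq_mul, ← mul_assoc]
        exact mul_le_of_le_one_left (by positivity) inv_mul_le_one

lemma IsDispersed.le_orbitAverage_neg_log_itinerary {S : Type*} [Fintype S] {σ : X → S} {q : ℕ}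
    {w : (Fin q → S) → ℝ} {h C : ℝ} [Nonempty ι]
    (hx : IsDispersed T (fun y z => σ y = σ z) n h C x) (hC : 0 ≤ C)
    (hw : ∀ b, 0 < w b) (hsum : ∑ b, w b ≤ 1) (hq : 0 < q) (hqn : q ≤ n) :
    q * h - 2 * q ^ 2 * C / n ≤
      orbitAverage T n x fun u => -Real.log (w (itinerary T σ q u)) := by
  have hn : (0 : ℝ) < n := by exact_mod_cast hq.trans_le hqn
  have : (0 : ℝ) < Fintype.card ι := by exact_mod_cast Fintype.card_pos
  have hblock := hx.card_mul_le_sum_sum_neg_log_itinerary hC hw hsum hq hqn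
  simp only [orbitAverage_apply, birkhoffAverage, birkhoffSum, smul_eq_mul, ← Finset.mul_sum]
  calc q * h - 2 * q ^ 2 * C / n
      = (Fintype.card ι : ℝ)⁻¹ * ((n : ℝ)⁻¹ * (Fintype.card ι * (q * (h * n - 2 * q * C)))) := by
        field_simp
    _ ≤ _ := by gcongr

variable [MeasurableSpace X]

/-- The average of the empirical measures of the orbit segments that start at the points `x s`. -/
def orbitMeasure (T : X → X) (n : ℕ) (x : ι → X) : Measure X :=
  (Fintype.card ι : ℝ≥0∞)⁻¹ • ∑ s, empMeas T n (x s)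

lemma isProbabilityMeasure_empMeas (hn : n ≠ 0) (y : X) :
    IsProbabilityMeasure (empMeas T n y) := by
  constructor
  simp [empMeas, ENNReal.inv_mul_cancel, hn]

lemma isProbabilityMeasure_orbitMeasure [Nonempty ι] (hn : n ≠ 0) :
    IsProbabilityMeasure (orbitMeasure T n x) := by
  have := fun s => isProbabilityMeasure_empMeas (T := T) hn (x s)
  constructor
  simp [orbitMeasure, ENNReal.inv_mul_cancel]

lemma integral_empMeas {f : X → ℝ} (hf : StronglyMeasurable f) (y : X) :
    ∫ z, f z ∂empMeas T n y = birkhoffAverage ℝ T f n y := by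
  rw [empMeas, integral_smul_measure,
    integral_finsetSum_measure fun j _ => integrable_dirac' hf (by simp)]
  simp [integral_dirac' f _ hf, birkhoffAverage, birkhoffSum]

lemma integrable_empMeas {f : X → ℝ} (hn : n ≠ 0) (hf : StronglyMeasurable f) (y : X) :
    Integrable f (empMeas T n y) :=
  (integrable_finsetSum_measure.2 fun j _ => integrable_dirac' hf (by simp)).smul_measure
    (by simp [hn])

lemma integral_orbitMeasure {f : X → ℝ} (hn : n ≠ 0) (hf : StronglyMeasurable f) :
    ∫ z, f z ∂orbitMeasure T n x = orbitAverage T n x f := by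
  rw [orbitMeasure, integral_smul_measure,
    integral_finsetSum_measure fun s _ => integrable_empMeas hn hf (x s), orbitAverage_apply]
  simp [integral_empMeas hf]

lemma measureReal_orbitMeasure {A : Set X} (hn : n ≠ 0) (hA : MeasurableSet A) :
    (orbitMeasure T n x).real A = orbitAverage T n x (A.indicator 1) := by
  rw [← integral_orbitMeasure hn (stronglyMeasurable_one.indicator hA), integral_indicator_one hA]

end OrbitAverage

section OrbitLimit

variable {X : Type*} [MeasurableSpace X] {ι : ℕ → Type*} [∀ n, Fintype (ι n)] {T : X → X}
  {x : ∀ n, ι n → X}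

/-- The orbit measures of the families `x n` accumulate at `μ` along the filter `V`, in the form
given by the portmanteau theorem: asymptotically they charge each open set at least as much as
`μ` does. -/
def IsOrbitLimit [TopologicalSpace X] (T : X → X) (x : ∀ n, ι n → X) (V : Filter ℕ)
    (μ : Measure X) : Prop :=
  ∀ O, IsOpen O → ∀ θ < μ.real O, ∀ᶠ n in V, θ < orbitAverage T n (x n) (O.indicator 1)

variable [PseudoMetricSpace X] [BorelSpace X] {V : Filter ℕ} {μ : ProbabilityMeasure X}
  {P : ℕ → ProbabilityMeasure X}

lemma measurePreserving_of_tendsto_orbitMeasure [V.NeBot] (hV : V ≤ atTop) (hT : Continuous T)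
    (hP : ∀ n ≠ 0, (P n : Measure X) = orbitMeasure T n (x n)) (hμ : Tendsto P V (𝓝 μ)) :
    MeasurePreserving T (μ : Measure X) μ := by
  refine ⟨hT.measurable, ?_⟩
  have := Measure.isProbabilityMeasure_map (μ := (μ : Measure X)) hT.aemeasurable
  refine ext_of_forall_integral_eq_of_IsFiniteMeasure fun f => ?_
  rw [integral_map hT.aemeasurable f.continuous.aestronglyMeasurable]
  have hlim := ProbabilityMeasure.tendsto_iff_forall_integral_tendsto.1 hμ
  have hdiff := (hlim (f.compContinuous ⟨T, hT⟩)).sub (hlim f)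
  have hbound : Tendsto (fun n : ℕ => 2 * ‖f‖ / n) V (𝓝 0) :=
    (tendsto_const_div_atTop_nhds_zero_nat _).mono_left hV
  refine sub_eq_zero.1 (tendsto_nhds_unique hdiff (squeeze_zero_norm' ?_ hbound))
  filter_upwards [hV (eventually_ne_atTop 0)] with n hn
  rw [hP n hn, integral_orbitMeasure hn f.continuous.stronglyMeasurable,
    integral_orbitMeasure hn (f.compContinuous ⟨T, hT⟩).continuous.stronglyMeasurable]
  exact abs_orbitAverage_comp_sub_le (norm_nonneg f) f.norm_coe_le_norm

lemma isOrbitLimit_of_tendsto_orbitMeasure (hV : V ≤ atTop)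
    (hP : ∀ n ≠ 0, (P n : Measure X) = orbitMeasure T n (x n)) (hμ : Tendsto P V (𝓝 μ)) :
    IsOrbitLimit T x V μ := by
  intro O hO θ hθ
  rcases lt_or_ge θ 0 with hθ0 | hθ0
  · filter_upwards with n
    refine hθ0.trans_le ?_
    rw [← map_zero (orbitAverage T n (x n))]
    exact orbitAverage_mono (indicator_nonneg fun _ _ => zero_le_one)
  · have hlt : ENNReal.ofReal θ < (μ : Measure X) O :=
      (ENNReal.ofReal_lt_iff_lt_toReal hθ0 (measure_ne_top _ _)).2 hθ
    have hliminf := ProbabilityMeasure.le_liminf_measure_open_of_tendsto hμ hO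
    filter_upwards [eventually_lt_of_lt_liminf (hlt.trans_le hliminf),
      hV (eventually_ne_atTop 0)] with n hn hn0
    rw [← measureReal_orbitMeasure hn0 hO.measurableSet, ← hP n hn0]
    exact (ENNReal.ofReal_lt_iff_lt_toReal hθ0 (measure_ne_top _ _)).1 hn

lemma exists_isOrbitLimit [T2Space X] [CompactSpace X] [∀ n, Nonempty (ι n)] (hT : Continuous T)
    (x : ∀ n, ι n → X) :
    ∃ (μ : Measure X) (V : Filter ℕ), IsProbabilityMeasure μ ∧ MeasurePreserving T μ μ ∧
      V.NeBot ∧ V ≤ atTop ∧ IsOrbitLimit T x V μ := by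
  have hP : ∀ n, ∃ P : ProbabilityMeasure X, n ≠ 0 → (P : Measure X) = orbitMeasure T n (x n) :=
    fun n => by
      by_cases hn : n = 0
      · exact ⟨diracProba (x 0 (Classical.arbitrary _)), fun h => absurd hn h⟩
      · exact ⟨⟨_, isProbabilityMeasure_orbitMeasure hn⟩, fun _ => rfl⟩
  choose P hP using hP
  have hV : (hyperfilter ℕ : Filter ℕ) ≤ atTop := Nat.hyperfilter_le_atTop
  obtain ⟨μ, -, hμ⟩ := isCompact_univ.ultrafilter_le_nhds ((hyperfilter ℕ).map P) (by simp)
  exact ⟨μ, hyperfilter ℕ, μ.2, measurePreserving_of_tendsto_orbitMeasure hV hT hP hμ,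
    inferInstance, hV, isOrbitLimit_of_tendsto_orbitMeasure hV hP hμ⟩

end OrbitLimit

section Coding

variable {X κ : Type*} [PseudoMetricSpace X] {A U : κ → Set X} {ε η : ℝ}

lemma exists_pairwise_disjoint_isOpen [CompactSpace X] [MeasurableSpace X] [BorelSpace X]
    [Finite κ] (μ : Measure X) [IsFiniteMeasure μ] (hA : ∀ k, MeasurableSet (A k))
    (hAd : Pairwise (Function.onFun Disjoint A)) (hε : 0 < ε) (hη : 0 < η) :
    ∃ U : κ → Set X, (∀ k, IsOpen (U k)) ∧ Pairwise (Function.onFun Disjoint U) ∧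
      (∀ k, U k ⊆ Metric.thickening ε (A k)) ∧ ∀ k, μ.real (A k \ U k) ≤ η := by
  have hclosed : ∀ k, ∃ K ⊆ A k, IsClosed K ∧ μ (A k \ K) < ENNReal.ofReal η := fun k =>
    (hA k).exists_isClosed_sdiff_lt (measure_ne_top _ _) (ENNReal.ofReal_pos.2 hη).ne'
  choose K hKA hK hKμ using hclosed
  have hsmall : ∀ᶠ R in 𝓝[>] (0 : ℝ), ∀ k l, k ≠ l →
      Disjoint (Metric.thickening R (K k)) (Metric.thickening R (K l)) := by
    refine eventually_all.2 fun k => eventually_all.2 fun l => ?_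
    by_cases hkl : k = l
    · exact Eventually.of_forall fun _ hne => absurd hkl hne
    obtain ⟨r, hr, hdisj⟩ :=
      ((hAd hkl).mono (hKA k) (hKA l)).exists_thickenings (hK k).isCompact (hK l)
    filter_upwards [Ioc_mem_nhdsGT hr] with R hR _
    exact hdisj.mono (Metric.thickening_mono hR.2 _) (Metric.thickening_mono hR.2 _)
  obtain ⟨R, hRd, hR, hRε⟩ := (hsmall.and (Ioc_mem_nhdsGT hε)).exists
  refine ⟨fun k => Metric.thickening R (K k), fun k => Metric.isOpen_thickening,
    fun k l hkl => hRd k l hkl,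
    fun k => (Metric.thickening_mono hRε _).trans (Metric.thickening_subset_of_subset _ (hKA k)),
    fun k => ENNReal.toReal_le_of_le_ofReal hη.le ?_⟩
  exact (measure_mono (sdiff_subset_sdiff_right (Metric.self_subset_thickening hR _))).trans
    (hKμ k).le

lemma exists_forall_mem_thickening (hε : 0 < ε) (hA : ⋃ k, A k = univ)
    (hU : Pairwise (Function.onFun Disjoint U)) (hUA : ∀ k, U k ⊆ Metric.thickening ε (A k)) :
    ∃ σ : X → κ, (∀ k, ∀ u ∈ U k, σ u = k) ∧ ∀ u, u ∈ Metric.thickening ε (A (σ u)) := by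
  have hσ : ∀ u, ∃ k, (∀ l, u ∈ U l → k = l) ∧ u ∈ Metric.thickening ε (A k) := fun u => by
    by_cases hu : ∃ k, u ∈ U k
    · obtain ⟨k, hk⟩ := hu
      exact ⟨k, fun l hl => by_contra fun hkl => disjoint_left.1 (hU hkl) hk hl, hUA k hk⟩
    · obtain ⟨k, hk⟩ := iUnion_eq_univ_iff.1 hA u
      exact ⟨k, fun l hl => absurd ⟨l, hl⟩ hu, Metric.self_subset_thickening hε _ hk⟩
  choose σ hσU hσA using hσ
  exact ⟨σ, fun k u hu => hσU u k hu, hσA⟩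

lemma dist_le_of_mem_thickening {s : Set X} (hs : Bornology.IsBounded s) (hd : Metric.diam s ≤ ε)
    {u v : X} (hu : u ∈ Metric.thickening ε s) (hv : v ∈ Metric.thickening ε s) :
    dist u v ≤ 3 * ε := by
  obtain ⟨y, hy, huy⟩ := Metric.mem_thickening_iff.1 hu
  obtain ⟨z, hz, hvz⟩ := Metric.mem_thickening_iff.1 hv
  have hyz := (Metric.dist_le_diam_of_mem hs hy hz).trans hd
  have htri := dist_triangle4 u y z v
  rw [dist_comm z v] at htri
  linarith

end Coding

section Cylinder

variable {X κ : Type*} {T : X → X} {A U : κ → Set X} {q : ℕ} {b : Fin q → κ}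

/-- The cylinder of points whose first `q` iterates visit the sets `A (b 0)`, `A (b 1)`, …;
the cylinders of a partition are the members of its iterated join. -/
def cylinderSet (T : X → X) (A : κ → Set X) (q : ℕ) (b : Fin q → κ) : Set X :=
  ⋂ j : Fin q, T^[j] ⁻¹' A (b j)

lemma mem_cylinderSet {u : X} : u ∈ cylinderSet T A q b ↔ ∀ j : Fin q, T^[j] u ∈ A (b j) := by
  simp [cylinderSet]

lemma isOpen_cylinderSet [TopologicalSpace X] (hT : Continuous T) (hU : ∀ k, IsOpen (U k)) :
    IsOpen (cylinderSet T U q b) :=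
  isOpen_iInter_of_finite fun _ => (hU _).preimage (hT.iterate _)

lemma itinerary_eq_of_mem_cylinderSet {σ : X → κ} (hσ : ∀ k, ∀ u ∈ U k, σ u = k) {u : X}
    (hu : u ∈ cylinderSet T U q b) : itinerary T σ q u = b :=
  funext fun j => hσ _ _ (mem_cylinderSet.1 hu j)

lemma measureReal_cylinderSet_le [MeasurableSpace X] {μ : Measure X} [IsFiniteMeasure μ]
    (hT : MeasurePreserving T μ μ) (hA : ∀ k, MeasurableSet (A k))
    (hU : ∀ k, MeasurableSet (U k)) {η : ℝ} (hη : ∀ k, μ.real (A k \ U k) ≤ η) :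
    μ.real (cylinderSet T A q b) ≤ μ.real (cylinderSet T U q b) + q * η := by
  have hsub : cylinderSet T A q b ⊆
      cylinderSet T U q b ∪ ⋃ j : Fin q, T^[j] ⁻¹' (A (b j) \ U (b j)) := fun u hu => by
    by_cases huU : u ∈ cylinderSet T U q b
    · exact Or.inl huU
    · obtain ⟨j, hj⟩ := not_forall.1 (mt mem_cylinderSet.2 huU)
      exact Or.inr (mem_iUnion.2 ⟨j, mem_cylinderSet.1 hu j, hj⟩)
  refine (measureReal_mono hsub).trans ((measureReal_union_le _ _).trans ?_)
  gcongr
  calc _ ≤ ∑ j : Fin q, μ.real (T^[j] ⁻¹' (A (b j) \ U (b j))) := measureReal_iUnion_fintype_le _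
    _ ≤ ∑ _j : Fin q, η := Finset.sum_le_sum fun j _ => by
        rw [(hT.iterate j).measureReal_preimage ((hA _).diff (hU _)).nullMeasurableSet]
        exact hη _
    _ = q * η := by simp

lemma sum_joinN_eq_sum_cylinderSet {P : Finset (Set X)}
    (hP : Pairwise (Function.onFun Disjoint ((↑) : P → Set X))) {f : Set X → ℝ} (hf : f ∅ = 0) :
    ∑ B ∈ joinN T P q, f B = ∑ b, f (cylinderSet T ((↑) : P → Set X) q b) := by
  classical
  have himage : joinN T P q =
      (Finset.univ : Finset (Fin q → P)).image (cylinderSet T ((↑) : P → Set X) q) := by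
    ext B
    rw [mem_joinN, Finset.mem_image]
    constructor
    · rintro ⟨g, hg, rfl⟩
      exact ⟨fun j => ⟨g j, hg j⟩, Finset.mem_univ _, rfl⟩
    · rintro ⟨b, -, rfl⟩
      exact ⟨fun j => b j, fun j => (b j).2, rfl⟩
  rw [himage, Finset.sum_image_of_pairwise_eq_zero]
  intro b _ c _ hbc heq
  obtain ⟨j, hj⟩ := Function.ne_iff.1 hbc
  have hempty : cylinderSet T ((↑) : P → Set X) q b = ∅ := eq_empty_of_forall_notMem fun u hu =>
    disjoint_left.1 (hP hj) (mem_cylinderSet.1 hu j) (mem_cylinderSet.1 (heq ▸ hu) j)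
  rw [hempty, hf]

end Cylinder

section EntropyLowerBound

lemma exists_pos_sum_mul_neg_log_le {B : Type*} [Fintype B] {m : B → ℝ} (hm : ∀ b, 0 ≤ m b)
    (hsum : ∑ b, m b = 1) :
    ∃ w : B → ℝ, (∀ b, 0 < w b) ∧ ∑ b, w b ≤ 1 ∧
      ∑ b, m b * -Real.log (w b) ≤ ∑ b, Real.negMulLog (m b) + Real.log 2 := by
  have hB : 0 < (Fintype.card B : ℝ) := by
    have : Nonempty B := not_isEmpty_iff.1 fun _ => by simp at hsum
    exact_mod_cast Fintype.card_pos
  have hinv := inv_pos.2 hB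
  refine ⟨fun b => (m b + (Fintype.card B : ℝ)⁻¹) / 2, fun b => by linarith [hm b], ?_, ?_⟩
  · rw [← Finset.sum_div, Finset.sum_add_distrib, hsum, Finset.sum_const, Finset.card_univ,
      nsmul_eq_mul, mul_inv_cancel₀ hB.ne']
    norm_num
  calc _ ≤ ∑ b, (Real.negMulLog (m b) + m b * Real.log 2) := Finset.sum_le_sum fun b _ => by
        rcases (hm b).eq_or_lt with hb | hb
        · simp [← hb]
        have hlog : Real.log (m b / 2) ≤ Real.log ((m b + (Fintype.card B : ℝ)⁻¹) / 2) :=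
          Real.log_le_log (half_pos hb) (by linarith)
        rw [Real.log_div hb.ne' two_ne_zero] at hlog
        have := mul_le_mul_of_nonneg_left hlog hb.le
        rw [Real.negMulLog]
        linarith
    _ = _ := by rw [Finset.sum_add_distrib, ← Finset.sum_mul, hsum, one_mul]

lemma apply_le_sub_sum_mul_indicator {X B : Type*} [Fintype B] {ν : X → B} {O : B → Set X}
    (hO : ∀ b, ∀ u ∈ O b, ν u = b) {f : B → ℝ} {G : ℝ} (hf : ∀ b, f b ≤ G) (u : X) :
    f (ν u) ≤ G - ∑ b, (G - f b) * (O b).indicator 1 u := by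
  classical
  have hsum : ∑ b, (G - f b) * (O b).indicator 1 u ≤ ∑ b, if b = ν u then G - f b else 0 :=
    Finset.sum_le_sum fun b _ => by
      by_cases hu : u ∈ O b
      · simp [hu, hO b u hu]
      · have := sub_nonneg.2 (hf b)
        simp only [hu, not_false_eq_true, indicator_of_notMem, mul_zero]
        split_ifs <;> simp [this]
  rw [Finset.sum_ite_eq' Finset.univ (ν u) fun b => G - f b, if_pos (Finset.mem_univ _)] at hsum
  linarith

lemma sum_measureReal_cylinderSet {X : Type*} [MeasurableSpace X] {μ : Measure X}
    [IsProbabilityMeasure μ] {T : X → X} (hT : Measurable T) {P : Finset (Set X)}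
    (hP : IsFinPartition P) (q : ℕ) :
    ∑ b, μ.real (cylinderSet T ((↑) : P → Set X) q b) = 1 := by
  rw [← sum_joinN_eq_sum_cylinderSet hP.pairwise_disjoint_coe measureReal_empty,
    (isFinPartition_joinN hT hP q).sum_measureReal]

variable {X S : Type*} [MeasurableSpace X] {ι : ℕ → Type*} [∀ n, Fintype (ι n)]
  [∀ n, Nonempty (ι n)] {T : X → X} {x : ∀ n, ι n → X} {V : Filter ℕ} [V.NeBot] {μ : Measure X}
  {q : ℕ} {h C : ℝ}

lemma IsOrbitLimit.mul_le_sub_sum [TopologicalSpace X] [Fintype S] {σ : X → S}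
    (hμ : IsOrbitLimit T x V μ) (hV : V ≤ atTop) (hC : 0 ≤ C)
    (hx : ∀ᶠ n in atTop, IsDispersed T (fun y z => σ y = σ z) n h C (x n)) (hq : 0 < q)
    {w : (Fin q → S) → ℝ} (hw : ∀ b, 0 < w b) (hsum : ∑ b, w b ≤ 1)
    {O : (Fin q → S) → Set X} (hO : ∀ b, IsOpen (O b)) (hOσ : ∀ b, ∀ u ∈ O b, itinerary T σ q u = b)
    {G : ℝ} (hG : ∀ b, -Real.log (w b) ≤ G) :
    q * h ≤ G - ∑ b, (G - -Real.log (w b)) * μ.real (O b) := by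
  have happrox : ∀ θ > 0, q * h ≤ G - ∑ b, (G - -Real.log (w b)) * (μ.real (O b) - θ) + θ := by
    intro θ hθ
    have hopen : ∀ᶠ n in V, ∀ b, μ.real (O b) - θ < orbitAverage T n (x n) ((O b).indicator 1) :=
      eventually_all.2 fun b => hμ (O b) (hO b) _ (sub_lt_self _ hθ)
    have hboundary : ∀ᶠ n : ℕ in V, 2 * (q : ℝ) ^ 2 * C / n ≤ θ :=
      ((tendsto_const_div_atTop_nhds_zero_nat _).eventually_le_const hθ).filter_mono hV
    obtain ⟨n, hn, hnθ, hnx, hqn⟩ := (hopen.and (hboundary.and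
      ((hx.and (eventually_ge_atTop q)).filter_mono hV))).exists
    have hblock := hnx.le_orbitAverage_neg_log_itinerary hC hw hsum hq hqn
    have hpoint : (fun u => -Real.log (w (itinerary T σ q u))) ≤
        (fun _ => G) - ∑ b, (G - -Real.log (w b)) • (O b).indicator 1 := fun u => by
      simpa using apply_le_sub_sum_mul_indicator hOσ hG u
    have hmean := orbitAverage_mono (T := T) (n := n) (x := x n) hpoint
    simp only [map_sub, map_sum, map_smul, smul_eq_mul,
      orbitAverage_const (hq.trans_le hqn).ne'] at hmean
    have hweights : ∑ b, (G - -Real.log (w b)) * (μ.real (O b) - θ) ≤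
        ∑ b, (G - -Real.log (w b)) * orbitAverage T n (x n) ((O b).indicator 1) :=
      Finset.sum_le_sum fun b _ =>
        mul_le_mul_of_nonneg_left (hn b).le (sub_nonneg.2 (hG b))
    linarith
  have hlim : Tendsto (fun θ => G - ∑ b, (G - -Real.log (w b)) * (μ.real (O b) - θ) + θ)
      (𝓝[>] 0) (𝓝 (G - ∑ b, (G - -Real.log (w b)) * μ.real (O b))) :=
    ((by fun_prop : Continuous _).tendsto' 0 _ (by simp)).mono_left nhdsWithin_le_nhds
  exact ge_of_tendsto hlim (eventually_nhdsWithin_of_forall happrox)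

variable [PseudoMetricSpace X] [CompactSpace X] [BorelSpace X] [IsProbabilityMeasure μ]
  {P : Finset (Set X)} {ε : ℝ}

lemma IsOrbitLimit.mul_le_sum_mul_neg_log (hμ : IsOrbitLimit T x V μ) (hV : V ≤ atTop)
    (hT : Continuous T) (hTμ : MeasurePreserving T μ μ) (hC : 0 ≤ C)
    (hx : ∀ᶠ n in atTop, IsDispersed T (fun y z => dist y z ≤ 3 * ε) n h C (x n))
    (hP : IsFinPartition P) (hε : 0 < ε) (hd : ∀ A ∈ P, Metric.diam A ≤ ε) (hq : 0 < q)
    {w : (Fin q → P) → ℝ} (hw : ∀ b, 0 < w b) (hsum : ∑ b, w b ≤ 1) :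
    q * h ≤ ∑ b, μ.real (cylinderSet T ((↑) : P → Set X) q b) * -Real.log (w b) := by
  set m := fun b => μ.real (cylinderSet T ((↑) : P → Set X) q b)
  have hA : ∀ A : P, MeasurableSet (A : Set X) := fun A => hP.1 A A.2
  have hlog : ∀ b, 0 ≤ -Real.log (w b) := fun b => neg_nonneg.2 <| Real.log_nonpos (hw b).le <|
    (Finset.single_le_sum (fun b _ => (hw b).le) (Finset.mem_univ b)).trans hsum
  set G := ∑ b, -Real.log (w b)
  have hG : ∀ b, -Real.log (w b) ≤ G := fun b =>
    Finset.single_le_sum (fun b _ => hlog b) (Finset.mem_univ b)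
  have happrox : ∀ η > 0, q * h ≤ G - ∑ b, (G - -Real.log (w b)) * (m b - q * η) := by
    intro η hη
    obtain ⟨U, hU, hUd, hUA, hUμ⟩ :=
      exists_pairwise_disjoint_isOpen μ hA hP.pairwise_disjoint_coe hε hη
    obtain ⟨σ, hσU, hσA⟩ := exists_forall_mem_thickening hε hP.iUnion_coe hUd hUA
    have hσ : ∀ y z, σ y = σ z → dist y z ≤ 3 * ε := fun y z hyz =>
      dist_le_of_mem_thickening (Metric.isBounded_of_compactSpace) (hd _ (σ y).2) (hσA y)
        (hyz ▸ hσA z)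
    refine (hμ.mul_le_sub_sum hV hC (hx.mono fun n hn => hn.mono hσ) hq hw hsum
      (fun b => isOpen_cylinderSet hT hU) (fun b u => itinerary_eq_of_mem_cylinderSet hσU)
      hG).trans ?_
    gcongr with b
    · exact sub_nonneg.2 (hG b)
    · exact sub_le_iff_le_add.2
        (measureReal_cylinderSet_le hTμ hA (fun A => (hU A).measurableSet) hUμ)
  have hlim : Tendsto (fun η => G - ∑ b, (G - -Real.log (w b)) * (m b - q * η)) (𝓝[>] 0)
      (𝓝 (∑ b, m b * -Real.log (w b))) := by
    refine ((by fun_prop : Continuous _).tendsto' 0 _ ?_).mono_left nhdsWithin_le_nhds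
    simp only [mul_zero, sub_zero, sub_mul, Finset.sum_sub_distrib, ← Finset.mul_sum,
      m, sum_measureReal_cylinderSet hT.measurable hP q, mul_one, sub_sub_cancel]
    exact Finset.sum_congr rfl fun b _ => mul_comm _ _
  exact ge_of_tendsto hlim (eventually_nhdsWithin_of_forall happrox)

lemma IsOrbitLimit.le_infEntRate (hμ : IsOrbitLimit T x V μ) (hV : V ≤ atTop)
    (hT : Continuous T) (hTμ : MeasurePreserving T μ μ) (hC : 0 ≤ C) (hε : 0 < ε)
    (hx : ∀ᶠ n in atTop, IsDispersed T (fun y z => dist y z ≤ 3 * ε) n h C (x n)) :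
    ENNReal.ofReal h ≤ infEntRate T μ ε := by
  refine le_iInf fun P => le_iInf fun hP => le_iInf fun hd => ?_
  have hentropy : ∀ q : ℕ, 0 < q →
      ENNReal.ofReal (h - Real.log 2 / q) ≤ entP μ (joinN T P q) / q := by
    intro q hq
    have hq' : (0 : ℝ) < q := by exact_mod_cast hq
    obtain ⟨w, hw, hsum, hle⟩ := exists_pos_sum_mul_neg_log_le
      (m := fun b => μ.real (cylinderSet T ((↑) : P → Set X) q b))
      (fun b => measureReal_nonneg) (sum_measureReal_cylinderSet hT.measurable hP q)
    have hqh := (hμ.mul_le_sum_mul_neg_log hV hT hTμ hC hx hP hε hd hq hw hsum).trans hle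
    rw [entP_eq, sum_joinN_eq_sum_cylinderSet hP.pairwise_disjoint_coe (by simp),
      ← ENNReal.ofReal_natCast, ← ENNReal.ofReal_div_of_pos hq']
    refine ENNReal.ofReal_le_ofReal ((le_div_iff₀ hq').2 ?_)
    rw [sub_mul, div_mul_cancel₀ _ hq'.ne']
    linarith
  have hlim : Tendsto (fun q : ℕ => ENNReal.ofReal (h - Real.log 2 / q)) atTop
      (𝓝 (ENNReal.ofReal h)) := by
    refine ENNReal.tendsto_ofReal ?_
    simpa using (tendsto_const_div_atTop_nhds_zero_nat (Real.log 2)).const_sub h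
  rw [← hlim.liminf_eq]
  exact liminf_le_liminf ((eventually_gt_atTop 0).mono hentropy)

end EntropyLowerBound

section VariationalPrinciple

variable {X : Type*} {T : X → X} {α : Finset (Set X)}

lemma Dcover_eq_zero [TopologicalSpace X] [IsEmpty X] (hα : IsFinOpenCover α) :
    Dcover α = 0 :=
  Nat.le_zero.1 (Dcover_le hα (fun B hB => ⟨B, hB, Subset.rfl⟩) fun x => isEmptyElim x)

lemma mdimTop_eq_zero [TopologicalSpace X] [IsEmpty X] (hT : Continuous T) : mdimTop T = 0 := by
  simp only [mdimTop, ENNReal.iSup_eq_zero]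
  intro α hα
  simp [Dcover_eq_zero (isFinOpenCover_joinN hT hα _)]

lemma exists_eventually_mul_le_Dcover [TopologicalSpace X] {a : ℝ≥0} (ha : a < mdimTop T) :
    ∃ α, IsFinOpenCover α ∧ ∀ᶠ n : ℕ in atTop, (a : ℝ) * n ≤ Dcover (joinN T α n) := by
  simp only [mdimTop, lt_iSup_iff] at ha
  obtain ⟨α, hα, ha⟩ := ha
  refine ⟨α, hα, ?_⟩
  filter_upwards [eventually_lt_of_lt_liminf ha, eventually_gt_atTop 0] with n hn hn0
  exact_mod_cast (ENNReal.le_div_iff_mul_le (Or.inl (by exact_mod_cast hn0.ne'))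
    (Or.inl (ENNReal.natCast_ne_top _))).1 hn.le

lemma exists_eventually_le_infEntRate [PseudoMetricSpace X] [T2Space X] [CompactSpace X]
    [Nonempty X] [MeasurableSpace X] [BorelSpace X] (hT : Continuous T) (hα : IsFinOpenCover α)
    {a : ℝ} (ha : ∀ᶠ n : ℕ in atTop, a * n ≤ Dcover (joinN T α n)) :
    ∃ μ : Measure X, IsProbabilityMeasure μ ∧ MeasurePreserving T μ μ ∧ ∃ K : ℝ,
      ∀ᶠ ε in 𝓝[>] (0 : ℝ), ENNReal.ofReal (a * Real.log (1 / ε) - K) ≤ infEntRate T μ ε := by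
  obtain ⟨lam, hlam, N, x, hx⟩ := exists_isDispersed hT hα
  obtain ⟨μ, V, hμ, hTμ, hVne, hV, hlim⟩ := exists_isOrbitLimit hT x
  refine ⟨μ, hμ, hTμ, a * Real.log (lam * 3) + #α * Real.log 2, ?_⟩
  filter_upwards [Ioc_mem_nhdsGT (show 0 < 1 / (lam * 3) by positivity)] with ε hε
  have hε0 := hε.1
  have hle : lam * (3 * ε) ≤ 1 := by
    rw [← mul_assoc, mul_comm]
    exact (le_div_iff₀ (by positivity)).1 hε.2
  have hlog : Real.log (1 / (lam * (3 * ε))) = Real.log (1 / ε) - Real.log (lam * 3) := by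
    rw [← mul_assoc, one_div, one_div, Real.log_inv, Real.log_inv,
      Real.log_mul (by positivity) hε0.ne']
    ring
  have hC : 0 ≤ #α * Real.log (1 / (lam * (3 * ε))) :=
    mul_nonneg (Nat.cast_nonneg _) (Real.log_nonneg ((one_le_div (by positivity)).2 hle))
  refine (ENNReal.ofReal_le_ofReal ?_).trans
    (hlim.le_infEntRate hV hT hTμ hC hε0 (hx (3 * ε) (by positivity) hle a ha))
  rw [hlog]
  linarith

lemma le_dimFLower_of_eventually_ofReal_le [MeasurableSpace X] {F : Measure X → ℝ → ℝ≥0∞}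
    {μ : Measure X} {a : ℝ≥0} {K : ℝ}
    (h : ∀ᶠ ε in 𝓝[>] (0 : ℝ), ENNReal.ofReal (a * Real.log (1 / ε) - K) ≤ F μ ε) :
    a ≤ dimFLower F μ := by
  have hlim : Tendsto (fun ε : ℝ => ENNReal.ofReal (a - K / Real.log (1 / ε))) (𝓝[>] 0) (𝓝 a) := by
    rw [← ENNReal.ofReal_coe_nnreal]
    refine ENNReal.tendsto_ofReal ?_
    simpa using (tendsto_log_one_div_nhdsGT_zero.const_div_atTop K).const_sub (a : ℝ)
  rw [← hlim.liminf_eq]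
  refine liminf_le_liminf ?_
  filter_upwards [h, tendsto_log_one_div_nhdsGT_zero.eventually_gt_atTop 0] with ε hε hlog
  calc _ = ENNReal.ofReal (a * Real.log (1 / ε) - K) / ENNReal.ofReal (Real.log (1 / ε)) := by
        rw [← ENNReal.ofReal_div_of_pos hlog, sub_div, mul_div_cancel_right₀ _ hlog.ne']
    _ ≤ _ := ENNReal.div_le_div_right hε _

lemma mdimTop_le_iSup_dimFLower [MetricSpace X] [CompactSpace X] [MeasurableSpace X]
    [BorelSpace X] (hT : Continuous T) :
    mdimTop T ≤ ⨆ (μ : Measure X) (_ : IsProbabilityMeasure μ) (_ : MeasurePreserving T μ μ),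
      dimFLower (infEntRate T) μ := by
  rcases isEmpty_or_nonempty X with hX | hX
  · simp [mdimTop_eq_zero hT]
  refine ENNReal.le_of_forall_nnreal_lt fun a ha => ?_
  obtain ⟨α, hα, hDcover⟩ := exists_eventually_mul_le_Dcover ha
  obtain ⟨μ, hμ, hTμ, K, hK⟩ := exists_eventually_le_infEntRate hT hα hDcover
  exact le_iSup₂_of_le μ hμ (le_iSup_of_le hTμ (le_dimFLower_of_eventually_ofReal_le hK))

lemma iSup_dimFLower_le_iSup_dimFUpper [MeasurableSpace X] (T : X → X)
    (F : Measure X → ℝ → ℝ≥0∞) :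
    ⨆ (μ : Measure X) (_ : IsProbabilityMeasure μ) (_ : MeasurePreserving T μ μ), dimFLower F μ ≤
      ⨆ (μ : Measure X) (_ : IsProbabilityMeasure μ) (_ : MeasurePreserving T μ μ),
        dimFUpper F μ :=
  iSup_mono fun _ => iSup_mono fun _ => iSup_mono fun _ => liminf_le_limsup

lemma exists_metricSpace_iSup_dimFUpper_le_mdimTop [tX : TopologicalSpace X] [CompactSpace X]
    [TopologicalSpace.MetrizableSpace X] [MeasurableSpace X] [BorelSpace X] {T : X ≃ₜ X}
    (hmk : MarkerProperty T) :
    ∃ m : MetricSpace X, m.toPseudoMetricSpace.toUniformSpace.toTopologicalSpace = tX ∧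
      ⨆ (μ : Measure X) (_ : IsProbabilityMeasure μ) (_ : MeasurePreserving T μ μ),
        dimFUpper (@infEntRate X m.toPseudoMetricSpace _ T) μ ≤ mdimTop T := by
  by_cases hmd : mdimTop T = ⊤
  · exact ⟨TopologicalSpace.metrizableSpaceMetric X, rfl, hmd ▸ le_top⟩
  obtain ⟨m, hm, hle⟩ := exists_metricSpace_dimFUpper_le_mdimTop hmk hmd
  exact ⟨m, hm, iSup_le fun μ => iSup_le fun hμ => iSup_le fun _ => hle μ hμ⟩

end VariationalPrinciple

end MMD

/-- Theorem 1.2 (first part): double variational principle for the mean dimension in terms of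
Rényi information dimensions, under the marker property.  The mean dimension is the minimum
(attained) over all compatible metrics of the supremum over invariant measures of the lower
(resp. upper) Rényi information dimension. -/
theorem stmt12 {X : Type*} [tX : TopologicalSpace X] [CompactSpace X]
    [TopologicalSpace.MetrizableSpace X] [MeasurableSpace X] [BorelSpace X]
    (T : X ≃ₜ X) (hmk : MarkerProperty T) :
    IsLeast {v : ℝ≥0∞ | ∃ m : MetricSpace X,
        m.toPseudoMetricSpace.toUniformSpace.toTopologicalSpace = tX ∧
        v = ⨆ (μ : Measure X) (_ : IsProbabilityMeasure μ) (_ : MeasurePreserving (⇑T) μ μ),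
          Filter.liminf (fun ε : ℝ =>
            @infEntRate X m.toPseudoMetricSpace _ (⇑T) μ ε / ENNReal.ofReal (Real.log (1 / ε)))
            (nhdsWithin 0 (Set.Ioi 0))}
      (mdimTop (⇑T)) ∧
    IsLeast {v : ℝ≥0∞ | ∃ m : MetricSpace X,
        m.toPseudoMetricSpace.toUniformSpace.toTopologicalSpace = tX ∧
        v = ⨆ (μ : Measure X) (_ : IsProbabilityMeasure μ) (_ : MeasurePreserving (⇑T) μ μ),
          Filter.limsup (fun ε : ℝ =>
            @infEntRate X m.toPseudoMetricSpace _ (⇑T) μ ε / ENNReal.ofReal (Real.log (1 / ε)))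
            (nhdsWithin 0 (Set.Ioi 0))}
      (mdimTop (⇑T)) := by
  have hlower : ∀ m : MetricSpace X,
      m.toPseudoMetricSpace.toUniformSpace.toTopologicalSpace = tX → mdimTop T ≤
        ⨆ (μ : Measure X) (_ : IsProbabilityMeasure μ) (_ : MeasurePreserving T μ μ),
          dimFLower (@infEntRate X m.toPseudoMetricSpace _ T) μ := by
    rintro m rfl
    exact mdimTop_le_iSup_dimFLower T.continuous
  obtain ⟨m, hm, hupper⟩ := exists_metricSpace_iSup_dimFUpper_le_mdimTop hmk
  have hle := fun m : MetricSpace X =>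
    iSup_dimFLower_le_iSup_dimFUpper T (@infEntRate X m.toPseudoMetricSpace _ T)
  refine ⟨⟨⟨m, hm, (hlower m hm).antisymm ((hle m).trans hupper)⟩, ?_⟩,
    ⟨m, hm, ((hlower m hm).trans (hle m)).antisymm hupper⟩, ?_⟩
  · rintro v ⟨m', hm', rfl⟩
    exact hlower m' hm'
  · rintro v ⟨m', hm', rfl⟩
    exact (hlower m' hm').trans (hle m')
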